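/- arXiv:1205.5993 — 2 statements merged into one kernel-verified Lean document; each statement's English description precedes it below -/
import Mathlib

section
/- Let (X,‖·‖_X) be a Banach space with Rademacher cotype q < ∞ and Rademacher type p > 1. Then there exist κ, C ∈ (0,∞) (depending only on X) such that for every n ∈ ℕ there is an even integer m ≤ κ n^{1/q} with the property that every f : ℤ_m^n → X satisfies Σ_{j=1}^n Σ_{x∈ℤ_m^n} ‖f(x + (m/2)e_j) − f(x)‖_X^q ≤ (Cm)^q 3^{−n} Σ_{ε∈{−1,0,1}^n} Σ_{x∈ℤ_m^n} ‖f(x+ε) − f(x)‖_X^q, where e_1,…,e_n is the standard basis of the discrete torus ℤ_m^n and addition is modulo m. -/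
open scoped BigOperators

/-- A Banach space `X` has Rademacher type `p` if there is `T < ∞` such that for every `n` and
every `x₁,…,xₙ ∈ X`, `𝔼_ε ‖∑ᵢ εᵢ xᵢ‖ ≤ T (∑ᵢ ‖xᵢ‖^p)^{1/p}`. -/
def RademacherType (X : Type*) [NormedAddCommGroup X] [NormedSpace ℝ X] (p : ℝ) : Prop :=
  ∃ T : ℝ, 0 < T ∧ ∀ (n : ℕ) (x : Fin n → X),
    ((2 : ℝ) ^ n)⁻¹ * ∑ ε : Fin n → Bool, ‖∑ i : Fin n, (if ε i then (1 : ℝ) else -1) • x i‖ ≤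
      T * (∑ i : Fin n, ‖x i‖ ^ p) ^ (1 / p)

/-- A Banach space `X` has Rademacher cotype `q` if there is `C > 0` such that for every `n` and
every `x₁,…,xₙ ∈ X`, `(∑ᵢ ‖xᵢ‖^q)^{1/q} ≤ C 𝔼_ε ‖∑ᵢ εᵢ xᵢ‖`. -/
def RademacherCotype (X : Type*) [NormedAddCommGroup X] [NormedSpace ℝ X] (q : ℝ) : Prop :=
  ∃ C : ℝ, 0 < C ∧ ∀ (n : ℕ) (x : Fin n → X),
    (∑ i : Fin n, ‖x i‖ ^ q) ^ (1 / q) ≤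
      C * (((2 : ℝ) ^ n)⁻¹ *
        ∑ ε : Fin n → Bool, ‖∑ i : Fin n, (if ε i then (1 : ℝ) else -1) • x i‖)


open MeasureTheory

lemma mc_laplace (z : ℂ) (hz : 0 < z.re) :
    IntegrableOn (fun s : ℝ => (s : ℂ) ^ 2 * Complex.exp (-z * s)) (Set.Ioi 0) ∧
    ∫ s in Set.Ioi (0:ℝ), (s : ℂ) ^ 2 * Complex.exp (-z * s) = 2 / z ^ 3 := by
  have hz0 : z ≠ 0 := by rintro rfl; simp at hz
  have hint : IntegrableOn (fun s : ℝ => (s : ℂ) ^ 2 * Complex.exp (-z * s)) (Set.Ioi 0) := by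
    have h := integrableOn_rpow_mul_exp_neg_mul_rpow (p := 1) (s := 2) (b := z.re)
      (by norm_num) (by norm_num) hz
    refine Integrable.mono h ?_ ?_
    · exact (by fun_prop : Continuous fun s : ℝ => (s : ℂ) ^ 2 * Complex.exp (-z * s)).aestronglyMeasurable
    · refine Filter.Eventually.of_forall fun s => ?_
      simp only [norm_mul, norm_pow, Complex.norm_real, Complex.norm_exp, Real.norm_eq_abs]
      simp
  refine ⟨hint, ?_⟩
  have hT : ∀ k : ℕ, Filter.Tendsto (fun s : ℝ => (s : ℂ) ^ k * Complex.exp (-z * s)) Filter.atTop (nhds 0) := by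
    intro k
    rw [tendsto_zero_iff_norm_tendsto_zero]
    have := tendsto_rpow_mul_exp_neg_mul_atTop_nhds_zero (k : ℝ) z.re hz
    refine this.congr' ?_
    filter_upwards [Filter.eventually_ge_atTop (0:ℝ)] with s hs
    simp [Complex.norm_exp, abs_of_nonneg hs]
  have := integral_Ioi_of_hasDerivAt_of_tendsto' (a := 0) (m := 0)
    (f := fun s : ℝ => -(1 / z * ((s : ℂ) ^ 2 * Complex.exp (-z * s)) + 2 / z ^ 2 * ((s : ℂ) ^ 1 * Complex.exp (-z * s))
      + 2 / z ^ 3 * ((s : ℂ) ^ 0 * Complex.exp (-z * s))))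
    (f' := fun s : ℝ => (s : ℂ) ^ 2 * Complex.exp (-z * s)) ?_ hint ?_
  · rw [this]; simp
  · intro s _
    have h1 : HasDerivAt (fun s : ℝ => (s : ℂ)) 1 s := Complex.ofRealCLM.hasDerivAt
    have h2 : HasDerivAt (fun s : ℝ => Complex.exp (-z * s)) (Complex.exp (-z * s) * (-z * 1)) s :=
      (h1.const_mul (-z)).cexp
    have h3 := ((((h1.pow 2).mul h2).const_mul (1/z)).add (((h1.pow 1).mul h2).const_mul (2/z^2))).add
      (((h1.pow 0).mul h2).const_mul (2/z^3))
    refine h3.neg.congr_deriv ?_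
    simp
    field_simp
    ring
  · have := (((hT 2).const_mul (1/z)).add ((hT 1).const_mul (2/z^2))).add ((hT 0).const_mul (2/z^3))
    simpa using this.neg

lemma mc_norm_sq_le (y : ℝ) (hy : 1 ≤ y) (w : ℝ) :
    1 + w ^ 2 ≤ ‖(y : ℂ) + (2 * Real.pi * w : ℝ) * Complex.I‖ ^ 2 := by
  rw [← Complex.normSq_eq_norm_sq, Complex.normSq_add_mul_I]
  have : (1:ℝ) ≤ 2 * Real.pi := by linarith [Real.pi_gt_three]
  have h2 : w ^ 2 ≤ (2 * Real.pi * w) ^ 2 := by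
    have h3 : (1:ℝ) ≤ (2 * Real.pi) ^ 2 := one_le_pow₀ this
    rw [mul_pow]; nlinarith [sq_nonneg w]
  nlinarith

lemma mc_inv_norm_le (y : ℝ) (hy : 1 ≤ y) (w : ℝ) :
    ‖2 / ((y : ℂ) + (2 * Real.pi * w : ℝ) * Complex.I) ^ 3‖ ≤ 2 * (1 + w ^ 2)⁻¹ := by
  have h := mc_norm_sq_le y hy w
  set a := ‖(y : ℂ) + (2 * Real.pi * w : ℝ) * Complex.I‖
  have ha : 1 ≤ a := by
    have h0 : 0 ≤ a := norm_nonneg _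
    nlinarith [sq_nonneg w]
  rw [norm_div, norm_pow]
  simp only [Complex.norm_ofNat]
  rw [div_eq_mul_inv]
  gcongr
  calc 1 + w ^ 2 ≤ a ^ 2 := h
    _ ≤ a ^ 3 := pow_le_pow_right₀ ha (by norm_num)

lemma mc_inv_cont (y : ℝ) (hy : 1 ≤ y) :
    Continuous fun w : ℝ => 1 / ((y : ℂ) + (2 * Real.pi * w : ℝ) * Complex.I) := by
  refine Continuous.div (by fun_prop) (by fun_prop) fun w h => ?_
  have := mc_norm_sq_le y hy w
  rw [h] at this; simp at this; nlinarith [sq_nonneg w]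

lemma mc_inversion (y : ℝ) (hy : 1 ≤ y) :
    Integrable (fun w : ℝ => Complex.exp ((2 * Real.pi * w : ℝ) * Complex.I) *
      (2 * (1 / ((y : ℂ) + (2 * Real.pi * w : ℝ) * Complex.I)) ^ 3)) ∧
    ∫ w : ℝ, Complex.exp ((2 * Real.pi * w : ℝ) * Complex.I) *
      (2 * (1 / ((y : ℂ) + (2 * Real.pi * w : ℝ) * Complex.I)) ^ 3) = Complex.exp (-y) := by
  have e3 : ∀ w : ℝ, (2:ℂ) * (1 / ((y : ℂ) + (2 * Real.pi * w : ℝ) * Complex.I)) ^ 3 =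
      2 / ((y : ℂ) + (2 * Real.pi * w : ℝ) * Complex.I) ^ 3 := by
    intro w; rw [div_pow, one_pow, mul_one_div]
  have hFint : Integrable (fun w : ℝ => (2:ℂ) / ((y : ℂ) + (2 * Real.pi * w : ℝ) * Complex.I) ^ 3) := by
    refine Integrable.mono' (integrable_inv_one_add_sq.const_mul 2) ?_
      (Filter.Eventually.of_forall fun w => mc_inv_norm_le y hy w)
    simp_rw [← e3]
    exact (((mc_inv_cont y hy).pow 3).const_mul 2).aestronglyMeasurable
  simp_rw [e3]
  constructor
  · refine (hFint.bdd_mul (c := 1) (f := fun w : ℝ => Complex.exp ((2 * Real.pi * w : ℝ) * Complex.I)) ?_ ?_)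
    · exact (by fun_prop : Continuous _).aestronglyMeasurable
    · exact Filter.Eventually.of_forall fun w => by rw [Complex.norm_exp_ofReal_mul_I]
  · let f : ℝ → ℂ := Set.indicator (Set.Ioi 0) fun s : ℝ => (s : ℂ) ^ 2 * Complex.exp (-(y:ℂ) * s)
    have hf : Integrable f := by
      rw [integrable_indicator_iff measurableSet_Ioi]
      exact (mc_laplace y (by simp; linarith)).1
    have hF : FourierTransform.fourier f = fun w : ℝ => (2:ℂ) / ((y : ℂ) + (2 * Real.pi * w : ℝ) * Complex.I) ^ 3 := by
      funext w
      rw [Real.fourier_eq']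
      rw [← (mc_laplace ((y : ℂ) + (2 * Real.pi * w : ℝ) * Complex.I) (by simp; linarith)).2,
        ← integral_indicator measurableSet_Ioi]
      congr 1
      funext s
      by_cases hs : s ∈ Set.Ioi (0:ℝ)
      · simp only [f, Set.indicator_of_mem hs, smul_eq_mul]
        rw [mul_left_comm, ← Complex.exp_add]
        congr 2
        simp
        ring
      · simp only [f, Set.indicator_of_notMem hs, smul_zero]
    have := hf.fourierInv_fourier_eq (by rw [hF]; exact hFint) (v := (1:ℝ)) ?_
    · rw [hF, Real.fourierInv_eq'] at this
      have h1 : f 1 = Complex.exp (-y) := by simp [f]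
      rw [← h1, ← this]
      congr 1
      funext w
      simp
    · have : ∀ᶠ s : ℝ in nhds 1, f s = (s : ℂ) ^ 2 * Complex.exp (-(y:ℂ) * s) := by
        filter_upwards [lt_mem_nhds (zero_lt_one' ℝ)] with s hs
        simp [f, Set.indicator_of_mem (show s ∈ Set.Ioi (0:ℝ) from hs)]
      refine ContinuousAt.congr ?_ (this.mono fun s h => h.symm)
      fun_prop

open MeasureTheory

set_option linter.unusedSectionVars false

section mcKato
variable {S : Type*} [Fintype S] {B : Type*} [NormedRing B] [NormedAlgebra ℝ B]

/-- complexified functional calculus -/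
noncomputable def mcL (Φ : (S → ℝ) →ₐ[ℝ] B) : (S → ℂ) →ₗ[ℝ] B × B where
  toFun F := (Φ fun s => (F s).re, Φ fun s => (F s).im)
  map_add' F G := by
    simp only [Prod.mk_add_mk, ← map_add]; rfl
  map_smul' c F := by
    simp only [Prod.smul_mk, ← map_smul, RingHom.id_apply, Pi.smul_apply, Complex.smul_re, Complex.smul_im]
    rfl

lemma mcL_mul (Φ : (S → ℝ) →ₐ[ℝ] B) (F G : S → ℂ) :
    ‖mcL Φ (fun s => F s * G s)‖ ≤ 2 * ‖mcL Φ F‖ * ‖mcL Φ G‖ := by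
  set a := ‖mcL Φ F‖
  set b := ‖mcL Φ G‖
  have h1 : ‖Φ fun s => (F s).re‖ ≤ a := norm_fst_le (mcL Φ F)
  have h2 : ‖Φ fun s => (F s).im‖ ≤ a := norm_snd_le (mcL Φ F)
  have h3 : ‖Φ fun s => (G s).re‖ ≤ b := norm_fst_le (mcL Φ G)
  have h4 : ‖Φ fun s => (G s).im‖ ≤ b := norm_snd_le (mcL Φ G)
  have ha : 0 ≤ a := norm_nonneg _
  have key : ∀ f g f' g' : S → ℝ, ‖Φ f‖ ≤ a → ‖Φ g‖ ≤ b → ‖Φ f'‖ ≤ a → ‖Φ g'‖ ≤ b →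
      ‖Φ (f * g)‖ + ‖Φ (f' * g')‖ ≤ 2 * a * b := by
    intro f g f' g' q1 q2 q3 q4
    rw [map_mul, map_mul]
    have := (norm_mul_le (Φ f) (Φ g)).trans (mul_le_mul q1 q2 (norm_nonneg _) ha)
    have := (norm_mul_le (Φ f') (Φ g')).trans (mul_le_mul q3 q4 (norm_nonneg _) ha)
    linarith
  rw [Prod.norm_def]
  refine max_le ?_ ?_
  · have e : (mcL Φ (fun s => F s * G s)).1 =
        Φ ((fun s => (F s).re) * fun s => (G s).re) - Φ ((fun s => (F s).im) * fun s => (G s).im) := by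
      rw [← map_sub]; simp only [mcL]; congr 1; 
    rw [e]
    exact (norm_sub_le _ _).trans (key _ _ _ _ h1 h3 h2 h4)
  · have e : (mcL Φ (fun s => F s * G s)).2 =
        Φ ((fun s => (F s).re) * fun s => (G s).im) + Φ ((fun s => (F s).im) * fun s => (G s).re) := by
      rw [← map_add]; simp only [mcL]; congr 1
    rw [e]
    exact (norm_add_le _ _).trans (key _ _ _ _ h1 h4 h2 h3)

lemma mcL_smul (Φ : (S → ℝ) →ₐ[ℝ] B) (c : ℂ) (F : S → ℂ) :
    ‖mcL Φ (fun s => c * F s)‖ ≤ 2 * ‖c‖ * ‖mcL Φ F‖ := by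
  set a := ‖mcL Φ F‖
  have h1 : ‖Φ fun s => (F s).re‖ ≤ a := norm_fst_le (mcL Φ F)
  have h2 : ‖Φ fun s => (F s).im‖ ≤ a := norm_snd_le (mcL Φ F)
  have ha : 0 ≤ a := norm_nonneg _
  have c1 := Complex.abs_re_le_norm c
  have c2 := Complex.abs_im_le_norm c
  have key : ∀ (r r' : ℝ) (f g : S → ℝ), |r| ≤ ‖c‖ → |r'| ≤ ‖c‖ → ‖Φ f‖ ≤ a → ‖Φ g‖ ≤ a →
      ‖Φ (r • f)‖ + ‖Φ (r' • g)‖ ≤ 2 * ‖c‖ * a := by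
    intro r r' f g q1 q2 q3 q4
    rw [map_smul, map_smul, norm_smul, norm_smul, Real.norm_eq_abs, Real.norm_eq_abs]
    have := mul_le_mul q1 q3 (norm_nonneg _) (norm_nonneg c)
    have := mul_le_mul q2 q4 (norm_nonneg _) (norm_nonneg c)
    linarith
  rw [Prod.norm_def]
  refine max_le ?_ ?_
  · have e : (mcL Φ (fun s => c * F s)).1 =
        Φ (c.re • (fun s => (F s).re)) - Φ (c.im • (fun s => (F s).im)) := by
      rw [← map_sub]; simp only [mcL]; congr 1
    rw [e]
    exact (norm_sub_le _ _).trans (key _ _ _ _ c1 c2 h1 h2)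
  · have e : (mcL Φ (fun s => c * F s)).2 =
        Φ (c.re • (fun s => (F s).im)) + Φ (c.im • (fun s => (F s).re)) := by
      rw [← map_add]; simp only [mcL]; congr 1
    rw [e]
    exact (norm_add_le _ _).trans (key _ _ _ _ c1 c2 h2 h1)

lemma mcL_real (Φ : (S → ℝ) →ₐ[ℝ] B) (g : S → ℝ) :
    ‖mcL Φ (fun s => (g s : ℂ))‖ = ‖Φ g‖ := by
  have : mcL Φ (fun s => (g s : ℂ)) = (Φ g, 0) := by
    simp only [mcL]
    have h0 : (fun s : S => (0:ℝ)) = 0 := rfl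
    simp [h0]
  rw [this]; simp

lemma mcL_add (Φ : (S → ℝ) →ₐ[ℝ] B) (F G : S → ℂ) :
    ‖mcL Φ (fun s => F s + G s)‖ ≤ ‖mcL Φ F‖ + ‖mcL Φ G‖ := by
  have : (fun s => F s + G s) = F + G := rfl
  rw [this, map_add]; exact norm_add_le _ _

lemma mcL_sub (Φ : (S → ℝ) →ₐ[ℝ] B) (F G : S → ℂ) :
    ‖mcL Φ (fun s => F s - G s)‖ ≤ ‖mcL Φ F‖ + ‖mcL Φ G‖ := by
  have : (fun s => F s - G s) = F - G := rfl
  rw [this, map_sub]; exact norm_sub_le _ _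

variable [CompleteSpace B]

lemma mcL_integral (Φ : (S → ℝ) →ₐ[ℝ] B) (φ : ℝ → S → ℂ) (μ : Measure ℝ) (hφ : ∀ s, Integrable (fun w => φ w s) μ)
    (g : ℝ → ℝ) (hg : Integrable g μ) (hb : ∀ w, ‖mcL Φ (φ w)‖ ≤ g w) :
    ‖mcL Φ (fun s => ∫ w, φ w s ∂μ)‖ ≤ ∫ w, g w ∂μ := by
  have h1 : (fun s => ∫ w, φ w s ∂μ) = ∫ w, φ w ∂μ := by
    funext s; rw [eval_integral hφ]
  have hint : Integrable φ μ := Integrable.of_eval hφ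
  have h2 := (LinearMap.toContinuousLinearMap (mcL Φ)).integral_comp_comm hint
  rw [h1]
  simp only [LinearMap.coe_toContinuousLinearMap'] at h2
  rw [← h2]
  exact norm_integral_le_of_norm_le hg (Filter.Eventually.of_forall hb)

/-- the basic constants -/
noncomputable def mcC0 (n : ℕ) (ρ : ℝ) : ℝ := (n * 2 ^ (n - 1)) / (2 ^ n - ρ)

lemma mc_inv (Φ : (S → ℝ) →ₐ[ℝ] B) (x : S → ℝ) (hx : ∀ s, 0 ≤ x s) (n : ℕ) (hn : 0 < n) (ρ : ℝ) (hρ : ρ < 2 ^ n)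
    (h1 : ∀ t : ℝ, 0 ≤ t → ‖Φ fun s => Real.exp (-(t * x s))‖ ≤ 1)
    (h2 : ∀ t : ℝ, 0 ≤ t → ‖Φ fun s => (1 - Real.exp (-(t * x s))) ^ n‖ ≤ ρ) (t : ℝ) (ht : 0 ≤ t) :
    ‖Φ fun s => 1 / (1 + Real.exp (-(t * x s)))‖ ≤ mcC0 n ρ := by
  set v : S → ℝ := fun s => Real.exp (-(t * x s)) with hv
  have hv1 : ‖Φ v‖ ≤ 1 := h1 t ht
  have hone : ‖Φ 1‖ ≤ 1 := by
    have := h1 0 le_rfl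
    simp only [zero_mul, neg_zero, Real.exp_zero] at this
    exact this
  have hvpos : ∀ s, 0 < v s := fun s => Real.exp_pos _
  have hvle : ∀ s, v s ≤ 1 := fun s => by
    rw [hv]; simp only [Real.exp_le_one_iff]; have := mul_nonneg ht (hx s); linarith
  set u : S → ℝ := (1 - v) ^ n with hu
  have hu2 : ‖Φ u‖ ≤ ρ := h2 t ht
  have hsub : ‖Φ (1 - v)‖ ≤ 2 := by
    rw [map_sub]; exact (norm_sub_le _ _).trans (by linarith)
  have hpow : ∀ i : ℕ, ‖Φ ((1 - v) ^ i)‖ ≤ 2 ^ i := by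
    intro i
    induction i with
    | zero => simpa using hone
    | succ i ih =>
      rw [pow_succ, map_mul, pow_succ]
      exact (norm_mul_le _ _).trans (mul_le_mul ih hsub (norm_nonneg _) (by positivity))
  have hult : ∀ s, u s < 2 ^ n := by
    intro s
    have : u s ≤ 1 := pow_le_one₀ (by simp [hvle s]) (by simp [(hvpos s).le])
    exact this.trans_lt (one_lt_pow₀ (by norm_num) hn.ne')
  set g : S → ℝ := fun s => 1 / (2 ^ n - u s) with hg
  have hgeq : (2:ℝ) ^ n • g = 1 + u * g := by
    funext s
    have : 2 ^ n - u s ≠ 0 := by linarith [hult s]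
    simp [hg]; field_simp; ring
  have hgn : ‖Φ g‖ ≤ 1 / (2 ^ n - ρ) := by
    have h3 : ‖Φ ((2:ℝ) ^ n • g)‖ = 2 ^ n * ‖Φ g‖ := by
      rw [map_smul, norm_smul]; simp
    have h4 : ‖Φ (1 + u * g)‖ ≤ 1 + ρ * ‖Φ g‖ := by
      rw [map_add, map_mul]
      exact (norm_add_le _ _).trans (add_le_add hone
        ((norm_mul_le _ _).trans (mul_le_mul_of_nonneg_right hu2 (norm_nonneg _))))
    rw [← hgeq, h3] at h4
    rw [le_div_iff₀ (by linarith)]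
    nlinarith
  set Q : S → ℝ := ∑ i ∈ Finset.range n, ((2:ℝ) ^ (n - 1 - i)) • (1 - v) ^ i with hQ
  have hQn : ‖Φ Q‖ ≤ n * 2 ^ (n - 1) := by
    rw [hQ, map_sum]
    refine (norm_sum_le _ _).trans ?_
    have : ∀ i ∈ Finset.range n, ‖Φ (((2:ℝ) ^ (n - 1 - i)) • (1 - v) ^ i)‖ ≤ 2 ^ (n - 1) := by
      intro i hi
      rw [map_smul, norm_smul]
      have hi' := Finset.mem_range.1 hi
      calc ‖(2:ℝ) ^ (n - 1 - i)‖ * ‖Φ ((1 - v) ^ i)‖ ≤ 2 ^ (n - 1 - i) * 2 ^ i := by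
            gcongr
            · simp
            · exact hpow i
        _ = 2 ^ (n - 1) := by rw [← pow_add]; congr 1; omega
    refine (Finset.sum_le_sum this).trans ?_
    simp
  have hfin : (fun s => 1 / (1 + Real.exp (-(t * x s)))) = Q * g := by
    funext s
    have h5 : 2 ^ n - u s ≠ 0 := by linarith [hult s]
    have h6 : 1 + v s ≠ 0 := by linarith [hvpos s]
    have h7 := geom_sum₂_mul (1 - v s) (2:ℝ) n
    have h8 : Q s = ∑ i ∈ Finset.range n, (1 - v s) ^ i * 2 ^ (n - 1 - i) := by
      rw [hQ]; simp [Finset.sum_apply, mul_comm]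
    have h9 : Q s * (1 + v s) = 2 ^ n - u s := by
      rw [h8]
      have : u s = (1 - v s) ^ n := rfl
      rw [this]; linarith
    change 1 / (1 + v s) = Q s * (1 / (2 ^ n - u s))
    rw [← h9] at h5 ⊢
    have h10 : Q s ≠ 0 := left_ne_zero_of_mul h5
    field_simp
  rw [hfin, map_mul]
  refine (norm_mul_le _ _).trans ((mul_le_mul hQn hgn (norm_nonneg _) (by positivity)).trans ?_)
  rw [mcC0, mul_one_div]

end mcKato

open MeasureTheory

section mcKato2
variable {S : Type*} [Fintype S] {B : Type*} [NormedRing B] [NormedAlgebra ℝ B] [CompleteSpace B]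

lemma mc_partial (Φ : (S → ℝ) →ₐ[ℝ] B) (x : S → ℝ)
    (h1 : ∀ t : ℝ, 0 ≤ t → ‖Φ fun s => Real.exp (-(t * x s))‖ ≤ 1) (z : ℂ) (hz : 0 ≤ z.re)
    (hne : ∀ s, (x s : ℂ) + z ≠ 0) (T : ℝ) (hT : 0 ≤ T) :
    ‖mcL Φ (fun s => (1 - Complex.exp (-((x s : ℂ) + z) * T)) / ((x s : ℂ) + z))‖ ≤ 2 * T := by
  have e : (fun s => (1 - Complex.exp (-((x s : ℂ) + z) * T)) / ((x s : ℂ) + z)) =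
      fun s => ∫ w, (Set.indicator (Set.Ioc 0 T) (fun w : ℝ => Complex.exp (-((x s : ℂ) + z) * w))) w := by
    funext s
    rw [integral_indicator measurableSet_Ioc, ← intervalIntegral.integral_of_le hT,
      integral_exp_mul_complex (neg_ne_zero.2 (hne s))]
    have := hne s
    have h2 : -((x s : ℂ) + z) ≠ 0 := neg_ne_zero.2 this
    rw [div_eq_div_iff this h2]
    simp; ring
  rw [e]
  have := mcL_integral Φ (fun w s => (Set.indicator (Set.Ioc 0 T) (fun w : ℝ => Complex.exp (-((x s : ℂ) + z) * w))) w)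
    volume ?_ (Set.indicator (Set.Ioc 0 T) fun _ => (2:ℝ)) ?_ ?_
  · refine this.trans (le_of_eq ?_)
    rw [integral_indicator measurableSet_Ioc]
    simp [hT, mul_comm]
  · intro s
    rw [integrable_indicator_iff measurableSet_Ioc]
    exact (by fun_prop : Continuous fun w : ℝ => Complex.exp (-((x s : ℂ) + z) * w)).integrableOn_Ioc
  · rw [integrable_indicator_iff measurableSet_Ioc]
    simp
  · intro w
    by_cases hw : w ∈ Set.Ioc 0 T
    · simp only [Set.indicator_of_mem hw]
      have e2 : (fun s => Complex.exp (-((x s : ℂ) + z) * w)) =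
          fun s => Complex.exp (-z * w) * ((Real.exp (-(w * x s)) : ℝ) : ℂ) := by
        funext s
        push_cast
        rw [← Complex.exp_add]; congr 1; ring
      rw [e2]
      refine (mcL_smul Φ _ _).trans ?_
      rw [mcL_real]
      have hn : ‖Complex.exp (-z * w)‖ ≤ 1 := by
        rw [Complex.norm_exp]
        simp
        exact mul_nonneg hz hw.1.le
      have := h1 w hw.1.le
      calc 2 * ‖Complex.exp (-z * w)‖ * ‖Φ fun s => Real.exp (-(w * x s))‖ ≤ 2 * 1 * 1 := by gcongr
        _ = 2 := by norm_num
    · simp only [Set.indicator_of_notMem hw]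
      have : (fun _ : S => (0:ℂ)) = 0 := rfl
      rw [this]; simp

lemma mc_res0 (Φ : (S → ℝ) →ₐ[ℝ] B) (x : S → ℝ) (C0 : ℝ)
    (h1 : ∀ t : ℝ, 0 ≤ t → ‖Φ fun s => Real.exp (-(t * x s))‖ ≤ 1)
    (h2 : ∀ t : ℝ, 0 ≤ t → ‖Φ fun s => 1 / (1 + Real.exp (-(t * x s)))‖ ≤ C0) (μ : ℝ) (hμ : μ ≠ 0) :
    ‖mcL Φ (fun s => 1 / ((x s : ℂ) + μ * Complex.I))‖ ≤ 4 * C0 * Real.pi / |μ| := by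
  have hne : ∀ s, (x s : ℂ) + μ * Complex.I ≠ 0 := by
    intro s h
    have := congrArg Complex.im h
    simp at this; exact hμ this
  have habs : 0 < |μ| := abs_pos.2 hμ
  set T := Real.pi / |μ| with hT
  have hT0 : 0 ≤ T := by positivity
  have hexp : Complex.exp (-(μ * Complex.I) * T) = -1 := by
    rcases lt_or_gt_of_ne hμ with h | h
    · have : -((μ:ℂ) * Complex.I) * T = Real.pi * Complex.I := by
        rw [hT, abs_of_neg h]; push_cast
        have : (μ:ℂ) ≠ 0 := by exact_mod_cast hμ
        field_simp
      rw [this, Complex.exp_pi_mul_I]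
    · have : -((μ:ℂ) * Complex.I) * T = -(Real.pi * Complex.I) := by
        rw [hT, abs_of_pos h]; push_cast
        have : (μ:ℂ) ≠ 0 := by exact_mod_cast hμ
        field_simp
      rw [this, Complex.exp_neg, Complex.exp_pi_mul_I]; norm_num
  have e : (fun s => 1 / ((x s : ℂ) + μ * Complex.I)) = fun s =>
      (((1 / (1 + Real.exp (-(T * x s))) : ℝ)) : ℂ) *
        ((1 - Complex.exp (-((x s : ℂ) + μ * Complex.I) * T)) / ((x s : ℂ) + μ * Complex.I)) := by
    funext s
    have h3 : Complex.exp (-((x s : ℂ) + μ * Complex.I) * T) = - ((Real.exp (-(T * x s)) : ℝ) : ℂ) := by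
      have : -((x s : ℂ) + μ * Complex.I) * T = -(T * x s) + -(μ * Complex.I) * T := by ring
      rw [this, Complex.exp_add, hexp]; push_cast; ring
    rw [h3]
    have h4 : (1 + ((Real.exp (-(T * x s)) : ℝ) : ℂ)) ≠ 0 := by
      have : 1 + Real.exp (-(T * x s)) ≠ 0 := by positivity
      exact_mod_cast this
    have h5 := hne s
    push_cast at h4 ⊢
    rw [sub_neg_eq_add]
    generalize Complex.exp (-((T:ℂ) * (x s : ℂ))) = E at h4 ⊢
    field_simp
  rw [e]
  refine (mcL_mul Φ _ _).trans ?_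
  rw [mcL_real]
  have := h2 T hT0
  have := mc_partial Φ x h1 (μ * Complex.I) (by simp) hne T hT0
  have hC : 0 ≤ C0 := (norm_nonneg _).trans (h2 T hT0)
  calc 2 * ‖Φ fun s => 1 / (1 + Real.exp (-(T * x s)))‖ * _ ≤ 2 * C0 * (2 * T) := by gcongr
    _ = 4 * C0 * Real.pi / |μ| := by rw [hT]; ring

noncomputable def mcC2 (C0 : ℝ) : ℝ := 12 + 200 * Real.pi * C0

lemma mc_res1 (Φ : (S → ℝ) →ₐ[ℝ] B) (x : S → ℝ) (hx : ∀ s, 0 ≤ x s) (C0 : ℝ)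
    (h1 : ∀ t : ℝ, 0 ≤ t → ‖Φ fun s => Real.exp (-(t * x s))‖ ≤ 1)
    (h2 : ∀ t : ℝ, 0 ≤ t → ‖Φ fun s => 1 / (1 + Real.exp (-(t * x s)))‖ ≤ C0) (μ : ℝ) :
    (1 + |μ|) * ‖mcL Φ (fun s => 1 / ((x s : ℂ) + (1 + μ * Complex.I)))‖ ≤ mcC2 C0 := by
  have hne : ∀ s, (x s : ℂ) + (1 + μ * Complex.I) ≠ 0 := by
    intro s h
    have := congrArg Complex.re h
    simp at this; linarith [hx s]
  set r := ‖mcL Φ (fun s => 1 / ((x s : ℂ) + (1 + μ * Complex.I)))‖ with hr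
  have hr0 : 0 ≤ r := norm_nonneg _
  have hr12 : r ≤ 12 := by
    have e : (fun s => 1 / ((x s : ℂ) + (1 + μ * Complex.I))) = fun s =>
      ((1 - Complex.exp (-((x s : ℂ) + (1 + μ * Complex.I)) * (3:ℝ))) / ((x s : ℂ) + (1 + μ * Complex.I))) +
      Complex.exp (-(1 + μ * Complex.I) * (3:ℝ)) * (((Real.exp (-(3 * x s)) : ℝ) : ℂ) *
        (1 / ((x s : ℂ) + (1 + μ * Complex.I)))) := by
      funext s
      have : Complex.exp (-((x s : ℂ) + (1 + μ * Complex.I)) * (3:ℝ)) =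
          Complex.exp (-(1 + μ * Complex.I) * (3:ℝ)) * ((Real.exp (-(3 * x s)) : ℝ) : ℂ) := by
        push_cast; rw [← Complex.exp_add]; congr 1; ring
      rw [this, ← mul_assoc]
      ring
    have h3 := mc_partial Φ x h1 (1 + μ * Complex.I) (by simp) hne 3 (by norm_num)
    have h4 : ‖mcL Φ (fun s => ((Real.exp (-(3 * x s)) : ℝ) : ℂ) *
        (1 / ((x s : ℂ) + (1 + μ * Complex.I))))‖ ≤ 2 * r := by
      refine (mcL_mul Φ _ _).trans ?_
      rw [mcL_real, ← hr]
      have := h1 3 (by norm_num)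
      nlinarith
    have h5 : ‖Complex.exp (-(1 + μ * Complex.I) * (3:ℝ))‖ ≤ 1 / 8 := by
      rw [Complex.norm_exp]
      have : (-(1 + μ * Complex.I) * (3:ℝ)).re = -3 := by simp
      rw [this, Real.exp_neg, inv_eq_one_div]
      apply one_div_le_one_div_of_le (by norm_num)
      have h6 := Real.exp_one_gt_d9
      have : Real.exp 3 = Real.exp 1 ^ 3 := by rw [← Real.exp_nat_mul]; norm_num
      rw [this]
      calc (8:ℝ) = 2 ^ 3 := by norm_num
        _ ≤ _ := by gcongr; linarith
    have h7 := mcL_smul Φ (Complex.exp (-(1 + μ * Complex.I) * (3:ℝ))) (fun s => ((Real.exp (-(3 * x s)) : ℝ) : ℂ) *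
        (1 / ((x s : ℂ) + (1 + μ * Complex.I))))
    have h8 : r ≤ 2 * 3 + 2 * (1/8) * (2 * r) := by
      conv_lhs => rw [hr, e]
      refine (mcL_add Φ _ _).trans (add_le_add h3 (h7.trans ?_))
      gcongr
    linarith
  have hone : ‖Φ (fun _ => 1)‖ ≤ 1 := by
    have := h1 0 le_rfl
    simpa only [zero_mul, neg_zero, Real.exp_zero] using this
  have hC : 0 ≤ C0 := (norm_nonneg _).trans (h2 0 le_rfl)
  have hmain : |μ| * r ≤ 200 * Real.pi * C0 := by
    rcases eq_or_ne μ 0 with rfl | hμ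
    · simp; positivity
    have h3 := mc_res0 Φ x C0 h1 h2 μ hμ
    have e : (fun s => 1 / ((x s : ℂ) + (1 + μ * Complex.I))) = fun s =>
        (1 / ((x s : ℂ) + μ * Complex.I)) * (((1:ℝ) : ℂ) - 1 / ((x s : ℂ) + (1 + μ * Complex.I))) := by
      funext s
      have h5 : (x s : ℂ) + μ * Complex.I ≠ 0 := by
        intro h
        have := congrArg Complex.im h
        simp at this; exact hμ this
      have := hne s
      field_simp
      push_cast; ring
    have h4 : ‖mcL Φ (fun s => (((1:ℝ) : ℂ) - 1 / ((x s : ℂ) + (1 + μ * Complex.I))))‖ ≤ 1 + 12 := by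
      refine (mcL_sub Φ _ _).trans (add_le_add ?_ hr12)
      rw [mcL_real Φ (fun _ => 1)]; exact hone
    have h6 : r ≤ 2 * (4 * C0 * Real.pi / |μ|) * (1 + 12) := by
      conv_lhs => rw [hr, e]
      refine (mcL_mul Φ _ _).trans ?_
      gcongr
    have habs : 0 < |μ| := abs_pos.2 hμ
    calc |μ| * r ≤ |μ| * (2 * (4 * C0 * Real.pi / |μ|) * (1 + 12)) := by gcongr
      _ = 104 * (Real.pi * C0) := by field_simp; ring
      _ ≤ 200 * Real.pi * C0 := by nlinarith [mul_nonneg Real.pi_pos.le hC]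
  rw [mcC2]; linarith

noncomputable def mcC3 (C0 : ℝ) : ℝ := Real.exp 1 * (16 * (1 + 2 * mcC2 C0) * mcC2 C0 ^ 2 * Real.pi)

lemma mc_kato1 (Φ : (S → ℝ) →ₐ[ℝ] B) (x : S → ℝ) (hx : ∀ s, 0 ≤ x s) (C0 : ℝ)
    (h1 : ∀ t : ℝ, 0 ≤ t → ‖Φ fun s => Real.exp (-(t * x s))‖ ≤ 1)
    (h2 : ∀ t : ℝ, 0 ≤ t → ‖Φ fun s => 1 / (1 + Real.exp (-(t * x s)))‖ ≤ C0) :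
    ‖Φ fun s => x s * Real.exp (-(x s))‖ ≤ mcC3 C0 := by
  set R : ℝ → S → ℂ := fun w s => 1 / ((x s : ℂ) + (1 + (2 * Real.pi * w : ℝ) * Complex.I)) with hR
  have hone : ‖Φ (fun _ => 1)‖ ≤ 1 := by
    have := h1 0 le_rfl
    simpa only [zero_mul, neg_zero, Real.exp_zero] using this
  have hR1 : ∀ w, (1 + |2 * Real.pi * w|) * ‖mcL Φ (R w)‖ ≤ mcC2 C0 := fun w => mc_res1 Φ x hx C0 h1 h2 _
  have hne : ∀ w s, (x s : ℂ) + (1 + (2 * Real.pi * w : ℝ) * Complex.I) ≠ 0 := by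
    intro w s h
    have := congrArg Complex.re h
    simp at this; linarith [hx s]
  have hC2 : 0 ≤ mcC2 C0 := (by positivity : 0 ≤ (1 + |2 * Real.pi * (0:ℝ)|) * ‖mcL Φ (R 0)‖).trans (hR1 0)
  have hxR : ∀ w, ‖mcL Φ (fun s => (x s : ℂ) * R w s)‖ ≤ 1 + 2 * mcC2 C0 := by
    intro w
    have e : (fun s => (x s : ℂ) * R w s) = fun s => ((1:ℝ) : ℂ) - (1 + (2 * Real.pi * w : ℝ) * Complex.I) * R w s := by
      funext s
      have := hne w s
      simp only [hR]
      field_simp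
      push_cast; ring
    rw [e]
    refine (mcL_sub Φ _ _).trans (add_le_add ?_ ?_)
    · rw [mcL_real Φ (fun _ => 1)]; exact hone
    · refine (mcL_smul Φ _ _).trans ?_
      rw [mul_assoc]
      refine mul_le_mul_of_nonneg_left (le_trans ?_ (hR1 w)) (by norm_num)
      gcongr
      refine (norm_add_le _ _).trans ?_
      rw [norm_mul, Complex.norm_real, Complex.norm_I]
      simp
  have hRR : ∀ w, ‖mcL Φ (fun s => R w s * R w s)‖ ≤ 2 * (mcC2 C0 ^ 2 * (1 + w ^ 2)⁻¹) := by
    intro w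
    refine (mcL_mul Φ _ _).trans ?_
    rw [mul_assoc]
    refine mul_le_mul_of_nonneg_left ?_ (by norm_num)
    rw [← div_eq_mul_inv, le_div_iff₀ (by positivity)]
    have h3 : 1 + w ^ 2 ≤ (1 + |2 * Real.pi * w|) ^ 2 := by
      have h4 : |w| ≤ |2 * Real.pi * w| := by
        rw [abs_mul, abs_of_pos (by positivity : 0 < 2 * Real.pi)]
        nlinarith [Real.pi_gt_three, abs_nonneg w]
      have : w ^ 2 = |w| ^ 2 := (sq_abs w).symm
      nlinarith [abs_nonneg w]
    calc ‖mcL Φ (R w)‖ * ‖mcL Φ (R w)‖ * (1 + w ^ 2)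
        ≤ ‖mcL Φ (R w)‖ * ‖mcL Φ (R w)‖ * (1 + |2 * Real.pi * w|) ^ 2 := by gcongr
      _ = ((1 + |2 * Real.pi * w|) * ‖mcL Φ (R w)‖) ^ 2 := by ring
      _ ≤ mcC2 C0 ^ 2 := by gcongr; exact hR1 w
  have hscal := fun s => mc_inversion (x s + 1) (by linarith [hx s])
  have hRe : ∀ w s, 1 / (((x s + 1 : ℝ) : ℂ) + (2 * Real.pi * w : ℝ) * Complex.I) = R w s := by
    intro w s; simp only [hR]; congr 1; push_cast; ring
  simp_rw [hRe] at hscal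
  have key := mcL_integral Φ (fun w s => (x s : ℂ) * (Complex.exp ((2 * Real.pi * w : ℝ) * Complex.I) * (2 * R w s ^ 3)))
    volume (fun s => (hscal s).1.const_mul _) (fun w => 16 * (1 + 2 * mcC2 C0) * mcC2 C0 ^ 2 * (1 + w ^ 2)⁻¹)
    (integrable_inv_one_add_sq.const_mul _) ?_
  · rw [integral_const_mul, integral_univ_inv_one_add_sq] at key
    have e2 : (fun s => ∫ w : ℝ, (x s : ℂ) * (Complex.exp ((2 * Real.pi * w : ℝ) * Complex.I) * (2 * R w s ^ 3))) =
        fun s => ((Real.exp (-1) * (x s * Real.exp (-(x s))) : ℝ) : ℂ) := by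
      funext s
      rw [integral_const_mul, (hscal s).2]
      push_cast
      have : -((x s : ℂ) + 1) = -1 + -(x s) := by ring
      rw [this, Complex.exp_add]; ring
    rw [e2, mcL_real] at key
    have e3 : (fun s => Real.exp (-1) * (x s * Real.exp (-(x s)))) = Real.exp (-1) • fun s => x s * Real.exp (-(x s)) := rfl
    rw [e3, map_smul, norm_smul, Real.norm_eq_abs, Real.abs_exp] at key
    rw [mcC3]
    have := mul_le_mul_of_nonneg_left key (Real.exp_pos 1).le
    rwa [← mul_assoc, ← Real.exp_add, add_neg_cancel, Real.exp_zero, one_mul] at this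
  · intro w
    have e4 : (fun s => (x s : ℂ) * (Complex.exp ((2 * Real.pi * w : ℝ) * Complex.I) * (2 * R w s ^ 3))) =
        fun s => (Complex.exp ((2 * Real.pi * w : ℝ) * Complex.I) * 2) * (((x s : ℂ) * R w s) * (R w s * R w s)) := by
      funext s; ring
    rw [e4]
    refine (mcL_smul Φ _ _).trans ?_
    rw [norm_mul, Complex.norm_exp_ofReal_mul_I]
    have h5 := mcL_mul Φ (fun s => (x s : ℂ) * R w s) (fun s => R w s * R w s)
    have h6 : ‖mcL Φ (fun s => ((x s : ℂ) * R w s) * (R w s * R w s))‖ ≤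
        2 * (1 + 2 * mcC2 C0) * (2 * (mcC2 C0 ^ 2 * (1 + w ^ 2)⁻¹)) := by
      refine h5.trans ?_
      gcongr
      · exact hxR w
      · exact hRR w
    simp only [Complex.norm_ofNat]
    calc _ ≤ 2 * (1 * 2) * (2 * (1 + 2 * mcC2 C0) * (2 * (mcC2 C0 ^ 2 * (1 + w ^ 2)⁻¹))) := by gcongr
      _ = _ := by ring

lemma mc_kato (Φ : (S → ℝ) →ₐ[ℝ] B) (x : S → ℝ) (hx : ∀ s, 0 ≤ x s) (n : ℕ) (hn : 0 < n) (ρ : ℝ) (hρ : ρ < 2 ^ n)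
    (h1 : ∀ t : ℝ, 0 ≤ t → ‖Φ fun s => Real.exp (-(t * x s))‖ ≤ 1)
    (h2 : ∀ t : ℝ, 0 ≤ t → ‖Φ fun s => (1 - Real.exp (-(t * x s))) ^ n‖ ≤ ρ) (t : ℝ) (ht : 0 < t) :
    ‖Φ fun s => x s * Real.exp (-(t * x s))‖ ≤ mcC3 (mcC0 n ρ) / t := by
  have h3 := mc_inv Φ x hx n hn ρ hρ h1 h2
  have h4 := mc_kato1 Φ (fun s => t * x s) (fun s => mul_nonneg ht.le (hx s)) (mcC0 n ρ)
    (fun t' ht' => by simpa only [mul_assoc] using h1 (t' * t) (by positivity))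
    (fun t' ht' => by simpa only [mul_assoc] using h3 (t' * t) (by positivity))
  have e : (fun s => t * x s * Real.exp (-(t * x s))) = t • fun s => x s * Real.exp (-(t * x s)) := by
    funext s; simp [mul_assoc]
  rw [e, map_smul, norm_smul, Real.norm_eq_abs, abs_of_pos ht] at h4
  rw [le_div_iff₀ ht]; linarith

end mcKato2

open MeasureTheory
set_option linter.unusedSectionVars false

section mcProj

noncomputable def mcTh (M l : ℕ) : ℂ := (2 * Real.pi * l / M : ℝ) * Complex.I
noncomputable def mcc (M j : ℕ) : ℝ :=
  (1 / M : ℝ) * ∑ l ∈ Finset.range M, (Complex.exp (-mcTh M l) * mcTh M l ^ j).re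

lemma mcc_bound (M j : ℕ) (hM : 0 < M) : |mcc M j| ≤ 7 ^ j := by
  have hM' : (0:ℝ) < M := by exact_mod_cast hM
  rw [mcc, abs_mul, abs_of_pos (by positivity)]
  have : |∑ l ∈ Finset.range M, (Complex.exp (-mcTh M l) * mcTh M l ^ j).re| ≤ ∑ l ∈ Finset.range M, (7:ℝ) ^ j := by
    refine (Finset.abs_sum_le_sum_abs _ _).trans (Finset.sum_le_sum fun l hl => ?_)
    refine (Complex.abs_re_le_norm _).trans ?_
    have hl' : (l:ℝ) ≤ M := by exact_mod_cast (Finset.mem_range.1 hl).le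
    have h1 : ‖Complex.exp (-mcTh M l)‖ = 1 := by
      rw [mcTh, ← neg_mul, ← Complex.ofReal_neg, Complex.norm_exp_ofReal_mul_I]
    have h2 : ‖mcTh M l‖ ≤ 7 := by
      rw [mcTh, norm_mul, Complex.norm_I, mul_one, Complex.norm_real, Real.norm_eq_abs,
        abs_of_nonneg (by positivity), div_le_iff₀ hM']
      have := Real.pi_lt_d2
      have := Real.pi_pos
      nlinarith
    rw [norm_mul, h1, one_mul, norm_pow]
    gcongr
  rw [Finset.sum_const, Finset.card_range, nsmul_eq_mul] at this
  calc (1 / M : ℝ) * _ ≤ (1 / M : ℝ) * (M * 7 ^ j) := by gcongr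
    _ = 7 ^ j := by field_simp

lemma mcc_hasSum (M k : ℕ) (hM : 1 < M) (hk : k < M) :
    HasSum (fun j : ℕ => mcc M j * ((k:ℝ) ^ j / j.factorial)) (if k = 1 then 1 else 0) := by
  have hM0 : (M:ℂ) ≠ 0 := by exact_mod_cast (by omega : M ≠ 0)
  have h1 : ∀ l : ℕ, HasSum (fun j : ℕ => Complex.exp (-mcTh M l) * ((mcTh M l * k) ^ j / j.factorial))
      (Complex.exp (-mcTh M l) * Complex.exp (mcTh M l * k)) := by
    intro l
    refine HasSum.mul_left _ ?_
    rw [Complex.exp_eq_exp_ℂ]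
    exact NormedSpace.expSeries_div_hasSum_exp _
  have h2 := (hasSum_sum (s := Finset.range M) fun l _ => h1 l)
  have h3 := (Complex.hasSum_re h2).mul_left (1 / M : ℝ)
  convert h3 using 1
  · rfl
  · funext j
    rw [mcc, mul_assoc]; congr 1
    rw [Finset.sum_mul, Complex.re_sum]
    refine Finset.sum_congr rfl fun l _ => ?_
    have : Complex.exp (-mcTh M l) * ((mcTh M l * k) ^ j / j.factorial) =
      (((k:ℝ) ^ j / j.factorial : ℝ) : ℂ) * (Complex.exp (-mcTh M l) * mcTh M l ^ j) := by
      push_cast; ring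
    rw [this, Complex.re_ofReal_mul]; ring
  · set η : ℂ := Complex.exp (((k:ℂ) - 1) / M * (2 * Real.pi * Complex.I)) with hη
    have e : ∀ l ∈ Finset.range M, Complex.exp (-mcTh M l) * Complex.exp (mcTh M l * k) = η ^ l := by
      intro l _
      rw [← Complex.exp_add, hη, ← Complex.exp_nat_mul]
      congr 1
      rw [mcTh]; push_cast; field_simp; ring
    rw [Finset.sum_congr rfl e]
    by_cases h : k = 1
    · have : η = 1 := by rw [hη, h]; simp
      rw [this]; simp [h]
      have : (M:ℝ) ≠ 0 := by exact_mod_cast (by omega : M ≠ 0)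
      field_simp
    · have hne : η ≠ 1 := by
        intro h1
        rw [hη, Complex.exp_eq_one_iff] at h1
        obtain ⟨z, hz⟩ := h1
        have hp : (2 * Real.pi * Complex.I : ℂ) ≠ 0 := Complex.two_pi_I_ne_zero
        have h2 := mul_right_cancel₀ hp hz
        rw [div_eq_iff hM0] at h2
        have h3 : (k:ℤ) - 1 = z * M := by exact_mod_cast h2
        have : z = 0 := by
          by_contra hz0
          rcases lt_or_gt_of_ne hz0 with h4 | h4
          · nlinarith
          · nlinarith
        rw [this] at h3
        omega
      have hp : η ^ M = 1 := by
        rw [hη, ← Complex.exp_nat_mul, Complex.exp_eq_one_iff]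
        refine ⟨(k:ℤ) - 1, ?_⟩
        push_cast; field_simp
      rw [geom_sum_eq hne, hp]; simp [h]

variable {S : Type*} [Fintype S] {B : Type*} [NormedRing B] [NormedAlgebra ℝ B]

lemma mc_pow (Φ : (S → ℝ) →ₐ[ℝ] B) (k : S → ℕ) (C : ℝ) (hC : 0 < C)
    (h1 : ∀ t : ℝ, 0 ≤ t → ‖Φ fun s => Real.exp (-(t * k s))‖ ≤ 1)
    (h2 : ∀ t : ℝ, 0 < t → ‖Φ fun s => k s * Real.exp (-(t * k s))‖ ≤ C / t) (a : ℝ) (ha : 0 < a) (j : ℕ) :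
    ‖Φ fun s => ((k s : ℝ) ^ j / j.factorial) * Real.exp (-(a * k s))‖ ≤ (C * Real.exp 1 / a) ^ j := by
  rcases Nat.eq_zero_or_pos j with h | h
  · subst h
    simpa using h1 a ha.le
  · have hj : (0:ℝ) < j := by exact_mod_cast h
    have e : (fun s => ((k s : ℝ) ^ j / j.factorial) * Real.exp (-(a * k s))) =
        (1 / j.factorial : ℝ) • (fun s => k s * Real.exp (-(a / j * k s))) ^ j := by
      funext s
      simp only [Pi.smul_apply, Pi.pow_apply, smul_eq_mul, mul_pow, ← Real.exp_nat_mul]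
      have : (j:ℝ) * -(a / j * k s) = -(a * k s) := by field_simp
      rw [this]; ring
    rw [e, map_smul, map_pow, norm_smul]
    have h3 := h2 (a / j) (by positivity)
    have h4 := Real.pow_div_factorial_le_exp (j:ℝ) hj.le j
    have h5 : ‖(1 / j.factorial : ℝ)‖ = 1 / j.factorial := by
      rw [Real.norm_eq_abs, abs_of_pos (by positivity)]
    rw [h5]
    calc (1 / j.factorial : ℝ) * ‖(Φ fun s => k s * Real.exp (-(a / j * k s))) ^ j‖
        ≤ (1 / j.factorial : ℝ) * (C / (a / j)) ^ j := by
          gcongr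
          exact (norm_pow_le' _ h).trans (by gcongr)
      _ = (C / a) ^ j * ((j:ℝ) ^ j / j.factorial) := by
          rw [div_div_eq_mul_div, mul_div_right_comm, mul_pow]; ring
      _ ≤ (C / a) ^ j * Real.exp j := by gcongr
      _ = _ := by
          rw [← Real.exp_one_pow, ← mul_pow]; ring

noncomputable def mcK (C : ℝ) : ℝ := 2 * Real.exp (14 * C * Real.exp 1)

lemma mc_proj (Φ : (S → ℝ) →ₐ[ℝ] B) (k : S → ℕ) (C : ℝ) (hC : 0 < C)
    (h1 : ∀ t : ℝ, 0 ≤ t → ‖Φ fun s => Real.exp (-(t * k s))‖ ≤ 1)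
    (h2 : ∀ t : ℝ, 0 < t → ‖Φ fun s => k s * Real.exp (-(t * k s))‖ ≤ C / t) :
    ‖Φ fun s => if k s = 1 then (1:ℝ) else 0‖ ≤ mcK C := by
  obtain ⟨M, hM⟩ : ∃ M : ℕ, 1 < M ∧ ∀ s, k s < M := by
    refine ⟨2 + ∑ s, k s, by omega, fun s => ?_⟩
    have := Finset.single_le_sum (f := k) (fun _ _ => Nat.zero_le _) (Finset.mem_univ s)
    omega
  set a := 14 * C * Real.exp 1 with ha
  have ha0 : 0 < a := by positivity
  have hs : HasSum (fun j : ℕ => mcc M j • fun s => ((k s : ℝ) ^ j / j.factorial) * Real.exp (-(a * k s)))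
      (Real.exp (-a) • fun s => if k s = 1 then (1:ℝ) else 0) := by
    rw [Pi.hasSum]
    intro s
    convert (mcc_hasSum M (k s) hM.1 (hM.2 s)).mul_right (Real.exp (-(a * k s))) using 1
    · rfl
    · funext j; simp; ring
    · by_cases h : k s = 1 <;> simp [h]
  have hs2 := (LinearMap.toContinuousLinearMap Φ.toLinearMap).hasSum hs
  have hg : HasSum (fun j : ℕ => (1 / 2 : ℝ) ^ j) 2 := hasSum_geometric_two
  have h3 := hs2.norm_le_of_bounded hg (fun j => by
    simp only [Function.comp_apply, LinearMap.coe_toContinuousLinearMap', AlgHom.toLinearMap_apply, map_smul, norm_smul]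
    have q1 := mcc_bound M j (by omega)
    have q2 := mc_pow Φ k C hC h1 h2 a ha0 j
    rw [Real.norm_eq_abs]
    calc _ ≤ 7 ^ j * (C * Real.exp 1 / a) ^ j := by gcongr
      _ = (1 / 2) ^ j := by
        rw [← mul_pow, ha]; congr 1
        have := Real.exp_pos 1
        field_simp; norm_num)
  simp only [LinearMap.coe_toContinuousLinearMap', AlgHom.toLinearMap_apply, map_smul, norm_smul] at h3
  rw [Real.norm_eq_abs, abs_of_pos (Real.exp_pos _), Real.exp_neg, inv_mul_le_iff₀ (Real.exp_pos _)] at h3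
  rw [mcK]; linarith

variable [CompleteSpace B]

noncomputable def mcKK (n : ℕ) (ρ : ℝ) : ℝ := mcK (|mcC3 (mcC0 n ρ)| + 1)

lemma mc_projection (Φ : (S → ℝ) →ₐ[ℝ] B) (k : S → ℕ) (n : ℕ) (hn : 0 < n) (ρ : ℝ) (hρ : ρ < 2 ^ n)
    (h1 : ∀ t : ℝ, 0 ≤ t → ‖Φ fun s => Real.exp (-(t * k s))‖ ≤ 1)
    (h2 : ∀ t : ℝ, 0 ≤ t → ‖Φ fun s => (1 - Real.exp (-(t * k s))) ^ n‖ ≤ ρ) :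
    ‖Φ fun s => if k s = 1 then (1:ℝ) else 0‖ ≤ mcKK n ρ := by
  refine mc_proj Φ k _ (by positivity) h1 fun t ht => ?_
  refine (mc_kato Φ (fun s => (k s : ℝ)) (fun s => by positivity) n hn ρ hρ h1 h2 t ht).trans ?_
  gcongr
  linarith [le_abs_self (mcC3 (mcC0 n ρ))]

lemma mcKK_pos (n : ℕ) (ρ : ℝ) : 0 < mcKK n ρ := by
  rw [mcKK, mcK]; positivity
end mcProj

open MeasureTheory
set_option linter.unusedSectionVars false

section mcG
variable {S : Type*} {Y : Type*} [NormedAddCommGroup Y] [NormedSpace ℝ Y]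

lemma mc_g1 (Φ : (S → ℝ) →ₐ[ℝ] (Y →L[ℝ] Y)) {ι : Type*} [DecidableEq ι] (g : ι → S → ℝ)
    (hg : ∀ k, ‖Φ (g k)‖ ≤ 1) (U : Finset ι) :
    ‖Φ (∏ k ∈ U, (1 + g k))‖ ≤ 2 ^ U.card ∧ ‖Φ (∏ k ∈ U, (1 + g k) - 1)‖ ≤ 2 ^ U.card - 1 ∧
    ‖Φ (∏ k ∈ U, (1 + g k) - ∑ k ∈ U, g k)‖ ≤ 2 ^ U.card - U.card := by
  have h1 : ‖Φ 1‖ ≤ 1 := by rw [map_one]; exact ContinuousLinearMap.norm_id_le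
  induction U using Finset.induction_on with
  | empty => simpa using h1
  | insert k U hk ih =>
    obtain ⟨i1, i2, i3⟩ := ih
    have hm : ∀ G : S → ℝ, ‖Φ (g k * G)‖ ≤ ‖Φ G‖ := by
      intro G
      rw [map_mul]
      exact (norm_mul_le _ _).trans (mul_le_of_le_one_left (norm_nonneg _) (hg k))
    rw [Finset.prod_insert hk, Finset.sum_insert hk, Finset.card_insert_of_notMem hk]
    set P := ∏ k ∈ U, (1 + g k)
    set Q := ∑ k ∈ U, g k
    refine ⟨?_, ?_, ?_⟩
    · have e : (1 + g k) * P = P + g k * P := by ring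
      rw [e, map_add]
      refine (norm_add_le _ _).trans ?_
      have := hm P
      rw [pow_succ]; linarith
    · have e : (1 + g k) * P - 1 = (P - 1) + g k * P := by ring
      rw [e, map_add]
      refine (norm_add_le _ _).trans ?_
      have := hm P
      rw [pow_succ]; linarith
    · have e : (1 + g k) * P - (g k + Q) = (P - Q) + g k * (P - 1) := by ring
      rw [e, map_add]
      refine (norm_add_le _ _).trans ?_
      have := hm (P - 1)
      rw [pow_succ]; push_cast; linarith

def mcSg {ι : Type*} [DecidableEq ι] (V : Finset ι) (k : ι) : ℝ := if k ∈ V then 1 else -1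

lemma mc_g2 (Φ : (S → ℝ) →ₐ[ℝ] (Y →L[ℝ] Y)) (n : ℕ) (e : Fin n → S → ℝ)
    (he : ∀ k, ‖Φ (e k)‖ ≤ 1) (hi : ∀ k, e k * e k = e k) (f : Y) (hf : ‖f‖ ≤ 1) (V : Finset (Fin n)) :
    2 ^ n - ‖Φ (∏ k, (1 + mcSg V k • e k)) f‖ ≤ 2 ^ V.card * (2 ^ n - ‖Φ (∏ k, (1 - e k)) f‖) := by
  induction V using Finset.induction_on with
  | empty =>
    simp [mcSg, sub_eq_add_neg]
  | insert k V hk ih =>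
    rw [Finset.card_insert_of_notMem hk, pow_succ]
    set h := ∏ i ∈ Finset.univ.erase k, (1 + mcSg V i • e i) with hh
    have e1 : ∏ i, (1 + mcSg V i • e i) = (1 - e k) * h := by
      rw [← Finset.mul_prod_erase _ _ (Finset.mem_univ k)]
      congr 1
      simp [mcSg, hk, sub_eq_add_neg]
    have e2 : ∏ i, (1 + mcSg (insert k V) i • e i) = (1 + e k) * h := by
      rw [← Finset.mul_prod_erase _ _ (Finset.mem_univ k)]
      congr 1
      · simp [mcSg]
      · refine Finset.prod_congr rfl fun i hi => ?_
        have := Finset.ne_of_mem_erase hi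
        simp [mcSg, this]
    have hn : 0 < n := k.pos
    have hh1 : ‖Φ h f‖ ≤ 2 ^ (n - 1) := by
      have := (mc_g1 Φ (fun i => mcSg V i • e i) (fun i => by
        rw [map_smul, norm_smul]
        have : ‖mcSg V i‖ = 1 := by unfold mcSg; split_ifs <;> simp
        rw [this, one_mul]; exact he i) (Finset.univ.erase k)).1
      rw [Finset.card_erase_of_mem (Finset.mem_univ k), Finset.card_univ, Fintype.card_fin] at this
      exact ((Φ h).le_opNorm_of_le hf).trans (by simpa using this)
    rw [e1] at ih
    rw [e2]
    have a1 : ‖Φ ((1 - e k) * h) f‖ ≤ ‖Φ h f‖ + ‖Φ (e k * h) f‖ := by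
      have : (1 - e k) * h = h - e k * h := by ring
      rw [this, map_sub]
      exact norm_sub_le _ _
    have a2 : 2 * ‖Φ (e k * h) f‖ ≤ ‖Φ ((1 + e k) * h) f‖ := by
      have : (2:ℝ) • (e k * h) = e k * ((1 + e k) * h) := by
        have : e k * ((1 + e k) * h) = e k * h + (e k * e k) * h := by ring
        rw [this, hi, two_smul]
      have h3 : (2:ℝ) • (Φ (e k * h) f) = Φ (e k) (Φ ((1 + e k) * h) f) := by
        rw [← ContinuousLinearMap.smul_apply, ← map_smul, this, map_mul]; rfl
      have h4 := (Φ (e k)).le_of_opNorm_le (he k) (Φ ((1 + e k) * h) f)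
      rw [← h3, norm_smul] at h4
      simpa using h4
    have : (2:ℝ) ^ n = 2 ^ (n - 1) * 2 := by rw [← pow_succ]; congr 1; omega
    nlinarith

lemma mc_g3 (Φ : (S → ℝ) →ₐ[ℝ] (Y →L[ℝ] Y)) (n : ℕ) (c : ℝ) (hc : c ≤ n)
    (hB : ∀ y : Fin n → Y, (∀ k, ‖y k‖ ≤ 1) → ∃ V : Finset (Fin n), ‖∑ k, mcSg V k • y k‖ ≤ c)
    (e : Fin n → S → ℝ)
    (he : ∀ k, ‖Φ (e k)‖ ≤ 1) (hi : ∀ k, e k * e k = e k) :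
    ‖Φ (∏ k, (1 - e k))‖ ≤ 2 ^ n - (n - c) / 2 ^ n := by
  have h0 : 0 ≤ (2:ℝ) ^ n - (n - c) / 2 ^ n := by
    obtain ⟨V, hV⟩ := hB (fun _ => 0) (by simp)
    have : 0 ≤ c := (norm_nonneg _).trans hV
    have : (n:ℝ) < 2 ^ n := by exact_mod_cast Nat.lt_two_pow_self
    have : ((n:ℝ) - c) / 2 ^ n ≤ 1 := by rw [div_le_one (by positivity)]; linarith
    have : (1:ℝ) ≤ 2 ^ n := one_le_pow₀ (by norm_num)
    linarith
  refine ContinuousLinearMap.opNorm_le_of_unit_norm h0 fun f hf => ?_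
  obtain ⟨V, hV⟩ := hB (fun k => Φ (e k) f) (fun k => by
    simpa using (Φ (e k)).le_of_opNorm_le_of_le (he k) hf.le)
  have h2 := mc_g2 Φ n e he hi f hf.le V
  have h3 := (mc_g1 Φ (fun i => mcSg V i • e i) (fun i => by
        rw [map_smul, norm_smul]
        have : ‖mcSg V i‖ = 1 := by unfold mcSg; split_ifs <;> simp
        rw [this, one_mul]; exact he i) Finset.univ).2.2
  rw [Finset.card_univ, Fintype.card_fin] at h3
  have h4 : Φ (∏ k, (1 + mcSg V k • e k)) f =
      Φ (∏ k, (1 + mcSg V k • e k) - ∑ k, mcSg V k • e k) f + ∑ k, mcSg V k • Φ (e k) f := by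
    rw [map_sub, map_sum]; simp [ContinuousLinearMap.sum_apply]
  have h5 : ‖Φ (∏ k, (1 + mcSg V k • e k)) f‖ ≤ 2 ^ n - n + c := by
    rw [h4]
    refine (norm_add_le _ _).trans (add_le_add ?_ hV)
    simpa using (ContinuousLinearMap.le_of_opNorm_le_of_le _ h3 hf.le)
  have h6 : (2:ℝ) ^ V.card ≤ 2 ^ n := by
    apply pow_le_pow_right₀ (by norm_num)
    simpa using V.card_le_univ
  have h7 : 0 ≤ 2 ^ n - ‖Φ (∏ k, (1 - e k)) f‖ := by
    have := (mc_g1 Φ (fun i => -e i) (fun i => by rw [map_neg, norm_neg]; exact he i) Finset.univ).1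
    rw [Finset.card_univ, Fintype.card_fin] at this
    have := ContinuousLinearMap.le_of_opNorm_le_of_le _ this hf.le
    simp only [← sub_eq_add_neg] at this
    linarith
  have h8 : (n:ℝ) - c ≤ 2 ^ n * (2 ^ n - ‖Φ (∏ k, (1 - e k)) f‖) :=
    calc _ ≤ _ := by linarith
      _ ≤ _ := mul_le_mul_of_nonneg_right h6 h7
  have h9 : (n - c) / 2 ^ n ≤ 2 ^ n - ‖Φ (∏ k, (1 - e k)) f‖ := by
    rw [div_le_iff₀ (by positivity)]; linarith
  linarith

end mcG

open MeasureTheory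
set_option linter.unusedSectionVars false

section mcE
variable {N : ℕ} {X : Type*} [NormedAddCommGroup X] [NormedSpace ℝ X]

abbrev mcQ (N : ℕ) := Fin N → Bool
abbrev mcY (X : Type*) (N : ℕ) [NormedAddCommGroup X] := PiLp 2 (fun _ : mcQ N => X)

def mcb (b : Bool) : ℝ := if b then 1 else -1
lemma mcb_sq (b : Bool) : mcb b * mcb b = 1 := by cases b <;> simp [mcb]
lemma mcb_not (b : Bool) : mcb (!b) = - mcb b := by cases b <;> simp [mcb]

def mcchi (A : Finset (Fin N)) (x : mcQ N) : ℝ := ∏ j ∈ A, mcb (x j)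

lemma mcchi_orth (A A' : Finset (Fin N)) : ∑ y, mcchi A y * mcchi A' y = if A = A' then 2 ^ N else 0 := by
  have e : ∀ y : mcQ N, mcchi A y * mcchi A' y =
      ∏ j, ((if j ∈ A then mcb (y j) else 1) * (if j ∈ A' then mcb (y j) else 1)) := by
    intro y
    rw [Finset.prod_mul_distrib, Finset.prod_ite_mem, Finset.prod_ite_mem]; simp [mcchi]
  simp only [e]
  rw [← Fintype.prod_sum (f := fun j b => (if j ∈ A then mcb b else 1) * (if j ∈ A' then mcb b else 1))]
  split_ifs with h
  · subst h
    have : ∀ j : Fin N, ∑ b, (if j ∈ A then mcb b else 1) * (if j ∈ A then mcb b else 1) = 2 := by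
      intro j; split_ifs <;> simp [mcb] <;> norm_num
    rw [Finset.prod_congr rfl fun j _ => this j]; simp
  · obtain ⟨j, hj⟩ : ∃ j, ¬ (j ∈ A ↔ j ∈ A') := by
      by_contra h2; push Not at h2; exact h (Finset.ext h2)
    refine Finset.prod_eq_zero (Finset.mem_univ j) ?_
    by_cases h1 : j ∈ A <;> by_cases h2 : j ∈ A' <;> simp_all [mcb]

lemma mcchi_dual (x y : mcQ N) : ∑ A, mcchi A x * mcchi A y = if x = y then 2 ^ N else 0 := by
  have : ∑ A, mcchi A x * mcchi A y = ∏ j, (1 + mcb (x j) * mcb (y j)) := by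
    rw [Finset.prod_one_add]
    simp [mcchi, Finset.prod_mul_distrib]
  rw [this]
  split_ifs with h
  · subst h
    simp [mcb_sq]; norm_num
  · obtain ⟨j, hj⟩ := Function.ne_iff.1 h
    refine Finset.prod_eq_zero (Finset.mem_univ j) ?_
    revert hj
    cases x j <;> cases y j <;> simp [mcb]

noncomputable def mccoef (A : Finset (Fin N)) : mcY X N →L[ℝ] X :=
  ((2:ℝ) ^ N)⁻¹ • ∑ y, mcchi A y • PiLp.proj 2 (fun _ : mcQ N => X) y

noncomputable def mcemb (A : Finset (Fin N)) : X →L[ℝ] mcY X N :=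
  ((PiLp.continuousLinearEquiv 2 ℝ (fun _ : mcQ N => X)).symm : (mcQ N → X) →L[ℝ] mcY X N) ∘L
    ContinuousLinearMap.pi (fun x => mcchi A x • ContinuousLinearMap.id ℝ X)

lemma mccoef_apply (A : Finset (Fin N)) (f : mcY X N) :
    mccoef A f = ((2:ℝ) ^ N)⁻¹ • ∑ y, mcchi A y • f y := by
  simp [mccoef]

lemma mcemb_apply (A : Finset (Fin N)) (v : X) (x : mcQ N) : mcemb A v x = mcchi A x • v := by
  simp [mcemb]

lemma mccoef_emb (A A' : Finset (Fin N)) (v : X) : mccoef A (mcemb A' v) = if A = A' then v else 0 := by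
  rw [mccoef_apply]
  simp only [mcemb_apply, smul_smul, ← Finset.sum_smul, mcchi_orth]
  split_ifs <;> simp

noncomputable def mcW (A : Finset (Fin N)) : mcY X N →L[ℝ] mcY X N := mcemb A ∘L mccoef A

lemma mcW_mul (A A' : Finset (Fin N)) : (mcW A * mcW A' : mcY X N →L[ℝ] mcY X N) = if A = A' then mcW A else 0 := by
  ext1 f
  change mcemb A (mccoef A (mcemb A' (mccoef A' f))) = _
  rw [mccoef_emb]
  split_ifs with h
  · subst h; rfl
  · simp

lemma mcW_sum : (∑ A, mcW A : mcY X N →L[ℝ] mcY X N) = 1 := by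
  ext f x
  simp only [sum_apply, WithLp.ofLp_sum, Finset.sum_apply]
  have : ∀ A : Finset (Fin N), (mcW A f) x = ((2:ℝ) ^ N)⁻¹ • ∑ y, (mcchi A x * mcchi A y) • f y := by
    intro A
    change mcemb A (mccoef A f) x = _
    rw [mcemb_apply, mccoef_apply, smul_comm, Finset.smul_sum]
    simp only [smul_smul]
  simp only [this]
  rw [← Finset.smul_sum, Finset.sum_comm]
  simp only [← Finset.sum_smul, mcchi_dual]
  simp

noncomputable def mcAlg {ι : Type*} [Fintype ι] [DecidableEq ι] {B : Type*} [Ring B] [Algebra ℝ B] (W : ι → B)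
    (h1 : ∑ A, W A = 1) (h2 : ∀ A A', W A * W A' = if A = A' then W A else 0) : (ι → ℝ) →ₐ[ℝ] B :=
  AlgHom.ofLinearMap
    { toFun := fun F => ∑ A, F A • W A
      map_add' := fun F G => by simp [add_smul, Finset.sum_add_distrib]
      map_smul' := fun c F => by simp [Finset.smul_sum, smul_smul] }
    (by simp [h1])
    (by
      intro F G
      simp only [LinearMap.coe_mk, AddHom.coe_mk, Finset.sum_mul, Finset.mul_sum, smul_mul_smul_comm, h2, Pi.mul_apply]
      simp)

noncomputable def mcPhi (X : Type*) (N : ℕ) [NormedAddCommGroup X] [NormedSpace ℝ X] :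
    (Finset (Fin N) → ℝ) →ₐ[ℝ] (mcY X N →L[ℝ] mcY X N) := mcAlg mcW mcW_sum mcW_mul

lemma mcPhi_apply (F : Finset (Fin N) → ℝ) (f : mcY X N) (x : mcQ N) :
    mcPhi X N F f x = ∑ A, (F A * mcchi A x) • mccoef A f := by
  have : mcPhi X N F = ∑ A, F A • mcW A := rfl
  rw [this]
  simp only [sum_apply, WithLp.ofLp_sum, Finset.sum_apply, smul_apply, PiLp.smul_apply]
  refine Finset.sum_congr rfl fun A _ => ?_
  change F A • mcemb A (mccoef A f) x = _
  rw [mcemb_apply, smul_smul]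

def mcflip (j : Fin N) (x : mcQ N) : mcQ N := Function.update x j (!x j)

lemma mcflip_inv (j : Fin N) : Function.Involutive (mcflip j) := by
  intro x; simp [mcflip]

def mcs (j : Fin N) (A : Finset (Fin N)) : ℝ := if j ∈ A then -1 else 1

lemma mcchi_flip (j : Fin N) (A : Finset (Fin N)) (x : mcQ N) : mcchi A (mcflip j x) = mcs j A * mcchi A x := by
  rw [mcs, mcchi, mcchi]
  split_ifs with h
  · rw [← Finset.mul_prod_erase _ _ h, ← Finset.mul_prod_erase _ (fun i => mcb (x i)) h]
    rw [Finset.prod_congr rfl (g := fun i => mcb (x i))]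
    · simp [mcflip, mcb_not]
    · intro i hi
      simp [mcflip, Finset.ne_of_mem_erase hi]
  · rw [one_mul]
    refine Finset.prod_congr rfl fun i hi => ?_
    have : i ≠ j := by rintro rfl; exact h hi
    simp [mcflip, this]

lemma mcPhi_flip (j : Fin N) (f : mcY X N) (x : mcQ N) : mcPhi X N (mcs j) f x = f (mcflip j x) := by
  have h : f (mcflip j x) = mcPhi X N 1 f (mcflip j x) := by rw [map_one]; rfl
  rw [h, mcPhi_apply, mcPhi_apply]
  simp [mcchi_flip]

lemma mcPhi_flip_norm (j : Fin N) : ‖mcPhi X N (mcs j)‖ ≤ 1 := by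
  refine ContinuousLinearMap.opNorm_le_bound _ zero_le_one fun f => ?_
  rw [one_mul, PiLp.norm_eq_of_L2, PiLp.norm_eq_of_L2]
  refine le_of_eq (congrArg _ ?_)
  simp only [mcPhi_flip]
  exact Equiv.sum_comp (mcflip_inv j).toPerm (fun x => ‖f x‖ ^ 2)

def mcind (D A : Finset (Fin N)) : ℝ := if Disjoint D A then 1 else 0

lemma mcind_sq (D : Finset (Fin N)) : mcind D * mcind D = mcind D := by
  funext A; simp [mcind]

lemma mcPhi_ind (D : Finset (Fin N)) : ‖mcPhi X N (mcind D)‖ ≤ 1 := by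
  have h1 : ‖mcPhi X N 1‖ ≤ 1 := by rw [map_one]; exact ContinuousLinearMap.norm_id_le
  induction D using Finset.induction_on with
  | empty =>
    have : (mcind ∅ : Finset (Fin N) → ℝ) = 1 := by funext A; simp [mcind]
    rw [this]; exact h1
  | insert j D hj ih =>
    have : (mcind (insert j D) : Finset (Fin N) → ℝ) = ((1/2:ℝ) • (1 + mcs j)) * mcind D := by
      funext A
      by_cases h : j ∈ A <;> simp [mcind, mcs, h]
      norm_num
    rw [this, map_mul, map_smul, map_add]
    refine (norm_mul_le _ _).trans ?_
    have h2 := norm_add_le (mcPhi X N 1) (mcPhi X N (mcs j))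
    have h3 := mcPhi_flip_norm (X := X) j
    refine mul_le_one₀ ?_ (norm_nonneg _) ih
    rw [norm_smul, Real.norm_eq_abs, abs_of_pos (by norm_num)]; linarith

noncomputable def mcwt (N : ℕ) (w : ℝ) (D : Finset (Fin N)) : ℝ := w ^ (N - D.card) * (1 - w) ^ D.card

lemma mcwt_sum (w : ℝ) : ∑ D, mcwt N w D = 1 := by
  have := Fintype.sum_pow_mul_eq_add_pow (Fin N) (1 - w) w
  simp only [Fintype.card_fin, sub_add_cancel, one_pow] at this
  rw [← this]
  exact Finset.sum_congr rfl fun D _ => mul_comm _ _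

lemma mcwt_ind (w : ℝ) (A : Finset (Fin N)) : ∑ D, mcwt N w D * mcind D A = w ^ A.card := by
  have h : ∏ j : Fin N, ((if j ∈ A then 0 else (1 - w)) + w) = w ^ A.card := by
    rw [← Finset.prod_const]
    rw [← Finset.prod_subset (Finset.subset_univ A)]
    · exact Finset.prod_congr rfl fun j hj => by simp [hj]
    · intro j _ hj; simp [hj]
  rw [← h, Finset.prod_add, ← Finset.powerset_univ]
  refine Finset.sum_congr rfl fun D _ => ?_
  rw [Finset.prod_const, mcwt, mcind, Finset.card_sdiff_of_subset (Finset.subset_univ _), Finset.card_univ, Fintype.card_fin]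
  split_ifs with hD
  · rw [Finset.prod_congr rfl (g := fun _ => 1 - w)]
    · simp; ring
    · intro j hj
      simp [Finset.disjoint_left.1 hD hj]
  · obtain ⟨j, hj, hj'⟩ := Finset.not_disjoint_iff.1 hD
    rw [Finset.prod_eq_zero hj (by simp [hj'])]; simp

lemma mcwt_nonneg {w : ℝ} (h0 : 0 ≤ w) (h1 : w ≤ 1) (D : Finset (Fin N)) : 0 ≤ mcwt N w D := by
  have : 0 ≤ 1 - w := by linarith
  unfold mcwt; positivity

lemma mcPhi_pow {w : ℝ} (h0 : 0 ≤ w) (h1 : w ≤ 1) : ‖mcPhi X N fun A => w ^ A.card‖ ≤ 1 := by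
  have : (fun A : Finset (Fin N) => w ^ A.card) = ∑ D, mcwt N w D • mcind D := by
    funext A; simp [← mcwt_ind w A]
  rw [this, map_sum, ← mcwt_sum (N := N) w]
  refine norm_sum_le_of_le _ fun D _ => ?_
  rw [map_smul, norm_smul, Real.norm_eq_abs, abs_of_nonneg (mcwt_nonneg h0 h1 D)]
  exact mul_le_of_le_one_right (mcwt_nonneg h0 h1 D) (mcPhi_ind D)

lemma mcPhi_rho {w : ℝ} (h0 : 0 ≤ w) (h1 : w ≤ 1) (n : ℕ) (ρ : ℝ)
    (hρ : ∀ D : Fin n → Finset (Fin N), ‖mcPhi X N (∏ k, (1 - mcind (D k)))‖ ≤ ρ) :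
    ‖mcPhi X N fun A => (1 - w ^ A.card) ^ n‖ ≤ ρ := by
  have : (fun A : Finset (Fin N) => (1 - w ^ A.card) ^ n) =
      ∑ D : Fin n → Finset (Fin N), (∏ k, mcwt N w (D k)) • ∏ k, (1 - mcind (D k)) := by
    funext A
    have : 1 - w ^ A.card = ∑ D, mcwt N w D * (1 - mcind D A) := by
      simp only [mul_sub, Finset.sum_sub_distrib, mcwt_ind, mul_one, mcwt_sum]
    rw [this, Fintype.sum_pow]
    simp [Finset.sum_apply, Finset.prod_apply, Finset.prod_mul_distrib]
  rw [this, map_sum]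
  have hs : ∑ D : Fin n → Finset (Fin N), (∏ k, mcwt N w (D k)) = 1 := by
    rw [← Fintype.sum_pow, mcwt_sum, one_pow]
  have : ρ = ∑ D : Fin n → Finset (Fin N), (∏ k, mcwt N w (D k)) * ρ := by
    rw [← Finset.sum_mul, hs, one_mul]
  rw [this]
  refine norm_sum_le_of_le _ fun D _ => ?_
  have hn : 0 ≤ ∏ k, mcwt N w (D k) := Finset.prod_nonneg fun k _ => mcwt_nonneg h0 h1 _
  rw [map_smul, norm_smul, Real.norm_eq_abs, abs_of_nonneg hn]
  exact mul_le_mul_of_nonneg_left (hρ D) hn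

/-- Rademacher projection bound -/
lemma mcPhi_proj [CompleteSpace X] (n : ℕ) (hn : 0 < n) (c : ℝ) (hc : c < n)
    (hB : ∀ y : Fin n → mcY X N, (∀ k, ‖y k‖ ≤ 1) → ∃ V : Finset (Fin n), ‖∑ k, mcSg V k • y k‖ ≤ c) :
    ‖mcPhi X N fun A => if A.card = 1 then (1:ℝ) else 0‖ ≤ mcKK n (2 ^ n - (n - c) / 2 ^ n) := by
  have e : ∀ (t : ℝ) (A : Finset (Fin N)), Real.exp (-(t * A.card)) = Real.exp (-t) ^ A.card := by
    intro t A; rw [← Real.exp_nat_mul]; congr 1; ring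
  refine mc_projection (mcPhi X N) (fun A => A.card) n hn _ ?_ ?_ ?_
  · have : 0 < ((n:ℝ) - c) / 2 ^ n := div_pos (by linarith) (by positivity)
    linarith
  · intro t ht
    simp only [e]
    exact mcPhi_pow (Real.exp_pos _).le (Real.exp_le_one_iff.2 (by linarith))
  · intro t ht
    simp only [e]
    refine mcPhi_rho (Real.exp_pos _).le (Real.exp_le_one_iff.2 (by linarith)) n _ fun D => ?_
    exact mc_g3 _ n c hc.le hB (fun k => mcind (D k)) (fun k => mcPhi_ind _) (fun k => mcind_sq _)

end mcE

open MeasureTheory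
set_option linter.unusedSectionVars false

section mcF
variable {X : Type*} [NormedAddCommGroup X] [NormedSpace ℝ X]

lemma mc_f1 (n : ℕ) (hn : 0 < n) (p : ℝ) (hp : 1 < p) (a : Fin n → ℝ) (ha : ∀ k, 0 ≤ a k) :
    (∑ k, a k) * (∑ k, a k ^ p) ^ (1 / p) ≤ (n:ℝ) ^ (max (1 / p) (1 / 2)) * ∑ k, a k ^ 2 := by
  set A2 := ∑ k, a k ^ 2 with hA2
  have hA20 : 0 ≤ A2 := Finset.sum_nonneg fun k _ => sq_nonneg _
  set A := Real.sqrt A2 with hA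
  have hA0 : 0 ≤ A := Real.sqrt_nonneg _
  have hAA : A * A = A2 := Real.mul_self_sqrt hA20
  have hn1 : (1:ℝ) ≤ n := by exact_mod_cast hn
  have h1 : ∑ k, a k ≤ (n:ℝ) ^ (1 / 2 : ℝ) * A := by
    rw [← Real.sqrt_eq_rpow, hA, ← Real.sqrt_mul (by positivity)]
    refine Real.le_sqrt_of_sq_le ?_
    have := sq_sum_le_card_mul_sum_sq (s := Finset.univ) (f := a)
    simpa using this
  have h2 : (∑ k, a k ^ p) ^ (1 / p) ≤ (n:ℝ) ^ (max (1 / p) (1 / 2) - 1 / 2) * A := by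
    have hs : 0 ≤ ∑ k, a k ^ p := Finset.sum_nonneg fun k _ => Real.rpow_nonneg (ha k) _
    rcases le_total 2 p with h | h
    · have hm : max (1 / p) (1 / 2 : ℝ) = 1 / 2 := max_eq_right (by gcongr)
      rw [hm, sub_self, Real.rpow_zero, one_mul]
      have hle : ∑ k, a k ^ p ≤ A ^ p := by
        have : ∀ k ∈ Finset.univ, a k ^ p ≤ a k ^ 2 * A ^ (p - 2) := by
          intro k _
          have hk : a k ≤ A := by
            refine Real.le_sqrt_of_sq_le ?_
            exact Finset.single_le_sum (f := fun k => a k ^ 2) (fun k _ => sq_nonneg _) (Finset.mem_univ k)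
          have : a k ^ p = a k ^ 2 * a k ^ (p - 2) := by
            rw [← Real.rpow_natCast, ← Real.rpow_add_of_nonneg (ha k) (by norm_num) (by linarith)]
            congr 1; push_cast; ring
          rw [this]
          have : a k ^ (p - 2) ≤ A ^ (p - 2) := Real.rpow_le_rpow (ha k) hk (by linarith)
          gcongr
        refine (Finset.sum_le_sum this).trans ?_
        rw [← Finset.sum_mul, ← hA2, ← hAA, ← sq, ← Real.rpow_natCast, ← Real.rpow_add_of_nonneg hA0 (by norm_num) (by linarith)]
        apply le_of_eq; congr 1; push_cast; ring
      calc _ ≤ (A ^ p) ^ (1 / p) := Real.rpow_le_rpow hs hle (by positivity)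
        _ = A := by rw [← Real.rpow_mul hA0, mul_one_div_cancel (by linarith), Real.rpow_one]
    · have hm : max (1 / p) (1 / 2 : ℝ) = 1 / p := max_eq_left (by gcongr)
      rw [hm]
      have := Real.rpow_sum_le_const_mul_sum_rpow Finset.univ (fun k => a k ^ p) (p := 2 / p)
        (by rw [le_div_iff₀ (by linarith)]; linarith)
      have e : ∀ k, |a k ^ p| ^ (2 / p) = a k ^ 2 := by
        intro k
        rw [abs_of_nonneg (Real.rpow_nonneg (ha k) _), ← Real.rpow_mul (ha k)]
        rw [mul_div_cancel₀ _ (by linarith)]; norm_cast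
      simp only [e, ← hA2, Finset.card_univ, Fintype.card_fin] at this
      simp only [abs_of_nonneg (Real.rpow_nonneg (ha _) _)] at this
      have h3 : ((∑ k, a k ^ p) ^ (1 / p)) ≤ Real.sqrt ((n:ℝ) ^ (2 / p - 1) * A2) := by
        refine Real.le_sqrt_of_sq_le ?_
        rw [← Real.rpow_natCast, ← Real.rpow_mul hs]
        have : 1 / p * ((2:ℕ):ℝ) = 2 / p := by push_cast; ring
        rw [this]; assumption
      refine h3.trans (le_of_eq ?_)
      rw [Real.sqrt_mul (by positivity), Real.sqrt_eq_rpow, ← Real.rpow_mul (by positivity)]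
      congr 2; ring
  calc _ ≤ ((n:ℝ) ^ (1 / 2 : ℝ) * A) * ((n:ℝ) ^ (max (1 / p) (1 / 2) - 1 / 2) * A) := by
        have := Real.rpow_nonneg (Finset.sum_nonneg fun k (_ : k ∈ Finset.univ) => Real.rpow_nonneg (ha k) p) (1 / p)
        gcongr
    _ = ((n:ℝ) ^ (1 / 2 : ℝ) * (n:ℝ) ^ (max (1 / p) (1 / 2) - 1 / 2)) * A2 := by rw [← hAA]; ring
    _ = _ := by
      rw [← Real.rpow_add (by linarith)]; congr 2; ring

lemma mc_f2 (p : ℝ) (hp : 1 < p) (h : RademacherType X p) : ∃ n : ℕ, 0 < n ∧ ∃ β : ℝ, 0 ≤ β ∧ β < n ∧ 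
    ∀ x : Fin n → X, ((2:ℝ) ^ n)⁻¹ * ∑ s : Fin n → Bool, ‖∑ k, mcb (s k) • x k‖ ^ 2 ≤ β * ∑ k, ‖x k‖ ^ 2 := by
  obtain ⟨T, hT, hx⟩ := h
  set γ := max (1 / p) (1 / 2 : ℝ) with hγ
  have hγ1 : γ < 1 := max_lt (by rw [div_lt_one (by linarith)]; exact hp) (by norm_num)
  have ht : Filter.Tendsto (fun n : ℕ => (n:ℝ) ^ (1 - γ)) Filter.atTop Filter.atTop :=
    (tendsto_rpow_atTop (by linarith)).comp tendsto_natCast_atTop_atTop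
  obtain ⟨n, hn1, hn2⟩ := ((ht.eventually_gt_atTop T).and (Filter.eventually_gt_atTop 0)).exists
  have hn0 : (0:ℝ) < n := by exact_mod_cast hn2
  refine ⟨n, hn2, T * (n:ℝ) ^ γ, by positivity, ?_, fun x => ?_⟩
  · calc T * (n:ℝ) ^ γ < (n:ℝ) ^ (1 - γ) * (n:ℝ) ^ γ := by gcongr
      _ = n := by rw [← Real.rpow_add hn0]; simp
  · have h1 := hx n x
    have h2 := mc_f1 n hn2 p hp (fun k => ‖x k‖) (fun k => norm_nonneg _)
    have h3 : ∀ s : Fin n → Bool, ‖∑ k, mcb (s k) • x k‖ ^ 2 ≤ (∑ k, ‖x k‖) * ‖∑ k, mcb (s k) • x k‖ := by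
      intro s
      rw [sq]
      refine mul_le_mul_of_nonneg_right ?_ (norm_nonneg _)
      refine norm_sum_le_of_le _ fun k _ => ?_
      rw [norm_smul]
      have : ‖mcb (s k)‖ = 1 := by cases s k <;> simp [mcb]
      rw [this, one_mul]
    calc _ ≤ ((2:ℝ) ^ n)⁻¹ * ∑ s : Fin n → Bool, (∑ k, ‖x k‖) * ‖∑ k, mcb (s k) • x k‖ := by
          gcongr with s; exact h3 s
      _ = (∑ k, ‖x k‖) * (((2:ℝ) ^ n)⁻¹ * ∑ s : Fin n → Bool, ‖∑ k, mcb (s k) • x k‖) := by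
          rw [← Finset.mul_sum]; ring
      _ ≤ (∑ k, ‖x k‖) * (T * (∑ i : Fin n, ‖x i‖ ^ p) ^ (1 / p)) := by
          exact mul_le_mul_of_nonneg_left h1 (Finset.sum_nonneg fun _ _ => norm_nonneg _)
      _ = T * ((∑ k, ‖x k‖) * (∑ i : Fin n, ‖x i‖ ^ p) ^ (1 / p)) := by ring
      _ ≤ T * ((n:ℝ) ^ γ * ∑ k, ‖x k‖ ^ 2) := by gcongr
      _ = _ := by ring

lemma mc_f3 (p : ℝ) (hp : 1 < p) (h : RademacherType X p) : ∃ n : ℕ, 0 < n ∧ ∃ c : ℝ, c < n ∧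
    ∀ N : ℕ, ∀ y : Fin n → mcY X N, (∀ k, ‖y k‖ ≤ 1) → ∃ V : Finset (Fin n), ‖∑ k, mcSg V k • y k‖ ≤ c := by
  obtain ⟨n, hn, β, hβ0, hβ, hx⟩ := mc_f2 p hp h
  have hn0 : (0:ℝ) < n := by exact_mod_cast hn
  refine ⟨n, hn, Real.sqrt (β * n), ?_, fun N y hy => ?_⟩
  · rw [Real.sqrt_lt' hn0, sq]; gcongr
  · have h2 : ((2:ℝ) ^ n)⁻¹ * ∑ s : Fin n → Bool, ‖∑ k, mcb (s k) • y k‖ ^ 2 ≤ β * n := by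
      simp only [PiLp.norm_sq_eq_of_L2]
      rw [Finset.sum_comm, Finset.mul_sum]
      calc _ ≤ ∑ z : mcQ N, β * ∑ k, ‖y k z‖ ^ 2 := by
            refine Finset.sum_le_sum fun z _ => ?_
            have := hx (fun k => y k z)
            simpa [WithLp.ofLp_sum] using this
        _ = β * ∑ k, ‖y k‖ ^ 2 := by
            rw [← Finset.mul_sum, Finset.sum_comm]
            simp only [PiLp.norm_sq_eq_of_L2]
        _ ≤ β * ∑ k : Fin n, 1 := by
            gcongr with k
            have := hy k
            exact pow_le_one₀ (norm_nonneg _) this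
        _ = _ := by simp
    have h3 : ∑ s : Fin n → Bool, ‖∑ k, mcb (s k) • y k‖ ^ 2 ≤ ∑ s : Fin n → Bool, β * n := by
      rw [inv_mul_le_iff₀ (by positivity)] at h2
      simpa using h2
    obtain ⟨s, -, hs⟩ := Finset.exists_le_of_sum_le (Finset.univ_nonempty) h3
    refine ⟨Finset.univ.filter (fun k => s k = true), Real.le_sqrt_of_sq_le ?_⟩
    have e : ∀ k, mcSg (Finset.univ.filter (fun k => s k = true)) k = mcb (s k) := by
      intro k; simp [mcSg, mcb]
    simp only [e]; exact hs

end mcF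

open MeasureTheory
set_option linter.unusedSectionVars false

section mcH
variable {X : Type*} [NormedAddCommGroup X] [NormedSpace ℝ X]

lemma mc_jensen {ι : Type*} [Fintype ι] [Nonempty ι] (p : ℝ) (hp : 1 ≤ p) (z : ι → ℝ) (hz : ∀ i, 0 ≤ z i) :
    ((Fintype.card ι : ℝ)⁻¹ * ∑ i, z i) ^ p ≤ (Fintype.card ι : ℝ)⁻¹ * ∑ i, z i ^ p := by
  have := Real.rpow_arith_mean_le_arith_mean_rpow Finset.univ (fun _ : ι => (Fintype.card ι : ℝ)⁻¹) z
    (fun _ _ => by positivity) (by simp) (fun i _ => hz i) hp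
  simpa [Finset.mul_sum] using this

lemma mcPhi_one {N : ℕ} (f : mcY X N) (x : mcQ N) :
    mcPhi X N (fun A => if A.card = 1 then (1:ℝ) else 0) f x = ∑ j, mcb (x j) • mccoef {j} f := by
  rw [mcPhi_apply]
  have : ∀ A : Finset (Fin N), ((if A.card = 1 then (1:ℝ) else 0) * mcchi A x) • mccoef A f =
      if A ∈ Finset.powersetCard 1 Finset.univ then mcchi A x • mccoef A f else 0 := by
    intro A
    simp only [Finset.mem_powersetCard_univ]
    split_ifs <;> simp
  simp only [this]
  rw [Finset.sum_ite_mem, Finset.univ_inter, Finset.powersetCard_one, Finset.sum_map]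
  simp [mcchi]

lemma mc_key [CompleteSpace X] (p q : ℝ) (hp : 1 < p) (hq : 2 ≤ q)
    (htype : RademacherType X p) (hcotype : RademacherCotype X q) : ∃ K : ℝ, 0 < K ∧ ∀ (N : ℕ) (g : mcQ N → X),
    ∑ j, ‖((2:ℝ) ^ N)⁻¹ • ∑ ε, mcb (ε j) • g ε‖ ^ q ≤ K ^ q * (((2:ℝ) ^ N)⁻¹ * ∑ ε, ‖g ε‖ ^ q) := by
  obtain ⟨n, hn, c, hc, hB⟩ := mc_f3 p hp htype
  obtain ⟨C, hC, hcot⟩ := hcotype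
  set K := mcKK n (2 ^ n - (n - c) / 2 ^ n) with hK
  have hK0 : 0 < K := mcKK_pos _ _
  refine ⟨C * K, by positivity, fun N g => ?_⟩
  have hq0 : 0 < q := by linarith
  have hR := mcPhi_proj (X := X) (N := N) n hn c hc (hB N)
  set f : mcY X N := WithLp.toLp 2 g with hf
  set R := mcPhi X N fun A => if A.card = 1 then (1:ℝ) else 0 with hRdef
  have hcoef : ∀ j, mccoef {j} f = ((2:ℝ) ^ N)⁻¹ • ∑ ε, mcb (ε j) • g ε := by
    intro j; rw [mccoef_apply]; simp [mcchi, hf]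
  simp only [← hcoef]
  have h1 := hcot N (fun j => mccoef {j} f)
  have hcard : ((Fintype.card (mcQ N) : ℕ) : ℝ) = 2 ^ N := by simp
  have e1 : ∀ ε : Fin N → Bool, ∑ i : Fin N, (if ε i then (1 : ℝ) else -1) • mccoef {i} f = R f ε := by
    intro ε; rw [mcPhi_one]; rfl
  simp only [e1] at h1
  set a := ((2:ℝ) ^ N)⁻¹ * ∑ ε : Fin N → Bool, ‖R f ε‖ with ha
  have ha0 : 0 ≤ a := by positivity
  have h2 : a ^ (2:ℝ) ≤ K ^ (2:ℝ) * (((2:ℝ) ^ N)⁻¹ * ∑ ε, ‖g ε‖ ^ (2:ℝ)) := by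
    have j1 := mc_jensen (ι := mcQ N) 2 (by norm_num) (fun ε => ‖R f ε‖) (fun _ => norm_nonneg _)
    rw [hcard] at j1
    have j2 : ‖R f‖ ^ 2 ≤ K ^ 2 * ‖f‖ ^ 2 := by
      rw [← mul_pow]
      exact pow_le_pow_left₀ (norm_nonneg _) (R.le_of_opNorm_le hR f) 2
    rw [PiLp.norm_sq_eq_of_L2, PiLp.norm_sq_eq_of_L2] at j2
    refine j1.trans ?_
    norm_cast
    rw [mul_left_comm]
    have : (0:ℝ) ≤ ((2:ℝ) ^ N)⁻¹ := by positivity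
    push_cast
    exact mul_le_mul_of_nonneg_left j2 this
  have h3 := mc_jensen (ι := mcQ N) (q / 2) (by linarith) (fun ε => ‖g ε‖ ^ (2:ℝ)) (fun _ => by positivity)
  rw [hcard] at h3
  simp only [← Real.rpow_mul (norm_nonneg _)] at h3
  have e2 : 2 * (q / 2) = q := by ring
  rw [e2] at h3
  have hs : 0 ≤ ∑ j, ‖mccoef {j} f‖ ^ q := by positivity
  calc ∑ j, ‖mccoef {j} f‖ ^ q = ((∑ j, ‖mccoef {j} f‖ ^ q) ^ (1 / q)) ^ q := by
        rw [← Real.rpow_mul hs, one_div_mul_cancel hq0.ne', Real.rpow_one]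
    _ ≤ (C * a) ^ q := Real.rpow_le_rpow (by positivity) h1 hq0.le
    _ = C ^ q * (a ^ (2:ℝ)) ^ (q / 2) := by
        rw [Real.mul_rpow hC.le ha0, ← Real.rpow_mul ha0, e2]
    _ ≤ C ^ q * (K ^ (2:ℝ) * (((2:ℝ) ^ N)⁻¹ * ∑ ε, ‖g ε‖ ^ (2:ℝ))) ^ (q / 2) := by gcongr
    _ = C ^ q * (K ^ q * (((2:ℝ) ^ N)⁻¹ * ∑ ε, ‖g ε‖ ^ (2:ℝ)) ^ (q / 2)) := by
        rw [Real.mul_rpow (by positivity) (by positivity), ← Real.rpow_mul hK0.le, e2]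
    _ ≤ C ^ q * (K ^ q * (((2:ℝ) ^ N)⁻¹ * ∑ ε, ‖g ε‖ ^ q)) := by gcongr
    _ = _ := by rw [Real.mul_rpow hC.le hK0.le]; ring

end mcH

open MeasureTheory
set_option linter.unusedSectionVars false

section mcI
variable {X : Type*} [NormedAddCommGroup X] [NormedSpace ℝ X]

abbrev mcT (n : ℕ) := Fin n → ({-1, 0, 1} : Finset ℤ)

lemma mcT_card (n : ℕ) : ((Fintype.card (mcT n) : ℕ) : ℝ) = 3 ^ n := by
  rw [Fintype.card_fun, Fintype.card_coe, Fintype.card_fin]; norm_cast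

def mcneg (d : ({-1, 0, 1} : Finset ℤ)) : ({-1, 0, 1} : Finset ℤ) := ⟨-d.1, by
  have := d.2; simp only [Finset.mem_insert, Finset.mem_singleton] at this ⊢; omega⟩

lemma mcneg_inv : Function.Involutive mcneg := by intro d; simp [mcneg]

def mcact {n : ℕ} (ε : mcQ n) (δ : mcT n) : mcT n := fun i => if ε i then δ i else mcneg (δ i)

lemma mcact_inv {n : ℕ} (ε : mcQ n) : Function.Involutive (mcact ε) := by
  intro δ; funext i
  unfold mcact
  by_cases h : ε i <;> simp [h, mcneg_inv _]

lemma mcact_val {n : ℕ} (ε : mcQ n) (δ : mcT n) (i : Fin n) :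
    (((mcact ε δ i : ℤ)) : ℝ) = ((δ i : ℤ) : ℝ) * mcb (ε i) := by
  unfold mcact
  by_cases h : ε i <;> simp [h, mcneg, mcb]

lemma mcact_sum {n : ℕ} {M : Type*} [AddCommMonoid M] (ε : mcQ n) (φ : mcT n → M) :
    ∑ δ, φ (mcact ε δ) = ∑ δ, φ δ :=
  Equiv.sum_comp (mcact_inv ε).toPerm φ

lemma mc_key3 [CompleteSpace X] (p q : ℝ) (hp : 1 < p) (hq : 2 ≤ q)
    (htype : RademacherType X p) (hcotype : RademacherCotype X q) : ∃ K : ℝ, 0 < K ∧ ∀ (n : ℕ) (G : mcT n → X),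
    ∑ j, ‖((3:ℝ) ^ n)⁻¹ • ∑ δ : mcT n, ((δ j : ℤ) : ℝ) • G δ‖ ^ q ≤ K ^ q * (((3:ℝ) ^ n)⁻¹ * ∑ δ, ‖G δ‖ ^ q) := by
  obtain ⟨K, hK, h⟩ := mc_key p q hp hq htype hcotype
  refine ⟨K, hK, fun n G => ?_⟩
  have : Nonempty (mcT n) := ⟨fun _ => ⟨0, by simp⟩⟩
  set v : mcT n → Fin n → ℝ := fun δ j => ‖((2:ℝ) ^ n)⁻¹ • ∑ ε : mcQ n, mcb (ε j) • G (mcact ε δ)‖ with hv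
  have h1 : ∀ j, ∑ δ : mcT n, ((δ j : ℤ) : ℝ) • G δ =
      ∑ δ : mcT n, ((δ j : ℤ) : ℝ) • (((2:ℝ) ^ n)⁻¹ • ∑ ε : mcQ n, mcb (ε j) • G (mcact ε δ)) := by
    intro j
    have : ∀ ε : mcQ n, ∑ δ : mcT n, ((δ j : ℤ) : ℝ) • (mcb (ε j) • G (mcact ε δ)) = ∑ δ : mcT n, ((δ j : ℤ) : ℝ) • G δ := by
      intro ε
      rw [← mcact_sum ε (fun δ => ((δ j : ℤ) : ℝ) • G δ)]
      refine Finset.sum_congr rfl fun δ _ => ?_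
      rw [mcact_val, smul_smul]
    simp only [smul_comm _ (((2:ℝ) ^ n)⁻¹), Finset.smul_sum]
    rw [Finset.sum_comm]
    simp only [← Finset.smul_sum, this]
    rw [Finset.sum_const, Finset.card_univ, Fintype.card_fun, ← Nat.cast_smul_eq_nsmul ℝ, smul_smul]
    simp
  have h2 : ∀ j, ‖((3:ℝ) ^ n)⁻¹ • ∑ δ : mcT n, ((δ j : ℤ) : ℝ) • G δ‖ ^ q ≤ ((3:ℝ) ^ n)⁻¹ * ∑ δ, v δ j ^ q := by
    intro j
    have j1 := mc_jensen (ι := mcT n) q (by linarith) (fun δ => v δ j) (fun _ => norm_nonneg _)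
    rw [mcT_card] at j1
    refine le_trans ?_ j1
    refine Real.rpow_le_rpow (norm_nonneg _) ?_ (by linarith)
    rw [norm_smul, Real.norm_eq_abs, abs_of_pos (by positivity), h1]
    refine mul_le_mul_of_nonneg_left ?_ (by positivity)
    refine norm_sum_le_of_le _ fun δ _ => ?_
    rw [norm_smul]
    refine mul_le_of_le_one_left (norm_nonneg _) ?_
    have := (δ j).2
    simp only [Finset.mem_insert, Finset.mem_singleton] at this
    rcases this with h | h | h <;> simp [h]
  calc _ ≤ ∑ j, ((3:ℝ) ^ n)⁻¹ * ∑ δ, v δ j ^ q := Finset.sum_le_sum fun j _ => h2 j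
    _ = ((3:ℝ) ^ n)⁻¹ * ∑ δ, ∑ j, v δ j ^ q := by rw [← Finset.mul_sum, Finset.sum_comm]
    _ ≤ ((3:ℝ) ^ n)⁻¹ * ∑ δ : mcT n, K ^ q * (((2:ℝ) ^ n)⁻¹ * ∑ ε, ‖G (mcact ε δ)‖ ^ q) := by
        gcongr with δ
        exact h n (fun ε => G (mcact ε δ))
    _ = K ^ q * (((3:ℝ) ^ n)⁻¹ * (((2:ℝ) ^ n)⁻¹ * ∑ ε : mcQ n, ∑ δ : mcT n, ‖G (mcact ε δ)‖ ^ q)) := by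
        rw [← Finset.mul_sum, ← Finset.mul_sum, Finset.sum_comm]; ring
    _ = _ := by
        simp only [mcact_sum _ (fun δ => ‖G δ‖ ^ q)]
        simp

end mcI

open MeasureTheory
set_option linter.unusedSectionVars false

section mcJ
variable {X : Type*} [NormedAddCommGroup X] [NormedSpace ℝ X]

def mcd0 : ({-1, 0, 1} : Finset ℤ) := ⟨0, by simp⟩
def mcd1 : ({-1, 0, 1} : Finset ℤ) := ⟨1, by simp⟩
def mcdm : ({-1, 0, 1} : Finset ℤ) := ⟨-1, by simp⟩

lemma mcd_sum {M : Type*} [AddCommMonoid M] (φ : ({-1, 0, 1} : Finset ℤ) → M) :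
    ∑ d, φ d = φ mcdm + (φ mcd0 + φ mcd1) := by
  have : (Finset.univ : Finset ({-1, 0, 1} : Finset ℤ)) = {mcdm, mcd0, mcd1} := by decide
  rw [this, Finset.sum_insert (by decide), Finset.sum_insert (by decide), Finset.sum_singleton]

lemma mc_upd {n : ℕ} {M : Type*} [AddCommMonoid M] (j : Fin n) (φ : mcT n → M) :
    ∑ δ : mcT n, ∑ d, φ (Function.update δ j d) = 3 • ∑ δ, φ δ := by
  have hinv : Function.Involutive (fun z : mcT n × ({-1, 0, 1} : Finset ℤ) => (Function.update z.1 j z.2, z.1 j)) := by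
    rintro ⟨δ, d⟩; simp
  have := Equiv.sum_comp hinv.toPerm (fun z => φ z.1)
  rw [Fintype.sum_prod_type, Fintype.sum_prod_type] at this
  simp only [Function.Involutive.coe_toPerm] at this
  rw [this, Finset.smul_sum]
  refine Finset.sum_congr rfl fun δ _ => ?_
  rw [Finset.sum_const]; rfl

variable {n m : ℕ} [NeZero m]

def mcv (m : ℕ) (δ : mcT n) : Fin n → ZMod m := fun i => ((δ i : ℤ) : ZMod m)
def mce (m : ℕ) (j : Fin n) : Fin n → ZMod m := Pi.single j 1

lemma mcv_upd1 (δ : mcT n) (j : Fin n) : mcv m (Function.update δ j mcd1) = mcv m (Function.update δ j mcd0) + mce m j := by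
  funext i
  by_cases h : i = j
  · subst h; simp [mcv, mce, mcd0, mcd1]
  · simp [mcv, mce, h]

lemma mcv_updm (δ : mcT n) (j : Fin n) : mcv m (Function.update δ j mcdm) = mcv m (Function.update δ j mcd0) - mce m j := by
  funext i
  by_cases h : i = j
  · subst h; simp [mcv, mce, mcd0, mcdm]
  · simp [mcv, mce, h]

noncomputable def mcH (f : (Fin n → ZMod m) → X) (j : Fin n) (x : Fin n → ZMod m) : X :=
  ((3:ℝ) ^ n)⁻¹ • ∑ δ : mcT n, f (x + mcv m (Function.update δ j mcd0))

noncomputable def mcA (f : (Fin n → ZMod m) → X) (j : Fin n) (x : Fin n → ZMod m) : X :=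
  ((3:ℝ) ^ n)⁻¹ • ∑ δ : mcT n, ((δ j : ℤ) : ℝ) • (f (x + mcv m δ) - f x)

noncomputable def mcEn (q : ℝ) (f : (Fin n → ZMod m) → X) : ℝ :=
  ((3:ℝ) ^ n)⁻¹ * ∑ δ : mcT n, ∑ x, ‖f (x + mcv m δ) - f x‖ ^ q

lemma mcA_H (f : (Fin n → ZMod m) → X) (j : Fin n) (x : Fin n → ZMod m) :
    (3:ℝ) • mcA f j x = mcH f j (x + mce m j) - mcH f j (x - mce m j) := by
  have h := mc_upd j (fun δ : mcT n => ((δ j : ℤ) : ℝ) • (f (x + mcv m δ) - f x))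
  rw [← Nat.cast_smul_eq_nsmul ℝ] at h
  rw [mcA, smul_comm]
  have e3 : ((3:ℕ):ℝ) = 3 := by norm_num
  rw [e3] at h
  rw [← h, mcH, mcH, ← smul_sub, ← Finset.sum_sub_distrib]
  congr 1
  refine Finset.sum_congr rfl fun δ _ => ?_
  rw [mcd_sum, mcv_upd1, mcv_updm]
  simp only [Function.update_self, mcd0, mcd1, mcdm]
  have e1 : x + mce m j + mcv m (Function.update δ j ⟨0, by simp⟩) = x + (mcv m (Function.update δ j ⟨0, by simp⟩) + mce m j) := by
    abel
  have e2 : x - mce m j + mcv m (Function.update δ j ⟨0, by simp⟩) = x + (mcv m (Function.update δ j ⟨0, by simp⟩) - mce m j) := by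
    abel
  rw [e1, e2]
  simp

lemma mcH_sub (q : ℝ) (hq : 1 ≤ q) (f : (Fin n → ZMod m) → X) (j : Fin n) :
    ∑ x, ‖mcH f j x - f x‖ ^ q ≤ 3 * mcEn q f := by
  have : Nonempty (mcT n) := ⟨fun _ => ⟨0, by simp⟩⟩
  have h1 : ∀ x, ‖mcH f j x - f x‖ ^ q ≤ ((3:ℝ) ^ n)⁻¹ * (3 * ∑ δ : mcT n, ‖f (x + mcv m δ) - f x‖ ^ q) := by
    intro x
    have j1 := mc_jensen (ι := mcT n) q hq (fun δ => ‖f (x + mcv m (Function.update δ j mcd0)) - f x‖) (fun _ => norm_nonneg _)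
    rw [mcT_card] at j1
    have e : mcH f j x - f x = ((3:ℝ) ^ n)⁻¹ • ∑ δ : mcT n, (f (x + mcv m (Function.update δ j mcd0)) - f x) := by
      rw [Finset.sum_sub_distrib, smul_sub, mcH, Finset.sum_const, Finset.card_univ, ← Nat.cast_smul_eq_nsmul ℝ, mcT_card, smul_smul,
        inv_mul_cancel₀ (by positivity), one_smul]
    have h2 : ‖mcH f j x - f x‖ ≤ ((3:ℝ) ^ n)⁻¹ * ∑ δ : mcT n, ‖f (x + mcv m (Function.update δ j mcd0)) - f x‖ := by
      rw [e, norm_smul, Real.norm_eq_abs, abs_of_pos (by positivity)]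
      gcongr
      exact norm_sum_le _ _
    refine (Real.rpow_le_rpow (norm_nonneg _) h2 (by linarith)).trans (j1.trans ?_)
    have h3 := mc_upd j (fun δ : mcT n => ‖f (x + mcv m δ) - f x‖ ^ q)
    rw [nsmul_eq_mul] at h3
    push_cast at h3
    rw [← h3]
    gcongr with δ
    exact Finset.single_le_sum (f := fun d => ‖f (x + mcv m (Function.update δ j d)) - f x‖ ^ q)
      (fun _ _ => by positivity) (Finset.mem_univ mcd0)
  refine (Finset.sum_le_sum fun x _ => h1 x).trans (le_of_eq ?_)
  rw [← Finset.mul_sum, ← Finset.mul_sum, Finset.sum_comm, mcEn]; ring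

lemma mcH_tel (q : ℝ) (hq : 1 ≤ q) (f : (Fin n → ZMod m) → X) (j : Fin n) (l : ℕ) (hl : 0 < l) :
    ∑ x, ‖mcH f j (x + (2 * l) • mce m j) - mcH f j x‖ ^ q ≤ (l:ℝ) ^ q * (3 ^ q * ∑ x, ‖mcA f j x‖ ^ q) := by
  have hl0 : (0:ℝ) < l := by exact_mod_cast hl
  have h1 : ∀ x, mcH f j (x + (2 * l) • mce m j) - mcH f j x =
      ∑ i ∈ Finset.range l, (3:ℝ) • mcA f j (x + (2 * i + 1) • mce m j) := by
    intro x
    have := Finset.sum_range_sub (fun i : ℕ => mcH f j (x + (2 * i) • mce m j)) l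
    simp only [mul_zero, zero_smul, add_zero] at this
    rw [← this]
    refine Finset.sum_congr rfl fun i _ => ?_
    rw [mcA_H]
    congr 2
    · rw [mul_add, add_smul, add_smul]; simp only [mul_one, two_smul, one_smul]; abel
    · rw [add_smul, one_smul]; abel
  have h2 : ∀ x, ‖mcH f j (x + (2 * l) • mce m j) - mcH f j x‖ ^ q ≤
      (l:ℝ) ^ (q - 1) * ∑ i ∈ Finset.range l, 3 ^ q * ‖mcA f j (x + (2 * i + 1) • mce m j)‖ ^ q := by
    intro x
    have j1 := Real.rpow_sum_le_const_mul_sum_rpow_of_nonneg (Finset.range l)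
      (f := fun i => 3 * ‖mcA f j (x + (2 * i + 1) • mce m j)‖) hq (fun _ _ => by positivity)
    rw [Finset.card_range] at j1
    simp only [Real.mul_rpow (by norm_num : (0:ℝ) ≤ 3) (norm_nonneg _)] at j1
    refine le_trans ?_ j1
    refine Real.rpow_le_rpow (norm_nonneg _) ?_ (by linarith)
    rw [h1]
    refine norm_sum_le_of_le _ fun i _ => ?_
    rw [norm_smul]; simp
  refine (Finset.sum_le_sum fun x _ => h2 x).trans (le_of_eq ?_)
  rw [← Finset.mul_sum, Finset.sum_comm]
  have h3 : ∀ i ∈ Finset.range l, ∑ x, 3 ^ q * ‖mcA f j (x + (2 * i + 1) • mce m j)‖ ^ q = 3 ^ q * ∑ x, ‖mcA f j x‖ ^ q := by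
    intro i _
    rw [← Finset.mul_sum]; congr 1
    exact Equiv.sum_comp (Equiv.addRight ((2 * i + 1) • mce m j)) (fun x => ‖mcA f j x‖ ^ q)
  rw [Finset.sum_congr rfl h3, Finset.sum_const, Finset.card_range, nsmul_eq_mul, ← mul_assoc]
  congr 1
  nth_rw 2 [← Real.rpow_one (l:ℝ)]
  rw [← Real.rpow_add hl0]; congr 1; ring

lemma mc_tri (q : ℝ) (hq : 1 ≤ q) (a b c : X) : ‖a + b + c‖ ^ q ≤ 3 ^ (q - 1) * (‖a‖ ^ q + ‖b‖ ^ q + ‖c‖ ^ q) := by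
  have j1 := Real.rpow_sum_le_const_mul_sum_rpow_of_nonneg (Finset.univ : Finset (Fin 3))
      (f := ![‖a‖, ‖b‖, ‖c‖]) hq (fun i _ => by fin_cases i <;> simp)
  simp [Fin.sum_univ_three] at j1
  exact (Real.rpow_le_rpow (norm_nonneg _) norm_add₃_le (by linarith)).trans j1

lemma mc_torus (q : ℝ) (hq : 1 ≤ q) (K : ℝ) (hK : 0 < K)
    (h : ∀ (G : mcT n → X),
    ∑ j, ‖((3:ℝ) ^ n)⁻¹ • ∑ δ : mcT n, ((δ j : ℤ) : ℝ) • G δ‖ ^ q ≤ K ^ q * (((3:ℝ) ^ n)⁻¹ * ∑ δ, ‖G δ‖ ^ q))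
    (f : (Fin n → ZMod m) → X) (l : ℕ) (hl : 0 < l) :
    ∑ j, ∑ x, ‖f (x + (2 * l) • mce m j) - f x‖ ^ q ≤
      3 ^ (q - 1) * (6 * n + (l:ℝ) ^ q * (3 * K) ^ q) * mcEn q f := by
  have h1 : ∀ j, ∑ x, ‖f (x + (2 * l) • mce m j) - f x‖ ^ q ≤
      3 ^ (q - 1) * (6 * mcEn q f + (l:ℝ) ^ q * (3 ^ q * ∑ x, ‖mcA f j x‖ ^ q)) := by
    intro j
    have e : ∀ x, f (x + (2 * l) • mce m j) - f x = (f (x + (2 * l) • mce m j) - mcH f j (x + (2 * l) • mce m j)) +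
        (mcH f j (x + (2 * l) • mce m j) - mcH f j x) + (mcH f j x - f x) := by intro x; abel
    have t1 := mcH_sub q hq f j
    have t2 := mcH_tel q hq f j l hl
    have t3 : ∑ x, ‖f (x + (2 * l) • mce m j) - mcH f j (x + (2 * l) • mce m j)‖ ^ q = ∑ x, ‖mcH f j x - f x‖ ^ q := by
      simp only [norm_sub_rev (f _)]
      exact Equiv.sum_comp (Equiv.addRight ((2 * l) • mce m j)) (fun x => ‖mcH f j x - f x‖ ^ q)
    calc _ ≤ ∑ x, 3 ^ (q - 1) * (‖f (x + (2 * l) • mce m j) - mcH f j (x + (2 * l) • mce m j)‖ ^ q +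
        ‖mcH f j (x + (2 * l) • mce m j) - mcH f j x‖ ^ q + ‖mcH f j x - f x‖ ^ q) := by
          refine Finset.sum_le_sum fun x _ => ?_
          rw [e]; exact mc_tri q hq _ _ _
      _ = 3 ^ (q - 1) * (∑ x, ‖mcH f j x - f x‖ ^ q + ∑ x, ‖mcH f j (x + (2 * l) • mce m j) - mcH f j x‖ ^ q
          + ∑ x, ‖mcH f j x - f x‖ ^ q) := by
          rw [← Finset.mul_sum, Finset.sum_add_distrib, Finset.sum_add_distrib, t3]
      _ ≤ _ := by
          refine mul_le_mul_of_nonneg_left ?_ (by positivity)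
          linarith
  have h2 : ∑ j, ∑ x, ‖mcA f j x‖ ^ q ≤ K ^ q * mcEn q f := by
    rw [Finset.sum_comm]
    refine (Finset.sum_le_sum fun x _ => h (fun δ => f (x + mcv m δ) - f x)).trans (le_of_eq ?_)
    rw [← Finset.mul_sum, ← Finset.mul_sum, Finset.sum_comm, mcEn]
  calc _ ≤ ∑ j, 3 ^ (q - 1) * (6 * mcEn q f + (l:ℝ) ^ q * (3 ^ q * ∑ x, ‖mcA f j x‖ ^ q)) :=
        Finset.sum_le_sum fun j _ => h1 j
    _ = 3 ^ (q - 1) * (6 * n * mcEn q f + (l:ℝ) ^ q * (3 ^ q * ∑ j, ∑ x, ‖mcA f j x‖ ^ q)) := by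
        simp only [← Finset.mul_sum, Finset.sum_add_distrib]
        rw [Finset.sum_const,
          Finset.card_univ, Fintype.card_fin, nsmul_eq_mul]
        ring
    _ ≤ 3 ^ (q - 1) * (6 * n * mcEn q f + (l:ℝ) ^ q * (3 ^ q * (K ^ q * mcEn q f))) := by gcongr
    _ = _ := by rw [Real.mul_rpow (by norm_num) hK.le]; ring

end mcJ

/-- If a Banach space `X` has Rademacher cotype `q < ∞` and Rademacher type `p > 1`, then the
metric cotype `q` inequality holds with `m ≤ κ n^{1/q}`, where `κ, C` depend only on `X`. -/
theorem metric_cotype_with_sharp_m (X : Type*) [NormedAddCommGroup X] [NormedSpace ℝ X]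
    [CompleteSpace X] (p q : ℝ) (hp : 1 < p) (hq : 2 ≤ q)
    (htype : RademacherType X p) (hcotype : RademacherCotype X q) :
    ∃ κ C : ℝ, 0 < κ ∧ 0 < C ∧ ∀ n : ℕ, 0 < n → ∃ m : ℕ, ∃ hm : m ≠ 0, Even m ∧
      (m : ℝ) ≤ κ * (n : ℝ) ^ (1 / q) ∧
      (haveI : NeZero m := ⟨hm⟩
       ∀ f : (Fin n → ZMod m) → X,
        (∑ j : Fin n, ∑ x : Fin n → ZMod m,
            ‖f (x + fun i => if i = j then ((m / 2 : ℕ) : ZMod m) else 0) - f x‖ ^ q) ≤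
          (C * m) ^ q / 3 ^ n *
            ∑ ε : Fin n → ({-1, 0, 1} : Finset ℤ), ∑ x : Fin n → ZMod m,
              ‖f (x + fun i => ((ε i : ℤ) : ZMod m)) - f x‖ ^ q) := by
  obtain ⟨K, hK, h⟩ := mc_key3 p q hp hq htype hcotype
  have hq0 : 0 < q := by linarith
  refine ⟨8, 3 * (6 + 3 * K), by norm_num, by positivity, fun n hn => ?_⟩
  have hn1 : (1:ℝ) ≤ n := by exact_mod_cast hn
  have hr1 : (1:ℝ) ≤ (n:ℝ) ^ (1 / q) := Real.one_le_rpow hn1 (by positivity)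
  set l := ⌈(n:ℝ) ^ (1 / q)⌉₊ with hl
  have hl1 : (n:ℝ) ^ (1 / q) ≤ l := Nat.le_ceil _
  have hl2 : (l:ℝ) < (n:ℝ) ^ (1 / q) + 1 := Nat.ceil_lt_add_one (by positivity)
  have hl0 : 0 < l := Nat.ceil_pos.2 (by linarith)
  have hlR : (0:ℝ) < l := by exact_mod_cast hl0
  refine ⟨4 * l, by omega, ⟨2 * l, by ring⟩, by push_cast; linarith, ?_⟩
  have : NeZero (4 * l) := ⟨by omega⟩
  intro f
  have ht := mc_torus q (by linarith) K hK (h n) f l hl0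
  have e1 : ∀ j : Fin n, (fun i => if i = j then ((4 * l / 2 : ℕ) : ZMod (4 * l)) else 0) = (2 * l) • mce (4 * l) j := by
    intro j
    have : 4 * l / 2 = 2 * l := by omega
    rw [this]
    funext i
    by_cases hi : i = j
    · subst hi; simp [mce]
    · simp [mce, hi]
  simp only [e1]
  refine ht.trans ?_
  have hE : 0 ≤ mcEn q f := by unfold mcEn; positivity
  have e2 : (3 * (6 + 3 * K) * ((4 * l : ℕ) : ℝ)) ^ q / 3 ^ n *
            ∑ ε : Fin n → ({-1, 0, 1} : Finset ℤ), ∑ x : Fin n → ZMod (4 * l),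
              ‖f (x + fun i => ((ε i : ℤ) : ZMod (4 * l))) - f x‖ ^ q =
      (3 * (6 + 3 * K) * ((4 * l : ℕ) : ℝ)) ^ q * mcEn q f := by
    rw [mcEn, div_eq_mul_inv, mul_assoc]; rfl
  rw [e2]
  refine mul_le_mul_of_nonneg_right ?_ hE
  have hnl : (n:ℝ) ≤ (l:ℝ) ^ q := by
    calc (n:ℝ) = ((n:ℝ) ^ (1 / q)) ^ q := by
          rw [← Real.rpow_mul (by positivity), one_div_mul_cancel hq0.ne', Real.rpow_one]
      _ ≤ _ := Real.rpow_le_rpow (by positivity) hl1 hq0.le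
  have a1 : (3:ℝ) ^ (q - 1) ≤ 3 ^ q := Real.rpow_le_rpow_of_exponent_le (by norm_num) (by linarith)
  have a2 : (6:ℝ) + (3 * K) ^ q ≤ (6 + 3 * K) ^ q := by
    have b1 : (6:ℝ) ≤ 6 ^ q := Real.self_le_rpow_of_one_le (by norm_num) (by linarith)
    have b2 := Real.add_rpow_le_rpow_add (by norm_num : (0:ℝ) ≤ 6) (by positivity : 0 ≤ 3 * K) (by linarith : 1 ≤ q)
    linarith
  calc 3 ^ (q - 1) * (6 * n + (l:ℝ) ^ q * (3 * K) ^ q) ≤ 3 ^ q * (6 * (l:ℝ) ^ q + (l:ℝ) ^ q * (3 * K) ^ q) := by gcongr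
    _ = 3 ^ q * (6 + (3 * K) ^ q) * (l:ℝ) ^ q := by ring
    _ ≤ 3 ^ q * (6 + 3 * K) ^ q * ((4 * l : ℕ) : ℝ) ^ q := by
        gcongr
        linarith
    _ = _ := by rw [← Real.mul_rpow (by norm_num) (by positivity), ← Real.mul_rpow (by positivity) (by positivity)]
end

section
/- Fix p,q ∈ [1,∞). The Banach space L_p[0,1] is uniformly homeomorphic to a subset of L_q[0,1] — i.e., there exists an injection f : L_p[0,1] → L_q[0,1] such that f is uniformly continuous and its inverse, defined on the image f(L_p[0,1]), is uniformly continuous — if and only if p ≤ q or both p,q ∈ [1,2]. -/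
open MeasureTheory

namespace UE

noncomputable abbrev I01 : Measure ℝ := volume.restrict (Set.Icc (0 : ℝ) 1)

instance : IsProbabilityMeasure I01 := ⟨by simp [I01]⟩

theorem exists_mp {Y : Type*} [MeasurableSpace Y] [StandardBorelSpace Y]
    (μ : Measure Y) [IsProbabilityMeasure μ] : ∃ h : ℝ → Y, MeasurePreserving h I01 μ := by
  have : Nonempty Y := by
    by_contra hne
    rw [not_nonempty_iff] at hne
    have := IsProbabilityMeasure.ne_zero μ
    exact this (Subsingleton.elim _ _)
  obtain ⟨f, hf, hm⟩ := Measure.exists_measurable_map_eq μ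
  have h1 : MeasurePreserving f volume μ := ⟨hf, hm⟩
  have h2 : MeasurePreserving (Set.projIcc (0:ℝ) 1 zero_le_one) I01 volume := by
    refine ⟨continuous_projIcc.measurable, ?_⟩
    have := unitInterval.measurePreserving_coe.map_eq
    rw [I01, ← this, Measure.map_map continuous_projIcc.measurable measurable_subtype_coe]
    have : (Set.projIcc (0:ℝ) 1 zero_le_one ∘ fun x : unitInterval => (x : ℝ)) = id := by
      ext x; simp
    rw [this, Measure.map_id]
  exact ⟨_, h1.comp h2⟩

theorem exists_isometry {Y : Type*} [MeasurableSpace Y] [StandardBorelSpace Y]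
    (μ : Measure Y) [IsProbabilityMeasure μ] (q : ENNReal) [Fact (1 ≤ q)] :
    ∃ J : Lp ℝ q μ → Lp ℝ q I01, Isometry J := by
  obtain ⟨h, hh⟩ := exists_mp μ
  exact ⟨_, Lp.isometry_compMeasurePreserving (E := ℝ) (p := q) hh⟩

end UE

namespace UE
open Finset

/-- the sign of a boolean -/
noncomputable def sg (b : Bool) : ℝ := if b then 1 else -1

theorem sg_not (b : Bool) : sg (!b) = - sg b := by cases b <;> simp [sg]
theorem sg_sq (b : Bool) : sg b * sg b = 1 := by cases b <;> simp [sg]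

set_option linter.unusedSectionVars false
variable {ι : Type*} [Fintype ι] [DecidableEq ι]

/-- flip one coordinate -/
def flp (j : ι) (δ : ι → Bool) : ι → Bool := Function.update δ j (!δ j)

theorem flp_invol (j : ι) : Function.Involutive (flp j) := by
  intro δ
  simp [flp]

theorem sum_flp {M : Type*} [AddCommMonoid M] (j : ι) (F : (ι → Bool) → M) :
    ∑ δ, F (flp j δ) = ∑ δ, F δ :=
  Equiv.sum_comp (flp_invol j).toPerm F

theorem sum_sg_sg (i j : ι) (hij : i ≠ j) : ∑ δ : ι → Bool, sg (δ i) * sg (δ j) = 0 := by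
  have h := sum_flp i (fun δ : ι → Bool => sg (δ i) * sg (δ j))
  simp only [flp, Function.update_self, Function.update_of_ne hij.symm, sg_not, neg_mul,
    Finset.sum_neg_distrib] at h
  linarith

theorem bessel (w : (ι → Bool) → ℝ) :
    ∑ j, ((Fintype.card (ι → Bool) : ℝ)⁻¹ * ∑ δ, sg (δ j) * w δ) ^ 2
      ≤ (Fintype.card (ι → Bool) : ℝ)⁻¹ * ∑ δ, w δ ^ 2 := by
  set N : ℝ := (Fintype.card (ι → Bool) : ℝ) with hN
  have hN0 : 0 < N := by
    have : 0 < Fintype.card (ι → Bool) := Fintype.card_pos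
    rw [hN]; exact_mod_cast this
  set a : ι → ℝ := fun j => N⁻¹ * ∑ δ, sg (δ j) * w δ with ha
  have hs : ∀ j, ∑ δ, sg (δ j) * w δ = N * a j := by
    intro j; simp only [ha]; field_simp
  have h0 : 0 ≤ ∑ δ, (w δ - ∑ j, a j * sg (δ j)) ^ 2 := Finset.sum_nonneg fun _ _ => sq_nonneg _
  have h1 : ∑ δ, w δ * ∑ j, a j * sg (δ j) = N * ∑ j, a j ^ 2 := by
    simp_rw [Finset.mul_sum]
    rw [Finset.sum_comm]
    refine Finset.sum_congr rfl fun j _ => ?_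
    calc _ = a j * ∑ δ, sg (δ j) * w δ := by
          rw [Finset.mul_sum]; refine Finset.sum_congr rfl fun δ _ => by ring
      _ = _ := by rw [hs]; ring
  have h2 : ∑ δ : ι → Bool, (∑ j, a j * sg (δ j)) ^ 2 = N * ∑ j, a j ^ 2 := by
    simp_rw [sq, Finset.sum_mul_sum]
    rw [Finset.sum_comm, Finset.mul_sum]
    refine Finset.sum_congr rfl fun i _ => ?_
    rw [Finset.sum_comm, Finset.sum_eq_single i]
    · have : ∀ δ : ι → Bool, a i * sg (δ i) * (a i * sg (δ i)) = a i * a i := fun δ => by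
        rw [mul_mul_mul_comm, sg_sq, mul_one]
      simp [this, hN]
    · intro j _ hj
      have := sum_sg_sg i j hj.symm
      calc _ = ∑ δ : ι → Bool, a i * a j * (sg (δ i) * sg (δ j)) :=
            Finset.sum_congr rfl fun δ _ => by ring
        _ = 0 := by rw [← Finset.mul_sum, this, mul_zero]
    · simp
  have h3 : ∑ δ, (w δ - ∑ j, a j * sg (δ j)) ^ 2
      = ∑ δ, w δ ^ 2 - 2 * (N * ∑ j, a j ^ 2) + N * ∑ j, a j ^ 2 := by
    nth_rewrite 1 [← h1]
    rw [← h2, Finset.mul_sum, ← Finset.sum_sub_distrib, ← Finset.sum_add_distrib]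
    refine Finset.sum_congr rfl fun δ _ => by ring
  rw [h3] at h0
  rw [inv_mul_eq_div, le_div_iff₀ hN0]
  linarith

theorem scalar_ineq (q : ℝ) (hq : 2 ≤ q) (w : (ι → Bool) → ℝ) :
    ∑ j, |(Fintype.card (ι → Bool) : ℝ)⁻¹ * ∑ δ, sg (δ j) * w δ| ^ q
      ≤ (Fintype.card (ι → Bool) : ℝ)⁻¹ * ∑ δ, |w δ| ^ q := by
  have hb := bessel w
  set N : ℝ := (Fintype.card (ι → Bool) : ℝ) with hN
  have hN0 : 0 < N := by
    have : 0 < Fintype.card (ι → Bool) := Fintype.card_pos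
    rw [hN]; exact_mod_cast this
  set a : ι → ℝ := fun j => N⁻¹ * ∑ δ, sg (δ j) * w δ with ha
  change ∑ j, a j ^ 2 ≤ _ at hb
  change ∑ j, |a j| ^ q ≤ _
  set S := ∑ j, a j ^ 2
  have hS : 0 ≤ S := Finset.sum_nonneg fun _ _ => sq_nonneg _
  have hpow : ∀ x : ℝ, |x| ^ q = (x ^ 2) ^ (q / 2) := by
    intro x
    rw [← sq_abs, ← Real.rpow_natCast, ← Real.rpow_mul (abs_nonneg x)]
    congr 1; push_cast; ring
  have h1 : ∑ j, |a j| ^ q ≤ S ^ (q / 2) := by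
    have e1 : ∀ x : ℝ, 0 ≤ x → x ^ (q / 2) = x * x ^ (q / 2 - 1) := by
      intro x hx
      rcases hx.eq_or_lt with rfl | hx
      · rw [Real.zero_rpow (by linarith)]; simp
      · rw [Real.rpow_sub hx, Real.rpow_one]; field_simp
    calc ∑ j, |a j| ^ q = ∑ j, (a j ^ 2) * (a j ^ 2) ^ (q / 2 - 1) := by
          refine Finset.sum_congr rfl fun j _ => ?_
          rw [hpow, e1 _ (sq_nonneg _)]
      _ ≤ ∑ j, (a j ^ 2) * S ^ (q / 2 - 1) := by
          refine Finset.sum_le_sum fun j _ => ?_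
          refine mul_le_mul_of_nonneg_left ?_ (sq_nonneg _)
          refine Real.rpow_le_rpow (sq_nonneg _) ?_ (by linarith)
          exact Finset.single_le_sum (f := fun j => a j ^ 2) (fun _ _ => sq_nonneg _)
            (Finset.mem_univ j)
      _ = S ^ (q / 2) := by rw [← Finset.sum_mul, ← e1 _ hS]
  have h2 := Real.rpow_arith_mean_le_arith_mean_rpow Finset.univ (fun _ : ι → Bool => N⁻¹)
    (fun δ => w δ ^ 2) (fun _ _ => by positivity) (by simp [hN])
    (fun _ _ => sq_nonneg _) (p := q / 2) (by linarith)
  calc _ ≤ S ^ (q / 2) := h1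
    _ ≤ (N⁻¹ * ∑ δ, w δ ^ 2) ^ (q / 2) := Real.rpow_le_rpow hS hb (by linarith)
    _ ≤ _ := by
      rw [Finset.mul_sum]
      refine h2.trans (le_of_eq ?_)
      rw [Finset.mul_sum]
      refine Finset.sum_congr rfl fun δ _ => by rw [hpow]

theorem norm_rpow_Lp {α : Type*} [MeasurableSpace α] {μ : Measure α} (q : ℝ) (hq : 1 ≤ q)
    [Fact (1 ≤ ENNReal.ofReal q)] (f : Lp ℝ (ENNReal.ofReal q) μ) :
    ‖f‖ ^ q = ∫ x, |f x| ^ q ∂μ := by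
  have hq0 : 0 < q := by linarith
  have := (Lp.memLp f).eLpNorm_eq_integral_rpow_norm (by simpa using hq0) (by simp)
  rw [ENNReal.toReal_ofReal hq0.le] at this
  have hnn : 0 ≤ ∫ x, ‖f x‖ ^ q ∂μ := integral_nonneg fun _ => by positivity
  rw [Lp.norm_def, this, ENNReal.toReal_ofReal (by positivity), ← Real.rpow_mul hnn,
    inv_mul_cancel₀ hq0.ne', Real.rpow_one]
  simp

theorem integrable_Lp {α : Type*} [MeasurableSpace α] {μ : Measure α} (q : ℝ) (hq : 1 ≤ q)
    (f : Lp ℝ (ENNReal.ofReal q) μ) :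
    Integrable (fun x => |f x| ^ q) μ := by
  have hq0 : 0 < q := by linarith
  have := (Lp.memLp f).integrable_norm_rpow (by simpa using hq0) (by simp)
  rw [ENNReal.toReal_ofReal hq0.le] at this
  simpa using this

theorem coeFn_lincomb {α κ : Type*} [MeasurableSpace α] {μ : Measure α} {q : ENNReal}
    [Fact (1 ≤ q)] (s : Finset κ) (c : κ → ℝ) (W : κ → Lp ℝ q μ) :
    (∑ k ∈ s, c k • W k : Lp ℝ q μ) =ᵐ[μ] fun x => ∑ k ∈ s, c k * W k x := by
  classical
  induction s using Finset.induction_on with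
  | empty =>
    simp only [Finset.sum_empty]
    exact Lp.coeFn_zero ℝ q μ
  | insert a s ha ih =>
    rw [Finset.sum_insert ha]
    filter_upwards [Lp.coeFn_add (c a • W a) (∑ k ∈ s, c k • W k), ih, Lp.coeFn_smul (c a) (W a)]
      with x h1 h2 h3
    rw [h1, Pi.add_apply, h2, h3, Finset.sum_insert ha]
    rfl

theorem Lp_ineq {α : Type*} [MeasurableSpace α] {μ : Measure α} (q : ℝ) (hq : 2 ≤ q)
    [Fact (1 ≤ ENNReal.ofReal q)] (W : (ι → Bool) → Lp ℝ (ENNReal.ofReal q) μ) (η : ℝ)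
    (hW : ∀ δ, ‖W δ‖ ≤ η) :
    ∑ j, ‖(Fintype.card (ι → Bool) : ℝ)⁻¹ • ∑ δ, sg (δ j) • W δ‖ ^ q ≤ η ^ q := by
  have hq1 : 1 ≤ q := by linarith
  set N : ℝ := (Fintype.card (ι → Bool) : ℝ) with hN
  have hN0 : 0 < N := by
    have : 0 < Fintype.card (ι → Bool) := Fintype.card_pos
    rw [hN]; exact_mod_cast this
  have hae : ∀ j, (N⁻¹ • ∑ δ, sg (δ j) • W δ : Lp ℝ (ENNReal.ofReal q) μ) =ᵐ[μ]
      fun x => N⁻¹ * ∑ δ, sg (δ j) * W δ x := by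
    intro j
    filter_upwards [coeFn_lincomb Finset.univ (fun δ : ι → Bool => sg (δ j)) W,
      Lp.coeFn_smul N⁻¹ (∑ δ, sg (δ j) • W δ)] with x h1 h2
    rw [h2, Pi.smul_apply, h1, smul_eq_mul]
  calc _ = ∑ j, ∫ x, |(N⁻¹ • ∑ δ, sg (δ j) • W δ : Lp ℝ (ENNReal.ofReal q) μ) x| ^ q ∂μ := by
        refine Finset.sum_congr rfl fun j _ => norm_rpow_Lp q hq1 _
    _ = ∫ x, ∑ j, |(N⁻¹ • ∑ δ, sg (δ j) • W δ : Lp ℝ (ENNReal.ofReal q) μ) x| ^ q ∂μ :=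
        (integral_finsetSum _ fun j _ => integrable_Lp q hq1 _).symm
    _ ≤ ∫ x, N⁻¹ * ∑ δ, |W δ x| ^ q ∂μ := by
        refine integral_mono_ae (integrable_finsetSum _ fun j _ => integrable_Lp q hq1 _)
          ((integrable_finsetSum _ fun j _ => integrable_Lp q hq1 _).const_mul _) ?_
        filter_upwards [ae_all_iff.2 hae] with x hx
        simp_rw [hx]
        exact scalar_ineq q hq fun δ => W δ x
    _ = N⁻¹ * ∑ δ, ‖W δ‖ ^ q := by
        rw [integral_const_mul, integral_finsetSum _ fun j _ => integrable_Lp q hq1 _]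
        simp_rw [norm_rpow_Lp q hq1]
    _ ≤ N⁻¹ * ∑ δ : ι → Bool, η ^ q := by
        gcongr with δ _
        exact hW δ
    _ = η ^ q := by
        rw [Finset.sum_const, Finset.card_univ, nsmul_eq_mul, ← hN, inv_mul_cancel_left₀ hN0.ne']

end UE

namespace UE
open Finset

theorem avg_lemma {G : Type*} [AddCommGroup G] [Fintype G] (n k : ℕ) (D : Fin n → G → ℝ)
    (s : Fin n → ℕ → G) (c M : ℝ) (h : ∀ j x, c ≤ ∑ i ∈ range k, D j (x + s j i))
    (hM : ∀ x, ∑ j, D j x ≤ M) : n * c ≤ k * M := by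
  set C : ℝ := (Fintype.card G : ℝ) with hC
  have hC0 : 0 < C := by
    have : 0 < Fintype.card G := Fintype.card_pos
    rw [hC]; exact_mod_cast this
  have hsum : C * (n * c) ≤ C * (k * M) := by
    calc C * (n * c) = ∑ j : Fin n, ∑ x : G, c := by
          simp [hC]; ring
      _ ≤ ∑ j : Fin n, ∑ x : G, ∑ i ∈ range k, D j (x + s j i) :=
          Finset.sum_le_sum fun j _ => Finset.sum_le_sum fun x _ => h j x
      _ = ∑ j : Fin n, ∑ i ∈ range k, ∑ x : G, D j x := by
          refine Finset.sum_congr rfl fun j _ => ?_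
          rw [Finset.sum_comm]
          refine Finset.sum_congr rfl fun i _ => ?_
          exact Equiv.sum_comp (Equiv.addRight _) (fun x => D j x)
      _ = k * ∑ x : G, ∑ j : Fin n, D j x := by
          simp only [Finset.sum_const, Finset.card_range, nsmul_eq_mul]
          rw [← Finset.mul_sum, Finset.sum_comm]
      _ ≤ k * ∑ x : G, M := by
          gcongr with x _
          exact hM x
      _ = C * (k * M) := by simp [hC]; ring
  exact le_of_mul_le_mul_left hsum hC0

theorem cotype {α : Type*} [MeasurableSpace α] {μ : Measure α} (q : ℝ) (hq : 2 ≤ q)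
    [Fact (1 ≤ ENNReal.ofReal q)] (n k : ℕ) [NeZero (4 * k)]
    (h : (Fin n → ZMod (4 * k)) → Lp ℝ (ENNReal.ofReal q) μ) (η δ₀ : ℝ) (hη : 0 ≤ η)
    (h1 : ∀ x ε : Fin n → ZMod (4 * k), (∀ i, ε i = 0 ∨ ε i = 1 ∨ ε i = -1) →
      ‖h (x + ε) - h x‖ ≤ η)
    (h2 : ∀ x j, δ₀ ≤ ‖h (x + Pi.single j ((2 * k : ℕ) : ZMod (4 * k))) - h x‖) :
    n * (δ₀ - 2 * η) ≤ k * ((n : ℝ) ^ (1 - 1 / q) * (2 * η)) := by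
  set N : ℝ := (Fintype.card (Fin n → Bool) : ℝ) with hN
  have hN0 : 0 < N := by
    have : 0 < Fintype.card (Fin n → Bool) := Fintype.card_pos
    rw [hN]; exact_mod_cast this
  let sz : Bool → ZMod (4 * k) := fun b => if b then 1 else -1
  let v : (Fin n → Bool) → (Fin n → ZMod (4 * k)) := fun δ i => sz (δ i)
  let A : Fin n → (Fin n → ZMod (4 * k)) → Lp ℝ (ENNReal.ofReal q) μ := fun j z =>
    N⁻¹ • ∑ δ, h (z + Function.update (v δ) j 0)
  let d : Fin n → (Fin n → ZMod (4 * k)) → Lp ℝ (ENNReal.ofReal q) μ := fun j y =>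
    A j (y + Pi.single j 1) - A j (y - Pi.single j 1)
  have hsz : ∀ b, sz b = 0 ∨ sz b = 1 ∨ sz b = -1 := by
    intro b; cases b <;> simp [sz]
  have hA : ∀ j z, ‖A j z - h z‖ ≤ η := by
    intro j z
    have e : A j z - h z = N⁻¹ • ∑ δ : Fin n → Bool, (h (z + Function.update (v δ) j 0) - h z) := by
      simp only [A]
      rw [Finset.sum_sub_distrib, smul_sub, Finset.sum_const, Finset.card_univ,
        ← Nat.cast_smul_eq_nsmul ℝ, ← hN, smul_smul, inv_mul_cancel₀ hN0.ne', one_smul]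
    rw [e, norm_smul, Real.norm_of_nonneg (by positivity), inv_mul_eq_div, div_le_iff₀ hN0]
    refine (norm_sum_le _ _).trans ?_
    calc _ ≤ ∑ δ : Fin n → Bool, η := by
          refine Finset.sum_le_sum fun δ _ => h1 _ _ fun i => ?_
          by_cases hi : i = j
          · subst hi; simp
          · rw [Function.update_of_ne hi]; exact hsz _
      _ = η * N := by
          rw [Finset.sum_const, Finset.card_univ, nsmul_eq_mul, ← hN, mul_comm]
  have hd : ∀ j y, d j y = (2 : ℝ) • (N⁻¹ • ∑ δ : Fin n → Bool, sg (δ j) • (h (y + v δ) - h y)) := by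
    intro j y
    have e1 : ∀ δ : Fin n → Bool, y + Pi.single j 1 + Function.update (v δ) j 0
        = y + Function.update (v δ) j 1 := by
      intro δ; funext i
      by_cases hi : i = j
      · subst hi; simp
      · simp [Function.update_of_ne hi, Pi.single_eq_of_ne hi]
    have e2 : ∀ δ : Fin n → Bool, y - Pi.single j 1 + Function.update (v δ) j 0
        = y + Function.update (v δ) j (-1) := by
      intro δ; funext i
      by_cases hi : i = j
      · subst hi; simp [sub_eq_add_neg]
      · simp [Function.update_of_ne hi, Pi.single_eq_of_ne hi]
    have e3 : ∀ δ : Fin n → Bool, v (flp j δ) = Function.update (v δ) j (sz (!δ j)) := by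
      intro δ; funext i
      by_cases hi : i = j
      · subst hi; simp [v, flp]
      · simp [v, flp, Function.update_of_ne hi]
    have e4 : ∀ δ : Fin n → Bool, v δ = Function.update (v δ) j (sz (δ j)) := by
      intro δ; funext i
      by_cases hi : i = j
      · subst hi; simp [v]
      · simp [Function.update_of_ne hi]
    have e5 : ∀ δ : Fin n → Bool,
        h (y + Function.update (v δ) j 1) - h (y + Function.update (v δ) j (-1))
        = sg (δ j) • (h (y + v δ) - h y) - sg (δ j) • (h (y + v (flp j δ)) - h y) := by
      intro δ
      rw [← smul_sub, sub_sub_sub_cancel_right, e3]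
      nth_rewrite 3 [e4]
      cases δ j <;> simp [sg, sz]
    have e6 : ∑ δ : Fin n → Bool, sg (δ j) • (h (y + v (flp j δ)) - h y)
        = - ∑ δ : Fin n → Bool, sg (δ j) • (h (y + v δ) - h y) := by
      rw [← sum_flp j, ← Finset.sum_neg_distrib]
      refine Finset.sum_congr rfl fun δ _ => ?_
      rw [flp_invol j δ]
      simp [flp, sg_not]
    simp only [d, A, e1, e2]
    rw [← smul_sub, ← Finset.sum_sub_distrib]
    simp_rw [e5]
    rw [Finset.sum_sub_distrib, e6, smul_comm (2 : ℝ), two_smul, sub_neg_eq_add]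
  set M : ℝ := (n : ℝ) ^ (1 - 1 / q) * (2 * η) with hM
  have hdM : ∀ y, ∑ j, ‖d j y‖ ≤ M := by
    intro y
    have hq0 : 0 < q := by linarith
    have a1 := Lp_ineq q hq (fun δ : Fin n → Bool => h (y + v δ) - h y) η
      (fun δ => h1 _ _ fun i => hsz _)
    rw [← hN] at a1
    have a2 : ∑ j, ‖d j y‖ ^ q ≤ (2 * η) ^ q := by
      simp_rw [hd, norm_smul (2 : ℝ), Real.mul_rpow (norm_nonneg (2 : ℝ)) (norm_nonneg _)]
      rw [← Finset.mul_sum, Real.mul_rpow (by norm_num) hη, Real.norm_of_nonneg (by norm_num)]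
      exact mul_le_mul_of_nonneg_left a1 (by positivity)
    have a3 := Real.rpow_sum_le_const_mul_sum_rpow_of_nonneg (f := fun j => ‖d j y‖) Finset.univ
      (p := q) (by linarith) (fun _ _ => norm_nonneg _)
    rw [Finset.card_univ, Fintype.card_fin] at a3
    have a4 : (∑ j, ‖d j y‖) ^ q ≤ M ^ q := by
      refine a3.trans ?_
      rw [hM, Real.mul_rpow (by positivity) (by positivity), ← Real.rpow_mul (by positivity)]
      have : (1 - 1 / q) * q = q - 1 := by field_simp
      rw [this]
      exact mul_le_mul_of_nonneg_left a2 (by positivity)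
    exact (Real.rpow_le_rpow_iff (Finset.sum_nonneg fun _ _ => norm_nonneg _)
      (by positivity) hq0).1 a4
  have htel : ∀ j x, A j (x + Pi.single j ((2 * k : ℕ) : ZMod (4 * k))) - A j x
      = ∑ i ∈ range k, d j (x + Pi.single j ((2 * i + 1 : ℕ) : ZMod (4 * k))) := by
    intro j x
    have := Finset.sum_range_sub
      (fun i => A j (x + Pi.single j ((2 * i : ℕ) : ZMod (4 * k)))) k
    rw [show A j x = A j (x + Pi.single j ((2 * 0 : ℕ) : ZMod (4 * k))) by simp, ← this]
    refine Finset.sum_congr rfl fun i _ => ?_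
    simp only [d]
    congr 2
    · rw [add_assoc, ← Pi.single_add]
      congr 2; push_cast; ring
    · rw [add_sub_assoc, ← Pi.single_sub]
      congr 2; push_cast; ring
  have hstep : ∀ (j : Fin n) (x : Fin n → ZMod (4 * k)), δ₀ - 2 * η ≤
      ∑ i ∈ range k, ‖d j (x + Pi.single j ((2 * i + 1 : ℕ) : ZMod (4 * k)))‖ := by
    intro j x
    set x' := x + Pi.single j ((2 * k : ℕ) : ZMod (4 * k)) with hx'
    have b1 := h2 x j
    rw [← hx'] at b1
    have b2 : h x' - h x = - (A j x' - h x') + (A j x' - A j x) + (A j x - h x) := by abel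
    have b3 : ‖h x' - h x‖ ≤ ‖A j x' - h x'‖ + ‖A j x' - A j x‖ + ‖A j x - h x‖ := by
      rw [b2]
      refine (norm_add₃_le).trans ?_
      rw [norm_neg]
    have b4 := hA j x'
    have b5 := hA j x
    have b6 : ‖A j x' - A j x‖ ≤ _ := (le_of_eq (by rw [htel])).trans (norm_sum_le _ _)
    linarith
  exact avg_lemma n k (fun j x => ‖d j x‖)
    (fun j i => Pi.single j ((2 * i + 1 : ℕ) : ZMod (4 * k))) _ M hstep hdM

end UE

namespace UE
open Finset

theorem exists_T (p : ℝ) (hp : 1 ≤ p) [Fact (1 ≤ ENNReal.ofReal p)] (κ : Type) [Fintype κ]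
    [Nonempty κ] : ∃ T : (κ → ℝ) → Lp ℝ (ENNReal.ofReal p) I01,
      ∀ v w, dist (T v) (T w) ^ p = ∑ i, |v i - w i| ^ p := by
  letI : MeasurableSpace κ := ⊤
  haveI : DiscreteMeasurableSpace κ := ⟨fun _ => trivial⟩
  have hp0 : 0 < p := by linarith
  have hc : 0 < (Fintype.card κ : ℝ) := by exact_mod_cast Fintype.card_pos
  let c : ENNReal := (Fintype.card κ : ENNReal)⁻¹
  let μ : Measure κ := c • Measure.count
  haveI : IsProbabilityMeasure μ := ⟨by
    simp only [μ, c, Measure.smul_apply, smul_eq_mul, Measure.count_univ, ENat.card_eq_coe_fintype_card]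
    refine ENNReal.inv_mul_cancel ?_ ?_
    · simp
    · simp⟩
  obtain ⟨J, hJ⟩ := exists_isometry μ (ENNReal.ofReal p)
  have hmem : ∀ v : κ → ℝ, MemLp v (ENNReal.ofReal p) μ := fun v =>
    MemLp.of_discrete
  refine ⟨fun v => J ((hmem fun i => (Fintype.card κ : ℝ) ^ (1 / p) * v i).toLp), fun v w => ?_⟩
  rw [hJ.dist_eq, dist_eq_norm, ← MemLp.toLp_sub, norm_rpow_Lp p hp]
  rw [integral_congr_ae (g := fun i => |(Fintype.card κ : ℝ) ^ (1 / p) * v i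
    - (Fintype.card κ : ℝ) ^ (1 / p) * w i| ^ p)]
  · rw [integral_smul_measure, integral_count]
    simp only [c, ENNReal.toReal_inv, ENNReal.toReal_natCast, smul_eq_mul]
    rw [Finset.mul_sum]
    refine Finset.sum_congr rfl fun i _ => ?_
    rw [← mul_sub, abs_mul, Real.mul_rpow (abs_nonneg _) (abs_nonneg _),
      abs_of_nonneg (by positivity), ← Real.rpow_mul hc.le, one_div_mul_cancel hp0.ne',
      Real.rpow_one, inv_mul_cancel_left₀ hc.ne']
  · filter_upwards [((hmem fun i => (Fintype.card κ : ℝ) ^ (1 / p) * v i).sub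
      (hmem fun i => (Fintype.card κ : ℝ) ^ (1 / p) * w i)).coeFn_toLp] with i hi
    rw [hi]; rfl

theorem char_facts (k : ℕ) (hk : 0 < k) [NeZero (4 * k)] :
    ‖(ZMod.stdAddChar (1 : ZMod (4 * k)) : ℂ) - 1‖ ≤ 2 / k ∧
    (ZMod.stdAddChar (((2 * k : ℕ) : ZMod (4 * k))) : ℂ) = -1 ∧
    ∀ x : ZMod (4 * k), ‖(ZMod.stdAddChar x : ℂ)‖ = 1 := by
  have hk0 : (0 : ℝ) < k := by exact_mod_cast hk
  refine ⟨?_, ?_, ?_⟩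
  · have := ZMod.stdAddChar_coe (N := 4 * k) 1
    rw [Int.cast_one] at this
    rw [this]
    have e : (2 * Real.pi * Complex.I * ((1 : ℤ) : ℂ) / ((4 * k : ℕ) : ℂ))
        = Complex.I * ((2 * Real.pi / (4 * k) : ℝ) : ℂ) := by
      push_cast; ring
    rw [e]
    refine (Real.norm_exp_I_mul_ofReal_sub_one_le).trans ?_
    rw [Real.norm_of_nonneg (by positivity), div_le_div_iff₀ (by positivity) hk0]
    nlinarith [Real.pi_le_four]
  · have := ZMod.stdAddChar_coe (N := 4 * k) ((2 * k : ℕ) : ℤ)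
    rw [Int.cast_natCast] at this
    rw [this]
    have e : (2 * Real.pi * Complex.I * (((2 * k : ℕ) : ℤ) : ℂ) / ((4 * k : ℕ) : ℂ))
        = Real.pi * Complex.I := by
      have : (k : ℂ) ≠ 0 := by exact_mod_cast hk.ne'
      push_cast; field_simp; ring
    rw [e, Complex.exp_pi_mul_I]
  · intro x
    exact Circle.norm_coe (ZMod.toCircle x)

theorem no_embed (p q : ℝ) (hq : 2 ≤ q) (hpq : q < p) [Fact (1 ≤ ENNReal.ofReal p)]
    [Fact (1 ≤ ENNReal.ofReal q)] 
    (f : Lp ℝ (ENNReal.ofReal p) I01 → Lp ℝ (ENNReal.ofReal q) I01) (hf : IsUniformEmbedding f) :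
    False := by
  have hp0 : 0 < p := by linarith
  have hq0 : 0 < q := by linarith
  obtain ⟨-, hu, hl⟩ := Metric.isUniformEmbedding_iff.1 hf
  obtain ⟨δ₀, hδ₀, hlow⟩ := hl 1 one_pos
  obtain ⟨δ, hδ, hup⟩ := Metric.uniformContinuous_iff.1 hu (δ₀ / 8) (by positivity)
  -- choose n
  have hlim : Filter.Tendsto (fun n : ℕ => (2 : ℝ) * 2 ^ p * (n : ℝ) ^ (-(p / q - 1)))
      Filter.atTop (nhds (2 * 2 ^ p * 0)) :=
    ((tendsto_rpow_neg_atTop (by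
      rw [sub_pos, lt_div_iff₀ hq0]; linarith)).comp tendsto_natCast_atTop_atTop).const_mul _
  rw [mul_zero] at hlim
  obtain ⟨n, hn, hn1⟩ := ((hlim.eventually (gt_mem_nhds (show 0 < δ ^ p by positivity))).and
    (Filter.eventually_ge_atTop 1)).exists
  have hnR : (1 : ℝ) ≤ n := by exact_mod_cast hn1
  have hnq : 1 ≤ (n : ℝ) ^ (1 / q) := Real.one_le_rpow hnR (by positivity)
  set k : ℕ := ⌈(n : ℝ) ^ (1 / q)⌉₊ with hk
  have hk1 : (n : ℝ) ^ (1 / q) ≤ k := Nat.le_ceil _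
  have hk2 : (k : ℝ) ≤ 2 * (n : ℝ) ^ (1 / q) := by
    have := (Nat.ceil_lt_add_one (show 0 ≤ (n : ℝ) ^ (1 / q) by positivity)).le
    rw [← hk] at this
    linarith
  have hkR : (0 : ℝ) < k := by linarith
  have hk0 : 0 < k := by exact_mod_cast hkR
  haveI : NeZero (4 * k) := ⟨by omega⟩
  haveI : Nonempty (Fin n) := ⟨⟨0, hn1⟩⟩
  obtain ⟨c1, c2, c3⟩ := char_facts k hk0
  obtain ⟨T, hT⟩ := exists_T p (by linarith) (Fin n × Bool)
  let χ : ZMod (4 * k) → ℂ := fun x => ZMod.stdAddChar x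
  have hχ : ∀ x y, χ (x + y) = χ x * χ y := fun x y => AddChar.map_add_eq_mul _ _ _
  let u : (Fin n → ZMod (4 * k)) → (Fin n × Bool → ℝ) := fun x i =>
    if i.2 then (χ (x i.1)).re else (χ (x i.1)).im
  let g : (Fin n → ZMod (4 * k)) → Lp ℝ (ENNReal.ofReal p) I01 := fun x => T (u x)
  have hstep : ∀ ε : ZMod (4 * k), (ε = 0 ∨ ε = 1 ∨ ε = -1) → ∀ x, ‖χ (x + ε) - χ x‖ ≤ 2 / k := by
    intro ε hε x
    rcases hε with rfl | rfl | rfl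
    · rw [add_zero, sub_self, norm_zero]; positivity
    · rw [hχ, ← mul_sub_one, norm_mul, c3, one_mul]; exact c1
    · have : x = (x + -1) + 1 := by ring
      nth_rewrite 2 [this]
      rw [hχ (x + -1) 1, ← mul_one_sub, norm_mul, c3, one_mul, norm_sub_rev]; exact c1
  have hg1 : ∀ x ε : Fin n → ZMod (4 * k), (∀ i, ε i = 0 ∨ ε i = 1 ∨ ε i = -1) →
      dist (g (x + ε)) (g x) < δ := by
    intro x ε hε
    rw [← Real.rpow_lt_rpow_iff dist_nonneg hδ.le hp0]
    refine lt_of_le_of_lt ?_ hn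
    rw [hT]
    calc _ ≤ ∑ i : Fin n × Bool, (2 / (n : ℝ) ^ (1 / q)) ^ p := by
          refine Finset.sum_le_sum fun i _ => Real.rpow_le_rpow (abs_nonneg _) ?_ hp0.le
          have h1 : ‖χ (x i.1 + ε i.1) - χ (x i.1)‖ ≤ 2 / (n : ℝ) ^ (1 / q) :=
            (hstep _ (hε i.1) _).trans (div_le_div_of_nonneg_left (by norm_num) (by positivity) hk1)
          refine le_trans ?_ h1
          simp only [u, Pi.add_apply]
          split_ifs
          · rw [← Complex.sub_re]; exact Complex.abs_re_le_norm _
          · rw [← Complex.sub_im]; exact Complex.abs_im_le_norm _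
      _ = _ := by
          rw [Finset.sum_const, Finset.card_univ, Fintype.card_prod, Fintype.card_fin,
            Fintype.card_bool, nsmul_eq_mul, Real.div_rpow (by norm_num) (by positivity),
            ← Real.rpow_mul (by positivity), neg_sub, Real.rpow_sub (by positivity), Real.rpow_one]
          have : 1 / q * p = p / q := by ring
          rw [this]; push_cast; ring
  have hg2 : ∀ x j, 1 ≤ dist (g (x + Pi.single j ((2 * k : ℕ) : ZMod (4 * k)))) (g x) := by
    intro x j
    rw [← Real.rpow_le_rpow_iff zero_le_one dist_nonneg hp0, Real.one_rpow, hT]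
    set U := fun i => |u (x + Pi.single j ((2 * k : ℕ) : ZMod (4 * k))) i - u x i| with hU
    have key : χ (x j + ((2 * k : ℕ) : ZMod (4 * k))) = - χ (x j) := by
      rw [hχ]; simp only [χ]; rw [c2]; ring
    have e1 : U (j, true) = 2 * |(χ (x j)).re| := by
      simp only [hU, u, Pi.add_apply, Pi.single_eq_same, key, if_true, Complex.neg_re]
      rw [← neg_add', abs_neg, ← two_mul, abs_mul, abs_two]
    have e2 : U (j, false) = 2 * |(χ (x j)).im| := by
      simp only [hU, u, Pi.add_apply, Pi.single_eq_same, key, Bool.false_eq_true, if_false,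
        Complex.neg_im]
      rw [← neg_add', abs_neg, ← two_mul, abs_mul, abs_two]
    have h4 : |(χ (x j)).re| ^ 2 + |(χ (x j)).im| ^ 2 = 1 := by
      have := c3 (x j)
      have h5 := Complex.sq_norm (χ (x j))
      rw [show ‖χ (x j)‖ = 1 from this, Complex.normSq_apply] at h5
      rw [sq_abs, sq_abs]; linarith
    have h6 : ∃ i, 1 ≤ U i := by
      by_contra! hcon
      have a1 := hcon (j, true)
      have a2 := hcon (j, false)
      rw [e1] at a1; rw [e2] at a2
      nlinarith [abs_nonneg (χ (x j)).re, abs_nonneg (χ (x j)).im]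
    obtain ⟨i, hi⟩ := h6
    calc (1 : ℝ) ≤ U i ^ p := Real.one_le_rpow hi hp0.le
      _ ≤ ∑ i, U i ^ p := Finset.single_le_sum (f := fun i => U i ^ p)
          (fun i _ => Real.rpow_nonneg (abs_nonneg _) _) (Finset.mem_univ i)
  have := cotype q hq n k (fun x => f (g x)) (δ₀ / 8) δ₀ (by positivity)
    (fun x ε hε => by
      rw [← dist_eq_norm]
      exact (hup (hg1 x ε hε)).le)
    (fun x j => by
      rw [← dist_eq_norm]
      by_contra! hcon
      exact absurd (hlow hcon) (not_lt.2 (hg2 x j)))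
  have hfin : (k : ℝ) * ((n : ℝ) ^ (1 - 1 / q) * (2 * (δ₀ / 8))) ≤ n * (δ₀ / 2) := by
    calc (k : ℝ) * ((n : ℝ) ^ (1 - 1 / q) * (2 * (δ₀ / 8)))
        ≤ (2 * (n : ℝ) ^ (1 / q)) * ((n : ℝ) ^ (1 - 1 / q) * (2 * (δ₀ / 8))) := by gcongr
      _ = ((n : ℝ) ^ (1 / q) * (n : ℝ) ^ (1 - 1 / q)) * (δ₀ / 2) := by ring
      _ = n * (δ₀ / 2) := by
          rw [← Real.rpow_add (by positivity)]
          rw [show 1 / q + (1 - 1 / q) = 1 by ring, Real.rpow_one]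
  nlinarith

end UE

namespace UE

theorem eLpNorm_rpow' {Y : Type*} [MeasurableSpace Y] (μ : Measure Y) (q : ℝ) (hq : 1 ≤ q)
    (f : Y → ℝ) : eLpNorm f (ENNReal.ofReal q) μ ^ q = ∫⁻ x, ‖f x‖ₑ ^ q ∂μ := by
  have h0 : 0 < q := by linarith
  rw [eLpNorm_eq_lintegral_rpow_enorm_toReal (by simpa using h0) (by simp),
    ENNReal.toReal_ofReal h0.le, ← ENNReal.rpow_mul, one_div, inv_mul_cancel₀ h0.ne',
    ENNReal.rpow_one]

theorem embed_of_kernel (p q : ℝ) (hp : 1 ≤ p) (hq : 1 ≤ q)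
    [Fact (1 ≤ ENNReal.ofReal p)] [Fact (1 ≤ ENNReal.ofReal q)]
    {Z : Type*} [MeasurableSpace Z] [StandardBorelSpace Z] (ν : Measure Z) [IsProbabilityMeasure ν]
    (Φ : ℝ → Z → ℝ) (hΦ : Measurable (Function.uncurry Φ)) (hΦ0 : ∀ z, Φ 0 z = 0)
    (c C : ℝ) (hc : 0 < c) (hC : 0 < C)
    (hl : ∀ a b, ENNReal.ofReal c * ‖a - b‖ₑ ^ p ≤ ∫⁻ z, ‖Φ a z - Φ b z‖ₑ ^ q ∂ν)
    (hu : ∀ a b, ∫⁻ z, ‖Φ a z - Φ b z‖ₑ ^ q ∂ν ≤ ENNReal.ofReal C * ‖a - b‖ₑ ^ p) :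
    ∃ f : Lp ℝ (ENNReal.ofReal p) I01 → Lp ℝ (ENNReal.ofReal q) I01, IsUniformEmbedding f := by
  have hp0 : 0 < p := by linarith
  have hq0 : 0 < q := by linarith
  let F : Lp ℝ (ENNReal.ofReal p) I01 → ℝ × Z → ℝ := fun f x => Φ (f x.1) x.2
  have hF : ∀ f, Measurable (F f) := fun f =>
    hΦ.comp (((Lp.stronglyMeasurable f).measurable.comp measurable_fst).prodMk measurable_snd)
  have hint : ∀ f g, eLpNorm (F f - F g) (ENNReal.ofReal q) (I01.prod ν) ^ q
      = ∫⁻ s, ∫⁻ z, ‖Φ (f s) z - Φ (g s) z‖ₑ ^ q ∂ν ∂I01 := by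
    intro f g
    rw [eLpNorm_rpow' _ _ hq, lintegral_prod]
    · rfl
    · exact (((hF f).sub (hF g)).enorm.pow_const _).aemeasurable
  have hd : ∀ f g : Lp ℝ (ENNReal.ofReal p) I01, edist f g ^ p = ∫⁻ s, ‖f s - g s‖ₑ ^ p ∂I01 := by
    intro f g
    rw [Lp.edist_def, eLpNorm_rpow' _ _ hp]
    rfl
  have hL : ∀ f g, ENNReal.ofReal c * edist f g ^ p
      ≤ eLpNorm (F f - F g) (ENNReal.ofReal q) (I01.prod ν) ^ q := by
    intro f g
    rw [hint, hd, ← lintegral_const_mul' _ _ (by simp)]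
    exact lintegral_mono fun s => hl _ _
  have hU : ∀ f g, eLpNorm (F f - F g) (ENNReal.ofReal q) (I01.prod ν) ^ q
      ≤ ENNReal.ofReal C * edist f g ^ p := by
    intro f g
    rw [hint, hd, ← lintegral_const_mul' _ _ (by simp)]
    exact lintegral_mono fun s => hu _ _
  have hmem : ∀ f, MemLp (F f) (ENNReal.ofReal q) (I01.prod ν) := by
    intro f
    refine ⟨(hF f).aestronglyMeasurable, ?_⟩
    have h1 : eLpNorm (F f) (ENNReal.ofReal q) (I01.prod ν) ^ q
        ≤ ENNReal.ofReal C * ∫⁻ s, ‖f s‖ₑ ^ p ∂I01 := by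
      rw [eLpNorm_rpow' _ _ hq, lintegral_prod _ ((hF f).enorm.pow_const _).aemeasurable,
        ← lintegral_const_mul' _ _ (by simp)]
      refine lintegral_mono fun s => ?_
      have := hu (f s) 0
      simpa [hΦ0] using this
    rw [← eLpNorm_rpow' _ _ hp] at h1
    have h2 : ENNReal.ofReal C * eLpNorm f (ENNReal.ofReal p) I01 ^ p < ⊤ :=
      ENNReal.mul_lt_top (by simp) (ENNReal.rpow_lt_top_of_nonneg hp0.le (Lp.eLpNorm_ne_top f))
    exact (ENNReal.rpow_lt_top_iff_of_pos hq0).1 (h1.trans_lt h2)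
  let T : Lp ℝ (ENNReal.ofReal p) I01 → Lp ℝ (ENNReal.ofReal q) (I01.prod ν) :=
    fun f => (hmem f).toLp
  have hT : ∀ f g, edist (T f) (T g) = eLpNorm (F f - F g) (ENNReal.ofReal q) (I01.prod ν) :=
    fun f g => Lp.edist_toLp_toLp _ _ _ _
  have hdl : ∀ f g, c * dist f g ^ p ≤ dist (T f) (T g) ^ q := by
    intro f g
    have := hL f g
    rw [← hT] at this
    have h3 := ENNReal.toReal_mono
      (ENNReal.rpow_lt_top_of_nonneg hq0.le (edist_ne_top _ _)).ne this
    rwa [ENNReal.toReal_mul, ENNReal.toReal_ofReal hc.le, ← ENNReal.toReal_rpow,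
      ← ENNReal.toReal_rpow, ← dist_edist, ← dist_edist] at h3
  have hdu : ∀ f g, dist (T f) (T g) ^ q ≤ C * dist f g ^ p := by
    intro f g
    have := hU f g
    rw [← hT] at this
    have h3 := ENNReal.toReal_mono (ENNReal.mul_lt_top (by simp)
      (ENNReal.rpow_lt_top_of_nonneg hp0.le (edist_ne_top _ _))).ne this
    rwa [ENNReal.toReal_mul, ENNReal.toReal_ofReal hC.le, ← ENNReal.toReal_rpow,
      ← ENNReal.toReal_rpow, ← dist_edist, ← dist_edist] at h3
  obtain ⟨J, hJ⟩ := exists_isometry (I01.prod ν) (ENNReal.ofReal q)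
  refine ⟨fun f => J (T f), hJ.isUniformEmbedding.comp ?_⟩
  rw [Metric.isUniformEmbedding_iff]
  have low : ∀ δ > 0, ∃ ε > 0, ∀ {f g}, dist (T f) (T g) < ε → dist f g < δ := by
    intro δ hδ
    refine ⟨(c * δ ^ p) ^ (1 / q), by positivity, fun {f g} h => ?_⟩
    have h1 : dist (T f) (T g) ^ q < c * δ ^ p := by
      have := Real.rpow_lt_rpow dist_nonneg h hq0
      rwa [← Real.rpow_mul (by positivity), one_div, inv_mul_cancel₀ hq0.ne', Real.rpow_one] at this
    have h2 := (hdl f g).trans_lt h1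
    exact (Real.rpow_lt_rpow_iff dist_nonneg hδ.le hp0).1 (lt_of_mul_lt_mul_left h2 hc.le)
  refine ⟨fun f g hfg => ?_, ?_, low⟩
  · have h1 := hdl f g
    rw [hfg, dist_self, Real.zero_rpow hq0.ne'] at h1
    by_contra hne
    have : 0 < dist f g := dist_pos.2 hne
    have : 0 < c * dist f g ^ p := by positivity
    linarith
  · rw [Metric.uniformContinuous_iff]
    intro ε hε
    refine ⟨(ε ^ q / C) ^ (1 / p), by positivity, fun f g h => ?_⟩
    have h1 : dist f g ^ p < ε ^ q / C := by
      have := Real.rpow_lt_rpow dist_nonneg h hp0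
      rwa [← Real.rpow_mul (by positivity), one_div, inv_mul_cancel₀ hp0.ne', Real.rpow_one] at this
    rw [lt_div_iff₀ hC, mul_comm] at h1
    exact (Real.rpow_lt_rpow_iff dist_nonneg hε.le hq0).1 ((hdu f g).trans_lt h1)

/-- cosine and sine -/
noncomputable def uu (β : Bool) (x : ℝ) : ℝ := if β then Real.cos x else Real.sin x

theorem uu_meas (β : Bool) : Measurable (uu β) := by
  unfold uu
  cases β <;> simp <;> fun_prop

theorem uu_lip (β : Bool) (x y : ℝ) : |uu β x - uu β y| ≤ |x - y| := by
  cases β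
  · simpa [uu, Real.dist_eq] using Real.lipschitzWith_sin.dist_le_mul x y
  · simpa [uu, Real.dist_eq] using Real.lipschitzWith_cos.dist_le_mul x y

theorem uu_bdd (β : Bool) (x y : ℝ) : |uu β x - uu β y| ≤ 2 := by
  have : ∀ z, |uu β z| ≤ 1 := by
    intro z; cases β
    · simpa [uu] using Real.abs_sin_le_one z
    · simpa [uu] using Real.abs_cos_le_one z
  have h1 := abs_le.1 (this x)
  have h2 := abs_le.1 (this y)
  rw [abs_le]; constructor <;> linarith

theorem uu_low (x y : ℝ) (h1 : 1 ≤ |x - y|) (h2 : |x - y| < 2) :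
    ∃ β, 1 / 4 ≤ |uu β x - uu β y| := by
  by_contra! h
  have ht := h true
  have hf := h false
  simp only [uu, if_true, Bool.false_eq_true, if_false] at ht hf
  have e : (Real.cos x - Real.cos y) ^ 2 + (Real.sin x - Real.sin y) ^ 2
      = 2 - 2 * Real.cos |x - y| := by
    rw [Real.cos_abs, Real.cos_sub]
    nlinarith [Real.sin_sq_add_cos_sq x, Real.sin_sq_add_cos_sq y]
  have hc : Real.cos |x - y| ≤ Real.cos 1 :=
    Real.cos_le_cos_of_nonneg_of_le_pi (by norm_num) (by linarith [Real.pi_gt_three]) h1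
  have := Real.cos_one_le
  have a1 := sq_lt_sq' (by linarith [abs_nonneg (Real.cos x - Real.cos y)]) ht
  have a2 := sq_lt_sq' (by linarith [abs_nonneg (Real.sin x - Real.sin y)]) hf
  rw [sq_abs] at a1 a2
  nlinarith

/-- the multi-scale feature map -/
noncomputable def psi (p q : ℝ) (a : ℝ) (k : ℤ × Bool) : ℝ :=
  (2 : ℝ) ^ ((k.1 : ℝ) * p / q) * (uu k.2 ((2 : ℝ) ^ (-(k.1 : ℝ)) * a) - uu k.2 0)

theorem psi_zero (p q : ℝ) (k) : psi p q 0 k = 0 := by simp [psi]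

theorem psi_meas (p q : ℝ) (k) : Measurable (fun a => psi p q a k) := by
  unfold psi
  exact (((uu_meas k.2).comp (measurable_const_mul _)).sub_const _).const_mul _

theorem psi_term (p q : ℝ) (hq : 1 ≤ q) (a b : ℝ) (k : ℤ × Bool) :
    |psi p q a k - psi p q b k| ^ q = (2 : ℝ) ^ ((k.1 : ℝ) * p) *
      |uu k.2 ((2 : ℝ) ^ (-(k.1 : ℝ)) * a) - uu k.2 ((2 : ℝ) ^ (-(k.1 : ℝ)) * b)| ^ q := by
  have : psi p q a k - psi p q b k = (2 : ℝ) ^ ((k.1 : ℝ) * p / q) *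
      (uu k.2 ((2 : ℝ) ^ (-(k.1 : ℝ)) * a) - uu k.2 ((2 : ℝ) ^ (-(k.1 : ℝ)) * b)) := by
    unfold psi; ring
  rw [this, abs_mul, Real.mul_rpow (abs_nonneg _) (abs_nonneg _), abs_of_pos (by positivity),
    ← Real.rpow_mul (by norm_num)]
  congr 2
  field_simp

/-- the ratio -/
noncomputable def rr (p q : ℝ) : ℝ := max ((2 : ℝ) ^ (-(q - p))) ((2 : ℝ) ^ (-p))

theorem exists_scale (d : ℝ) (hd : 0 < d) : ∃ m : ℤ, 1 ≤ (2 : ℝ) ^ (-(m : ℝ)) * d ∧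
    (2 : ℝ) ^ (-(m : ℝ)) * d < 2 := by
  obtain ⟨m, h1, h2⟩ := exists_mem_Ico_zpow (y := (2 : ℝ)) hd (by norm_num)
  refine ⟨m, ?_, ?_⟩
  · rw [Real.rpow_neg (by norm_num), Real.rpow_intCast, inv_mul_eq_div, le_div_iff₀ (by positivity)]
    linarith
  · rw [Real.rpow_neg (by norm_num), Real.rpow_intCast, inv_mul_eq_div, div_lt_iff₀ (by positivity)]
    rw [zpow_add₀ (by norm_num)] at h2
    linarith

theorem upper_term (p q : ℝ) (hp : 1 ≤ p) (hpq : p < q) (a b : ℝ) (m : ℤ)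
    (hm1 : 1 ≤ (2 : ℝ) ^ (-(m : ℝ)) * |a - b|) (hm2 : (2 : ℝ) ^ (-(m : ℝ)) * |a - b| < 2)
    (k : ℤ) (β : Bool) :
    |psi p q a (k + m, β) - psi p q b (k + m, β)| ^ q
      ≤ |a - b| ^ p * ((2 : ℝ) ^ q * rr p q ^ k.natAbs) := by
  rw [psi_term p q (by linarith)]
  simp only
  set D := |uu β ((2 : ℝ) ^ (-((k + m : ℤ) : ℝ)) * a) - uu β ((2 : ℝ) ^ (-((k + m : ℤ) : ℝ)) * b)| with hD
  have hD2 : D ≤ 2 := uu_bdd _ _ _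
  have hD1 : D ≤ 2 * (2 : ℝ) ^ (-(k : ℝ)) := by
    refine (uu_lip _ _ _).trans ?_
    rw [← mul_sub, abs_mul, abs_of_pos (by positivity)]
    push_cast
    rw [neg_add, Real.rpow_add (by norm_num)]
    have : 0 < (2 : ℝ) ^ (-(k : ℝ)) := by positivity
    nlinarith
  have hm : (2 : ℝ) ^ ((m : ℝ) * p) ≤ |a - b| ^ p := by
    rw [Real.rpow_mul (by norm_num)]
    refine Real.rpow_le_rpow (by positivity) ?_ (by linarith)
    rw [Real.rpow_neg (by norm_num), inv_mul_eq_div, le_div_iff₀ (by positivity)] at hm1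
    linarith
  have hk : (2 : ℝ) ^ ((k : ℝ) * p) * D ^ q ≤ (2 : ℝ) ^ q * rr p q ^ k.natAbs := by
    have hD0 : 0 ≤ D := abs_nonneg _
    rcases le_total 0 k with hk0 | hk0
    · have h1 : D ^ q ≤ (2 : ℝ) ^ q * (2 : ℝ) ^ (-(k : ℝ) * q) := by
        rw [Real.rpow_mul (by norm_num), ← Real.mul_rpow (by norm_num) (by positivity)]
        exact Real.rpow_le_rpow hD0 hD1 (by linarith)
      have h2 : ((2 : ℝ) ^ (-(q - p))) ^ k.natAbs = (2 : ℝ) ^ ((k : ℝ) * p) * (2 : ℝ) ^ (-(k : ℝ) * q) := by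
        rw [← Real.rpow_natCast, ← Real.rpow_mul (by norm_num), ← Real.rpow_add (by norm_num),
          Nat.cast_natAbs, abs_of_nonneg hk0]
        congr 1; ring
      calc (2 : ℝ) ^ ((k : ℝ) * p) * D ^ q
          ≤ (2 : ℝ) ^ ((k : ℝ) * p) * ((2 : ℝ) ^ q * (2 : ℝ) ^ (-(k : ℝ) * q)) := by gcongr
        _ = (2 : ℝ) ^ q * ((2 : ℝ) ^ (-(q - p))) ^ k.natAbs := by rw [h2]; ring
        _ ≤ _ := by
          gcongr
          exact le_max_left _ _
    · have h1 : D ^ q ≤ (2 : ℝ) ^ q := Real.rpow_le_rpow hD0 hD2 (by linarith)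
      have h2 : ((2 : ℝ) ^ (-p)) ^ k.natAbs = (2 : ℝ) ^ ((k : ℝ) * p) := by
        rw [← Real.rpow_natCast, ← Real.rpow_mul (by norm_num),
          Nat.cast_natAbs, abs_of_nonpos hk0]
        congr 1; push_cast; ring
      calc (2 : ℝ) ^ ((k : ℝ) * p) * D ^ q
          ≤ (2 : ℝ) ^ ((k : ℝ) * p) * (2 : ℝ) ^ q := by gcongr
        _ = (2 : ℝ) ^ q * ((2 : ℝ) ^ (-p)) ^ k.natAbs := by rw [h2]; ring
        _ ≤ _ := by
          gcongr
          exact le_max_right _ _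
  have e : (2 : ℝ) ^ (((k + m : ℤ) : ℝ) * p) = (2 : ℝ) ^ ((m : ℝ) * p) * (2 : ℝ) ^ ((k : ℝ) * p) := by
    rw [← Real.rpow_add (by norm_num)]
    congr 1; push_cast; ring
  rw [e, mul_assoc]
  exact mul_le_mul hm hk (by positivity) (by positivity)

theorem rr_sum (p q : ℝ) (hp : 1 ≤ p) (hpq : p < q) :
    Summable (fun k : ℤ × Bool => (2 : ℝ) ^ q * rr p q ^ k.1.natAbs) := by
  have h1 : rr p q < 1 := by
    unfold rr
    rw [max_lt_iff]
    constructor <;> apply Real.rpow_lt_one_of_one_lt_of_neg <;> linarith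
  have h0 : 0 ≤ rr p q := le_max_of_le_left (by positivity)
  have hZ : Summable (fun k : ℤ => rr p q ^ k.natAbs) := by
    refine Summable.of_nat_of_neg ?_ ?_ <;> simpa using summable_geometric_of_lt_one h0 h1
  have := hZ.mul_of_nonneg (g := fun _ : Bool => (2 : ℝ) ^ q) Summable.of_finite
    (fun k => by positivity) (fun _ => by positivity)
  exact this.congr fun k => by ring

theorem psi_bounds (p q : ℝ) (hp : 1 ≤ p) (hpq : p < q) : ∃ c C : ℝ, 0 < c ∧ 0 < C ∧ ∀ a b,
    ENNReal.ofReal c * ‖a - b‖ₑ ^ p ≤ ∑' k, ‖psi p q a k - psi p q b k‖ₑ ^ q ∧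
    ∑' k, ‖psi p q a k - psi p q b k‖ₑ ^ q ≤ ENNReal.ofReal C * ‖a - b‖ₑ ^ p := by
  have hs := rr_sum p q hp hpq
  have h0 : 0 < rr p q := lt_max_of_lt_left (by positivity)
  have hen : ∀ x r : ℝ, 0 ≤ r → ‖x‖ₑ ^ r = ENNReal.ofReal (|x| ^ r) := by
    intro x r hr
    rw [Real.enorm_eq_ofReal_abs, ENNReal.ofReal_rpow_of_nonneg (abs_nonneg _) hr]
  refine ⟨(1 / 4) ^ q * (2 : ℝ) ^ (-p), ∑' k : ℤ × Bool, (2 : ℝ) ^ q * rr p q ^ k.1.natAbs,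
    by positivity, hs.tsum_pos (fun k => by positivity) (0, true) (by positivity), ?_⟩
  intro a b
  rcases eq_or_ne a b with rfl | hab
  · simp [ENNReal.zero_rpow_of_pos (show 0 < p by linarith),
      ENNReal.zero_rpow_of_pos (show 0 < q by linarith)]
  obtain ⟨m, hm1, hm2⟩ := exists_scale |a - b| (abs_pos.2 (sub_ne_zero.2 hab))
  rw [hen _ _ (by linarith), ← ENNReal.ofReal_mul (by positivity),
    ← ENNReal.ofReal_mul (tsum_nonneg fun k => by positivity)]
  constructor
  · have e : |(2 : ℝ) ^ (-(m : ℝ)) * a - (2 : ℝ) ^ (-(m : ℝ)) * b| = (2 : ℝ) ^ (-(m : ℝ)) * |a - b| := by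
      rw [← mul_sub, abs_mul, abs_of_pos (by positivity)]
    obtain ⟨β, hβ⟩ := uu_low _ _ (e ▸ hm1) (e ▸ hm2)
    refine le_trans ?_ (ENNReal.le_tsum (m, β))
    rw [hen _ _ (by linarith)]
    refine ENNReal.ofReal_le_ofReal ?_
    rw [psi_term p q (by linarith)]
    simp only
    have h1 : |a - b| ^ p ≤ (2 : ℝ) ^ p * (2 : ℝ) ^ ((m : ℝ) * p) := by
      rw [Real.rpow_mul (by norm_num), ← Real.mul_rpow (by norm_num) (by positivity)]
      refine Real.rpow_le_rpow (by positivity) ?_ (by linarith)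
      rw [Real.rpow_neg (by norm_num), inv_mul_eq_div, div_lt_iff₀ (by positivity)] at hm2
      exact hm2.le
    have h2 := Real.rpow_le_rpow (by norm_num) hβ (show 0 ≤ q by linarith)
    calc (1 / 4) ^ q * (2 : ℝ) ^ (-p) * |a - b| ^ p
        ≤ (1 / 4) ^ q * (2 : ℝ) ^ (-p) * ((2 : ℝ) ^ p * (2 : ℝ) ^ ((m : ℝ) * p)) := by gcongr
      _ = (2 : ℝ) ^ ((m : ℝ) * p) * (1 / 4) ^ q := by
        rw [Real.rpow_neg (by norm_num)]; field_simp
      _ ≤ _ := by gcongr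
  · let σ : ℤ × Bool ≃ ℤ × Bool := (Equiv.addRight m).prodCongr (Equiv.refl _)
    rw [← σ.tsum_eq]
    have : ∀ k, ‖psi p q a (σ k) - psi p q b (σ k)‖ₑ ^ q
        ≤ ENNReal.ofReal (|a - b| ^ p * ((2 : ℝ) ^ q * rr p q ^ k.1.natAbs)) := by
      rintro ⟨k, β⟩
      rw [hen _ _ (by linarith)]
      exact ENNReal.ofReal_le_ofReal (upper_term p q hp hpq a b m hm1 hm2 k β)
    refine (ENNReal.tsum_le_tsum this).trans ?_
    rw [← ENNReal.ofReal_tsum_of_nonneg (fun k => by positivity) (hs.mul_left _), tsum_mul_left,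
      mul_comm]

theorem embed_lt (p q : ℝ) (hp : 1 ≤ p) (hpq : p < q) [Fact (1 ≤ ENNReal.ofReal p)]
    [Fact (1 ≤ ENNReal.ofReal q)] :
    ∃ f : Lp ℝ (ENNReal.ofReal p) I01 → Lp ℝ (ENNReal.ofReal q) I01, IsUniformEmbedding f := by
  have hq : 1 ≤ q := by linarith
  have hq0 : 0 < q := by linarith
  let e : ℕ ≃ ℤ × Bool := (nonempty_equiv_of_countable (α := ℕ) (β := ℤ × Bool)).some
  let w : ℕ → ℝ := fun n => (1 / 2) ^ (n + 1)
  let ν : Measure ℕ := Measure.sum fun n => ENNReal.ofReal (w n) • Measure.dirac n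
  have hw : ∀ n, 0 < w n := fun n => by positivity
  have hint : ∀ h : ℕ → ENNReal, ∫⁻ n, h n ∂ν = ∑' n, ENNReal.ofReal (w n) * h n := by
    intro h
    simp only [ν, lintegral_sum_measure, lintegral_smul_measure, lintegral_dirac, smul_eq_mul]
  have hν : IsProbabilityMeasure ν := by
    constructor
    rw [← lintegral_one, hint]
    simp only [mul_one]
    have hs : HasSum w 1 := by
      have := hasSum_geometric_two' 1
      convert this using 2 with n
      simp only [w]
      rw [pow_succ]; simp; ring
    rw [← ENNReal.ofReal_tsum_of_nonneg (fun n => (hw n).le) hs.summable, hs.tsum_eq]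
    simp
  obtain ⟨c, C, hc, hC, hcC⟩ := psi_bounds p q hp hpq
  let Φ : ℝ → ℕ → ℝ := fun a n => w n ^ (-(1 / q)) * psi p q a (e n)
  have hsum : ∀ a b, ∫⁻ z, ‖Φ a z - Φ b z‖ₑ ^ q ∂ν = ∑' k, ‖psi p q a k - psi p q b k‖ₑ ^ q := by
    intro a b
    rw [hint, ← e.tsum_eq]
    congr 1
    ext n
    simp only [Φ]
    rw [← mul_sub, enorm_mul, ENNReal.mul_rpow_of_nonneg _ _ hq0.le, ← mul_assoc]
    have : ENNReal.ofReal (w n) * ‖w n ^ (-(1 / q))‖ₑ ^ q = 1 := by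
      have hw' := hw n
      rw [Real.enorm_eq_ofReal (by positivity), ENNReal.ofReal_rpow_of_nonneg (by positivity) hq0.le,
        ← ENNReal.ofReal_mul hw'.le, ← Real.rpow_mul hw'.le, neg_mul, one_div,
        inv_mul_cancel₀ hq0.ne', Real.rpow_neg_one, mul_inv_cancel₀ hw'.ne', ENNReal.ofReal_one]
    rw [this, one_mul]
  refine embed_of_kernel p q hp hq ν Φ ?_ ?_ c C hc hC ?_ ?_
  · refine measurable_from_prod_countable_left fun n => ?_
    exact (psi_meas p q (e n)).const_mul (w n ^ (-(1 / q)))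
  · intro z; simp [Φ, psi_zero]
  · intro a b; rw [hsum]; exact (hcC a b).1
  · intro a b; rw [hsum]; exact (hcC a b).2

end UE

namespace UE
open ProbabilityTheory

theorem countable_hb {H : Type*} [NormedAddCommGroup H] [InnerProductSpace ℝ H] [CompleteSpace H]
    [TopologicalSpace.SeparableSpace H] {ι : Type*} (b : HilbertBasis ι ℝ H) : Countable ι := by
  have ho := b.orthonormal
  have hd : ∀ i j, i ≠ j → 1 ≤ dist (b i) (b j) := by
    intro i j hij
    have h1 : ‖b i - b j‖ ^ 2 = 2 := by
      rw [@norm_sub_sq_real, ho.inner_eq_zero hij, ho.norm_eq_one, ho.norm_eq_one]; norm_num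
    rw [dist_eq_norm]
    nlinarith [norm_nonneg (b i - b j)]
  have := Set.PairwiseDisjoint.countable_of_isOpen (ι := ι) (a := Set.univ)
    (s := fun i => Metric.ball (b i) (1 / 2)) (by
      intro i _ j _ hij
      refine Metric.ball_disjoint_ball ?_
      linarith [hd i j hij]) (fun i _ => Metric.isOpen_ball)
      (fun i _ => ⟨b i, Metric.mem_ball_self (by norm_num)⟩)
  exact Set.countable_univ_iff.1 this

section
variable {Ω : Type*} [MeasurableSpace Ω] {P : Measure Ω} [IsProbabilityMeasure P]

/-- the inclusion of `L_2` into `L_q` -/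
noncomputable def incl {q : ENNReal} (hq : q ≤ 2) (f : Lp ℝ 2 P) : Lp ℝ q P :=
  ((Lp.memLp f).mono_exponent hq).toLp

theorem incl_sub {q : ENNReal} (hq : q ≤ 2) (f g : Lp ℝ 2 P) :
    incl hq (f - g) = incl hq f - incl hq g := by
  unfold incl
  rw [← MemLp.toLp_sub]
  exact MemLp.toLp_congr _ _ (Lp.coeFn_sub f g)

theorem norm_incl {q : ENNReal} (hq : q ≤ 2) (f : Lp ℝ 2 P) :
    ‖incl hq f‖ = (eLpNorm f q P).toReal := Lp.norm_toLp _ _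

theorem norm_incl_le {q : ENNReal} (hq : q ≤ 2) (f : Lp ℝ 2 P) : ‖incl hq f‖ ≤ ‖f‖ := by
  rw [norm_incl, Lp.norm_def]
  exact ENNReal.toReal_mono (Lp.eLpNorm_ne_top f)
    (eLpNorm_le_eLpNorm_of_exponent_le hq (Lp.aestronglyMeasurable f))

theorem continuous_incl {q : ENNReal} [Fact (1 ≤ q)] (hq : q ≤ 2) :
    Continuous (incl hq : Lp ℝ 2 P → Lp ℝ q P) := by
  refine (LipschitzWith.of_dist_le_mul (K := 1) fun f g => ?_).continuous
  rw [dist_eq_norm, dist_eq_norm, ← incl_sub, NNReal.coe_one, one_mul]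
  exact norm_incl_le hq _

theorem gauss_sum {ι : Type*} (X : ι → Ω → ℝ) (hX : iIndepFun X P) (hm : ∀ i, Measurable (X i))
    (hg : ∀ i, P.map (X i) = gaussianReal 0 1) (a : ι → ℝ) (s : Finset ι) :
    ∃ v, P.map (fun ω => ∑ i ∈ s, a i * X i ω) = gaussianReal 0 v := by
  classical
  have hX' : iIndepFun (fun i ω => a i * X i ω) P :=
    hX.comp (fun i x => a i * x) (fun i => measurable_const_mul _)
  have hm' : ∀ i, Measurable (fun ω => a i * X i ω) := fun i => (hm i).const_mul _
  induction s using Finset.induction_on with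
  | empty =>
    refine ⟨0, ?_⟩
    simp [Measure.map_const]
  | insert i s hi ih =>
    obtain ⟨v, hv⟩ := ih
    have h1 : P.map (fun ω => a i * X i ω) = gaussianReal (a i * 0) (NNReal.mk (a i ^ 2) (sq_nonneg _) * 1) := by
      rw [← gaussianReal_map_const_mul, ← hg i, Measure.map_map (by fun_prop) (hm i)]
      rfl
    rw [mul_zero] at h1
    have hind := (hX'.indepFun_finsetSum_of_notMem hm' hi).symm
    have e : (∑ j ∈ s, fun ω => a j * X j ω) = fun ω => ∑ j ∈ s, a j * X j ω := by
      ext ω; simp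
    rw [e] at hind
    have := gaussianReal_add_gaussianReal_of_indepFun hind h1 hv
    refine ⟨NNReal.mk (a i ^ 2) (sq_nonneg _) * 1 + v, ?_⟩
    · rw [zero_add] at this
      rw [← this]
      congr 1
      ext ω
      rw [Finset.sum_insert hi]; rfl

theorem eLpNorm_gauss (q : ENNReal) (v : NNReal) :
    eLpNorm id q (gaussianReal 0 v) = ENNReal.ofReal (√v) * eLpNorm id q (gaussianReal 0 1) := by
  have h : gaussianReal 0 v = (gaussianReal 0 1).map (fun x => √v * x) := by
    rw [gaussianReal_map_const_mul]
    congr 1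
    · simp
    · ext; simp
  rw [h, eLpNorm_map_measure (by fun_prop) (by fun_prop)]
  have : (id ∘ fun x => √(v : ℝ) * x) = (√(v : ℝ)) • (id : ℝ → ℝ) := by ext; simp
  rw [this, eLpNorm_const_smul]
  congr 1
  rw [Real.enorm_eq_ofReal (by positivity)]

theorem gauss_const (q : ENNReal) (hq0 : 1 ≤ q) (hq : q ≤ 2) : ∃ c : ℝ, 0 < c ∧ ∀ v : NNReal,
    c * (eLpNorm id 2 (gaussianReal 0 v)).toReal ≤ (eLpNorm id q (gaussianReal 0 v)).toReal := by
  have hmem : ∀ r : ENNReal, r ≤ 2 → eLpNorm id r (gaussianReal 0 1) ≠ ⊤ := fun r hr =>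
    (memLp_id_gaussianReal' r (ne_top_of_le_ne_top (by simp) hr)).2.ne
  have hne : ∀ r : ENNReal, 1 ≤ r → eLpNorm id r (gaussianReal 0 1) ≠ 0 := by
    intro r hr h0
    rw [eLpNorm_eq_zero_iff (by fun_prop) (by positivity)] at h0
    have h1 := variance_congr h0
    rw [variance_id_gaussianReal, variance_zero] at h1
    simp at h1
  have hp : ∀ r : ENNReal, 1 ≤ r → r ≤ 2 → 0 < (eLpNorm id r (gaussianReal 0 1)).toReal :=
    fun r h1 h2 => ENNReal.toReal_pos (hne r h1) (hmem r h2)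
  refine ⟨(eLpNorm id q (gaussianReal 0 1)).toReal / (eLpNorm id 2 (gaussianReal 0 1)).toReal,
    div_pos (hp _ hq0 hq) (hp _ (by norm_num) le_rfl), fun v => ?_⟩
  rw [eLpNorm_gauss 2 v, eLpNorm_gauss q v, ENNReal.toReal_mul, ENNReal.toReal_mul]
  have := (hp 2 (by norm_num) le_rfl).ne'
  exact le_of_eq (by field_simp)

end

theorem embed_two' (q : ENNReal) (hq : q ≤ 2) [Fact (1 ≤ q)] :
    ∃ f : Lp ℝ 2 I01 → Lp ℝ q I01, IsUniformEmbedding f := by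
  obtain ⟨w, b, -⟩ := exists_hilbertBasis ℝ (Lp ℝ 2 I01)
  haveI : Fact ((2 : ENNReal) ≠ ⊤) := ⟨by simp⟩
  haveI : SecondCountableTopology (Lp ℝ 2 I01) := Lp.SecondCountableTopology
  have hw : Countable w := countable_hb b
  let P : Measure (w → ℝ) := Measure.infinitePi (fun _ => gaussianReal 0 1)
  let X : w → (w → ℝ) → ℝ := fun i ω => ω i
  have hX : iIndepFun X P :=
    iIndepFun_infinitePi (P := fun _ : w => gaussianReal 0 1) (X := fun _ x => x)
      (fun _ => measurable_id)
  have hm : ∀ i, Measurable (X i) := fun i => measurable_pi_apply i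
  have hmp : ∀ i, MeasurePreserving (X i) P (gaussianReal 0 1) := fun i =>
    measurePreserving_eval_infinitePi (fun _ : w => gaussianReal 0 1) i
  have hmem : ∀ i, MemLp (X i) 2 P := fun i =>
    (memLp_id_gaussianReal' 2 (by simp)).comp_measurePreserving (hmp i)
  let e : w → Lp ℝ 2 P := fun i => (hmem i).toLp
  have hint : ∀ i, ∫ ω, X i ω ∂P = 0 := by
    intro i
    have := integral_map (hm i).aemeasurable (μ := P) (f := fun x : ℝ => x) (by fun_prop)
    rw [← this, (hmp i).map_eq, integral_id_gaussianReal]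
  have hint2 : ∀ i, ∫ ω, X i ω * X i ω ∂P = 1 := by
    intro i
    have := integral_map (hm i).aemeasurable (μ := P) (f := fun x : ℝ => x * x) (by fun_prop)
    rw [← this, (hmp i).map_eq]
    have h2 := variance_fun_id_gaussianReal (μ := 0) (v := 1)
    rw [variance_eq_integral (by fun_prop), integral_id_gaussianReal] at h2
    simpa [sq] using h2
  have hinner : ∀ i j, inner ℝ (e i) (e j) = ∫ ω, X i ω * X j ω ∂P := by
    intro i j
    rw [L2.inner_def]
    refine integral_congr_ae ?_
    filter_upwards [(hmem i).coeFn_toLp, (hmem j).coeFn_toLp] with ω h1 h2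
    simp only [e]
    rw [h1, h2]
    simp [mul_comm]
  have he : Orthonormal ℝ e := by
    classical
    rw [orthonormal_iff_ite]
    intro i j
    rw [hinner]
    split_ifs with hij
    · subst hij; exact hint2 i
    · have := (hX.indepFun hij).integral_mul_eq_mul_integral (hm i).aestronglyMeasurable
        (hm j).aestronglyMeasurable
      simp only [Pi.mul_apply] at this
      rw [this, hint i, zero_mul]
  let U : Lp ℝ 2 I01 →ₗᵢ[ℝ] Lp ℝ 2 P :=
    he.orthogonalFamily.linearIsometry.comp b.repr.toLinearIsometry
  obtain ⟨c, hc, hcv⟩ := gauss_const q Fact.out hq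
  have hfin : ∀ (a : w → ℝ) (s : Finset w), c * ‖∑ i ∈ s, a i • e i‖ ≤ ‖incl hq (∑ i ∈ s, a i • e i)‖ := by
    intro a s
    obtain ⟨v, hv⟩ := gauss_sum X hX hm (fun i => (hmp i).map_eq) a s
    have hae : (∑ i ∈ s, a i • e i : Lp ℝ 2 P) =ᵐ[P] fun ω => ∑ i ∈ s, a i * X i ω := by
      have h1 : ∀ i, (e i : (w → ℝ) → ℝ) =ᵐ[P] X i := fun i => (hmem i).coeFn_toLp
      filter_upwards [coeFn_lincomb s a e, ae_all_iff.2 h1] with ω h2 h3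
      rw [h2]
      simp_rw [h3]
    have hms : Measurable (fun ω => ∑ i ∈ s, a i * X i ω) := by fun_prop
    have hnorm : ∀ r, eLpNorm (∑ i ∈ s, a i • e i : Lp ℝ 2 P) r P
        = eLpNorm id r (gaussianReal 0 v) := by
      intro r
      rw [eLpNorm_congr_ae hae, ← hv, eLpNorm_map_measure (by fun_prop) hms.aemeasurable]
      rfl
    rw [norm_incl, Lp.norm_def, hnorm, hnorm]
    exact hcv v
  have hlow : ∀ x, c * ‖U x‖ ≤ ‖incl hq (U x)‖ := by
    intro x
    have hs := he.orthogonalFamily.hasSum_linearIsometry (b.repr x)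
    have ht : Filter.Tendsto (fun s : Finset w => ∑ i ∈ s, b.repr x i • e i) Filter.atTop
        (nhds (U x)) := hs
    refine le_of_tendsto_of_tendsto (ht.norm.const_mul c)
      (((continuous_incl hq).tendsto _).comp ht).norm (Filter.Eventually.of_forall fun s => ?_)
    exact hfin _ s
  obtain ⟨J, hJ⟩ := exists_isometry P q
  refine ⟨fun x => J (incl hq (U x)), ?_⟩
  refine hJ.isUniformEmbedding.comp ?_
  have hd : ∀ x y, dist (incl hq (U x)) (incl hq (U y)) = ‖incl hq (U (x - y))‖ := by
    intro x y
    rw [dist_eq_norm, ← incl_sub, map_sub]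
  rw [Metric.isUniformEmbedding_iff]
  have hl : ∀ x y, c * dist x y ≤ dist (incl hq (U x)) (incl hq (U y)) := by
    intro x y
    rw [hd, dist_eq_norm, ← U.norm_map]; exact hlow _
  refine ⟨fun x y hxy => ?_, ?_, fun δ hδ => ⟨c * δ, by positivity, fun {x y} h => ?_⟩⟩
  · have := hl x y
    have h0 : dist (incl hq (U x)) (incl hq (U y)) = 0 := by
      rw [dist_eq_zero]; exact hxy
    rw [h0] at this
    have : dist x y ≤ 0 := by
      by_contra! h
      nlinarith [mul_pos hc h]
    exact dist_le_zero.1 this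
  · refine (LipschitzWith.of_dist_le_mul (K := 1) fun x y => ?_).uniformContinuous
    rw [hd, dist_eq_norm, NNReal.coe_one, one_mul, ← U.norm_map]
    exact norm_incl_le hq _
  · have h1 := lt_of_le_of_lt (hl x y) h
    exact lt_of_mul_lt_mul_left h1 hc.le

theorem embed_two (q : ℝ) (hq : 1 ≤ q) (hq2 : q ≤ 2) [Fact (1 ≤ ENNReal.ofReal q)]
    [Fact (1 ≤ ENNReal.ofReal 2)] :
    ∃ f : Lp ℝ (ENNReal.ofReal 2) I01 → Lp ℝ (ENNReal.ofReal q) I01, IsUniformEmbedding f := by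
  have key : ∀ (r : ENNReal) [Fact (1 ≤ r)], r = 2 →
      ∃ f : Lp ℝ r I01 → Lp ℝ (ENNReal.ofReal q) I01, IsUniformEmbedding f := by
    intro r _ hr
    subst hr
    exact embed_two' _ (by
      rw [show (2 : ENNReal) = ENNReal.ofReal 2 by simp]
      exact ENNReal.ofReal_le_ofReal hq2)
  exact key _ (by simp)

end UE

namespace UE

theorem embed_iff {X Y : Type*} [MetricSpace X] [Nonempty X] [MetricSpace Y] (f : X → Y) :
    (Function.Injective f ∧ UniformContinuous f ∧ ∃ g : Y → X,
      Function.LeftInverse g f ∧ UniformContinuousOn g (Set.range f)) ↔ IsUniformEmbedding f := by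
  rw [Metric.isUniformEmbedding_iff]
  constructor
  · rintro ⟨h1, h2, g, hg, hgu⟩
    refine ⟨h1, h2, fun δ hδ => ?_⟩
    obtain ⟨ε, hε, h⟩ := Metric.uniformContinuousOn_iff.1 hgu δ hδ
    refine ⟨ε, hε, fun {a b} hab => ?_⟩
    have := h (f a) ⟨a, rfl⟩ (f b) ⟨b, rfl⟩ hab
    rwa [hg, hg] at this
  · rintro ⟨h1, h2, h3⟩
    refine ⟨h1, h2, Function.invFun f, Function.leftInverse_invFun h1, ?_⟩
    rw [Metric.uniformContinuousOn_iff]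
    intro ε hε
    obtain ⟨δ, hδ, h⟩ := h3 ε hε
    refine ⟨δ, hδ, ?_⟩
    rintro _ ⟨a, rfl⟩ _ ⟨b, rfl⟩ hab
    rw [Function.leftInverse_invFun h1, Function.leftInverse_invFun h1]
    exact h hab

theorem main (p q : ℝ) (hp : 1 ≤ p) (hq : 1 ≤ q) [Fact (1 ≤ ENNReal.ofReal p)]
    [Fact (1 ≤ ENNReal.ofReal q)] :
    (∃ f : Lp ℝ (ENNReal.ofReal p) I01 → Lp ℝ (ENNReal.ofReal q) I01, IsUniformEmbedding f) ↔
     (p ≤ q ∨ (p ≤ 2 ∧ q ≤ 2)) := by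
  have : Fact (1 ≤ ENNReal.ofReal 2) := ⟨by norm_num⟩
  constructor
  · rintro ⟨f, hf⟩
    by_contra! hcon
    obtain ⟨h1, h2⟩ := hcon
    rcases lt_or_ge q 2 with hq2 | hq2
    · obtain ⟨g, hg⟩ := embed_lt q 2 hq hq2
      have hp2 : 2 < p := by
        by_contra! h
        linarith [h2 h]
      exact no_embed p 2 le_rfl hp2 _ (hg.comp hf)
    · exact no_embed p q hq2 h1 f hf
  · intro h
    rcases lt_trichotomy p q with hpq | rfl | hpq
    · exact embed_lt p q hp hpq
    · exact ⟨id, isometry_id.isUniformEmbedding⟩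
    · obtain ⟨h1, h2⟩ : p ≤ 2 ∧ q ≤ 2 := by
        rcases h with h | h
        · linarith
        · exact h
      obtain ⟨g, hg⟩ := embed_two q hq h2
      rcases h1.lt_or_eq with h1 | rfl
      · obtain ⟨f, hf⟩ := embed_lt p 2 hp h1
        exact ⟨_, hg.comp hf⟩
      · exact ⟨g, hg⟩

end UE

/-- **Mendel–Naor / Enflo's problem on uniform embeddings of `L_p` into `L_q`.**
For `p, q ∈ [1,∞)`, the space `L_p[0,1]` is uniformly homeomorphic to a subset of `L_q[0,1]`
(i.e., there is an injection `f : L_p[0,1] → L_q[0,1]` that is uniformly continuous and whose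
inverse is uniformly continuous on the image) if and only if `p ≤ q` or `p, q ∈ [1,2]`. -/
theorem Lp_uniformly_embeds_into_Lq_iff (p q : ℝ) (hp : 1 ≤ p) (hq : 1 ≤ q) :
    haveI : Fact (1 ≤ ENNReal.ofReal p) := ⟨ENNReal.one_le_ofReal.mpr hp⟩
    haveI : Fact (1 ≤ ENNReal.ofReal q) := ⟨ENNReal.one_le_ofReal.mpr hq⟩
    ((∃ f : Lp ℝ (ENNReal.ofReal p) (volume.restrict (Set.Icc (0 : ℝ) 1)) →
          Lp ℝ (ENNReal.ofReal q) (volume.restrict (Set.Icc (0 : ℝ) 1)),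
        Function.Injective f ∧ UniformContinuous f ∧
          ∃ g : Lp ℝ (ENNReal.ofReal q) (volume.restrict (Set.Icc (0 : ℝ) 1)) →
              Lp ℝ (ENNReal.ofReal p) (volume.restrict (Set.Icc (0 : ℝ) 1)),
            Function.LeftInverse g f ∧ UniformContinuousOn g (Set.range f)) ↔
      (p ≤ q ∨ (p ≤ 2 ∧ q ≤ 2))) := by
  have : Fact (1 ≤ ENNReal.ofReal p) := ⟨ENNReal.one_le_ofReal.mpr hp⟩
  have : Fact (1 ≤ ENNReal.ofReal q) := ⟨ENNReal.one_le_ofReal.mpr hq⟩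
  rw [← UE.main p q hp hq]
  exact exists_congr fun f => UE.embed_iff f
end
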